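/- arXiv:1603.08651 — 4 statements merged into one kernel-verified Lean document; each statement's English description precedes it below -/
import Mathlib

section
/- Let B ⊆ ℝ³ be a centrally symmetric convex body such that every closed convex subset of B is parkable in B, and let u ∈ ℝ³ be a unit vector. Then the midpoints of the nonempty chords of B in direction u are coplanar: there exists a two-dimensional linear subspace P ⊆ ℝ³ such that for every y ∈ ℝ³, if the set S = {t ∈ ℝ : y + t•u ∈ B} is nonempty, then y + ((sup S + inf S)/2)•u ∈ P. -/
/-!
Let `h` be the support function of `B`, and let `ζ` support `B` at the boundary point `z`, with
`ζ z = 1`. For `η` vanishing at `z` and `s ≥ 0`, a translation parking the convex hull of the face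
of `η + s • ζ`, the face of `-η` and the point `-z` must be trivial: it cannot increase the three
functionals `η + s • ζ`, `-η` and `-s • ζ`, and these sum to zero. So the hull already contains the
origin, which says that a point of the face of `η + s • ζ` lies in the plane spanned by `z` and a
point `y` of the face of `η`.

Take `s = k * h η` and put `R η = h (η + s • ζ) / h η`. Coplanarity yields the estimate
`(R η - R η') * h η' ≤ h η' - h η - (η' - η) y`, so along a segment the increments of `R` are of
second order and `R` is constant. In dimension at least three, `η` and `-η` are joined by a path of
two segments of nonzero functionals vanishing at `z`, whence `R (-η) = R η`. Together with central
symmetry this is the invariance of `h`, and hence of `B`, under the linear reflection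
`x ↦ x - 2 ζ(x) z`, which reverses every line parallel to `z` about its intersection with `ker ζ`.
-/

open Set Topology

section RealLine

theorem eq_of_forall_dist_le_mul_sub {X : Type*} [MetricSpace X] {R : ℝ → X} {N : ℝ → ℝ} {a b : ℝ}
    (hab : a ≤ b)
    (h : ∀ s ∈ Icc a b, ∀ t ∈ Icc a b, s ≤ t → dist (R s) (R t) ≤ (t - s) * (N t - N s)) :
    R a = R b := by
  have dist_le (n : ℕ) (hn : 1 ≤ n) : dist (R a) (R b) ≤ (b - a) / n * (N b - N a) := by
    have hn0 : (0 : ℝ) < n := by exact_mod_cast hn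
    have hδ : 0 ≤ (b - a) / n := div_nonneg (sub_nonneg.2 hab) hn0.le
    have hδn : n * ((b - a) / n) = b - a := mul_div_cancel₀ _ hn0.ne'
    set p : ℕ → ℝ := fun i ↦ a + i * ((b - a) / n) with hp
    have hp0 : p 0 = a := by simp [hp]
    have hpn : p n = b := by simp [hp, hδn]
    have hstep (i : ℕ) : p (i + 1) - p i = (b - a) / n := by simp only [hp]; push_cast; ring
    have hmono : Monotone p := monotone_nat_of_le_succ fun i ↦ by linarith [hstep i]
    have hmem {i : ℕ} (hi : i ≤ n) : p i ∈ Icc a b := by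
      rw [← hp0, ← hpn]
      exact ⟨hmono i.zero_le, hmono hi⟩
    calc dist (R a) (R b) = dist (R (p 0)) (R (p n)) := by rw [hp0, hpn]
      _ ≤ ∑ i ∈ Finset.range n, (b - a) / n * (N (p (i + 1)) - N (p i)) :=
        dist_le_range_sum_of_dist_le (f := R ∘ p) n fun {i} hi ↦ by
          simpa only [hstep, Function.comp_apply] using
            h _ (hmem hi.le) _ (hmem hi) (hmono i.le_succ)
      _ = (b - a) / n * (N b - N a) := by
        rw [← Finset.mul_sum, Finset.sum_range_sub fun i ↦ N (p i), hp0, hpn]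
  have tendsto_zero :
      Filter.Tendsto (fun n : ℕ ↦ (b - a) / n * (N b - N a)) Filter.atTop (𝓝 0) := by
    simpa using (tendsto_const_div_atTop_nhds_zero_nat (b - a)).mul_const (N b - N a)
  exact dist_le_zero.1 <| ge_of_tendsto tendsto_zero <| Filter.eventually_atTop.2 ⟨1, dist_le⟩

open scoped Pointwise in
theorem csSup_add_csInf_eq_of_forall_sub_mem {S : Set ℝ} (hne : S.Nonempty) (hS : BddBelow S)
    {c : ℝ} (h : ∀ t ∈ S, c - t ∈ S) : sSup S + sInf S = c := by
  have hreflect : S = {c} - S := by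
    ext t
    simp only [singleton_sub, mem_image]
    exact ⟨fun ht ↦ ⟨c - t, h t ht, sub_sub_cancel c t⟩, fun ⟨r, hr, hrt⟩ ↦ hrt ▸ h r hr⟩
  have := csSup_sub (singleton_nonempty c) bddAbove_singleton hne hS
  rw [← hreflect, csSup_singleton] at this
  linarith

end RealLine

theorem zero_notMem_segment_of_linearIndependent {M : Type*} [AddCommGroup M] [Module ℝ M]
    {x y : M} (h : LinearIndependent ℝ ![x, y]) : (0 : M) ∉ segment ℝ x y := by
  rintro ⟨α, β, -, -, hαβ, h0⟩
  obtain ⟨rfl, rfl⟩ := LinearIndependent.pair_iff.1 h α β h0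
  norm_num at hαβ

section Convexity

variable {E : Type*} [AddCommGroup E] [Module ℝ E] [TopologicalSpace E] {B : Set E}

theorem isCompact_convexJoin [ContinuousAdd E] [ContinuousSMul ℝ E] {s t : Set E} (hs : IsCompact s)
    (ht : IsCompact t) : IsCompact (convexJoin ℝ s t) := by
  have := ((isCompact_Icc (a := (0 : ℝ)) (b := 1)).prod (hs.prod ht)).image
    (f := fun p : ℝ × E × E ↦ (1 - p.1) • p.2.1 + p.1 • p.2.2) (by fun_prop)
  convert this using 1
  ext x
  simp only [mem_convexJoin, segment_eq_image, mem_image, Prod.exists, mem_prod]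
  constructor
  · rintro ⟨a, ha, b, hb, θ, hθ, rfl⟩
    exact ⟨θ, a, b, ⟨hθ, ha, hb⟩, rfl⟩
  · rintro ⟨θ, a, b, ⟨hθ, ha, hb⟩, rfl⟩
    exact ⟨a, ha, b, hb, θ, hθ, rfl⟩

theorem eq_zero_of_forall_add_mem [SeparatingDual ℝ E] {F : Set E} (hF : IsCompact F)
    (hne : F.Nonempty) {w : E} (h : ∀ x ∈ F, x + w ∈ F) : w = 0 := by
  have apply_nonpos (f : StrongDual ℝ E) : f w ≤ 0 := by
    obtain ⟨x, hx, hmax⟩ := hF.exists_isMaxOn hne f.continuous.continuousOn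
    simpa using hmax (h x hx)
  refine SeparatingDual.eq_zero_of_forall_dual_eq_zero (R := ℝ) fun f ↦
    (apply_nonpos f).antisymm ?_
  simpa using apply_nonpos (-f)

theorem zero_mem_interior_of_neg_eq [IsTopologicalAddGroup E] [ContinuousSMul ℝ E]
    (hconv : Convex ℝ B) (hint : (interior B).Nonempty) (hneg : -B = B) : (0 : E) ∈ interior B := by
  obtain ⟨x, hx⟩ := hint
  have hx' : -x ∈ B := by
    rw [← hneg]
    simpa using interior_subset hx
  refine hconv.openSegment_interior_self_subset_interior hx hx'
    ⟨1 / 2, 1 / 2, by norm_num, by norm_num, by norm_num, by simp⟩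

theorem exists_apply_eq_one_of_mem_frontier [IsTopologicalAddGroup E] [ContinuousSMul ℝ E]
    (hconv : Convex ℝ B) (h0 : B ∈ 𝓝 0) {z : E} (hz : z ∈ frontier B) :
    ∃ ζ : StrongDual ℝ E, ζ z = 1 ∧ ∀ x ∈ B, ζ x ≤ 1 := by
  have hint : 0 ∈ interior B := mem_interior_iff_mem_nhds.2 h0
  obtain ⟨f, hf⟩ := geometric_hahn_banach_open_point hconv.interior isOpen_interior hz.2
  have hfz : 0 < f z := by simpa using hf 0 hint
  refine ⟨(f z)⁻¹ • f, by simp [hfz.ne'], fun x hx ↦ ?_⟩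
  have hx' : x ∈ closure (interior B) :=
    (hconv.closure_interior_eq_closure_of_nonempty_interior ⟨0, hint⟩).symm ▸ subset_closure hx
  have hfx : f x ≤ f z :=
    closure_minimal (fun y hy ↦ (hf y hy).le) (isClosed_le f.continuous continuous_const) hx'
  simpa [inv_mul_le_iff₀ hfz] using hfx

theorem exists_pos_smul_mem_frontier [IsTopologicalAddGroup E] [ContinuousSMul ℝ E] [T1Space E]
    (hconv : Convex ℝ B) (hB : Bornology.IsVonNBounded ℝ B) (h0 : B ∈ 𝓝 0) {u : E}
    (hu : u ≠ 0) : ∃ r : ℝ, 0 < r ∧ r • u ∈ frontier B := by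
  have hpos : 0 < gauge B u := (gauge_pos (absorbent_nhds_zero h0) hB).2 hu
  refine ⟨(gauge B u)⁻¹, inv_pos.2 hpos, (gauge_eq_one_iff_mem_frontier hconv h0).1 ?_⟩
  rw [gauge_smul_of_nonneg (inv_nonneg.2 hpos.le), smul_eq_mul, inv_mul_cancel₀ hpos.ne']

end Convexity

variable {E : Type*} [NormedAddCommGroup E] [NormedSpace ℝ E] {B : Set E}

section SupportFunction

/-- The support function of `B`, defined on the topological dual; it takes the junk value `0` where
the functional is unbounded above on `B`, so it is used for compact `B` only. -/
noncomputable def supportFun (B : Set E) (f : StrongDual ℝ E) : ℝ := sSup (f '' B)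

theorem le_supportFun (hB : IsCompact B) (f : StrongDual ℝ E) {x : E} (hx : x ∈ B) :
    f x ≤ supportFun B f :=
  le_csSup (hB.image f.continuous).bddAbove (mem_image_of_mem f hx)

theorem mem_toExposed_iff_eq_supportFun (hB : IsCompact B) {f : StrongDual ℝ E} {x : E} :
    x ∈ f.toExposed B ↔ x ∈ B ∧ f x = supportFun B f := by
  refine and_congr_right fun hx ↦ ⟨fun h ↦ ?_, fun h y hy ↦ h ▸ le_supportFun hB f hy⟩
  exact (le_supportFun hB f hx).antisymm <|
    csSup_le ⟨f x, mem_image_of_mem f hx⟩ (forall_mem_image.2 h)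

theorem toExposed_nonempty (hB : IsCompact B) (hne : B.Nonempty) (f : StrongDual ℝ E) :
    (f.toExposed B).Nonempty :=
  hB.exists_isMaxOn hne f.continuous.continuousOn

theorem supportFun_neg (B : Set E) (f : StrongDual ℝ E) :
    supportFun B (-f) = supportFun (-B) f := by
  simp only [supportFun, ← image_neg_eq_neg, image_image, map_neg, neg_apply]

theorem supportFun_pos (hB : IsCompact B) (h0 : B ∈ 𝓝 0) {f : StrongDual ℝ E} (hf : f ≠ 0) :
    0 < supportFun B f := by
  by_contra! hle
  have hmax : IsLocalMax f 0 := by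
    filter_upwards [h0] with x hx
    simpa using (le_supportFun hB f hx).trans hle
  exact hf (hmax.hasFDerivAt_eq_zero f.hasFDerivAt)

theorem continuous_supportFun (hB : IsCompact B) : Continuous (supportFun B) :=
  hB.continuous_sSup (f := fun f : StrongDual ℝ E ↦ ⇑f) isBoundedBilinearMap_apply.continuous

theorem mem_of_forall_le_supportFun (hB : IsCompact B) (hne : B.Nonempty) (hconv : Convex ℝ B)
    {x : E} (h : ∀ f : StrongDual ℝ E, f x ≤ supportFun B f) : x ∈ B := by
  by_contra hx
  obtain ⟨f, r, hfB, hfx⟩ := geometric_hahn_banach_closed_point hconv hB.isClosed hx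
  obtain ⟨y, hy⟩ := toExposed_nonempty hB hne f
  obtain ⟨hyB, hfy⟩ := (mem_toExposed_iff_eq_supportFun hB).1 hy
  linarith [h f, hfB y hyB]

end SupportFunction

section Parking

/-- `C` is parkable in `B`: some translate of `C` contains the origin and is contained in `B`. -/
def IsParkableIn (C B : Set E) : Prop :=
  ∃ v : E, (0 : E) ∈ (fun x ↦ x + v) '' C ∧ (fun x ↦ x + v) '' C ⊆ B

/-- A centrally symmetric convex body all of whose nonempty closed convex subsets are parkable in
it. -/
structure IsParkableBody (B : Set E) : Prop where
  isCompact : IsCompact B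
  convex : Convex ℝ B
  nonempty_interior : (interior B).Nonempty
  neg_eq : -B = B
  isParkableIn : ∀ C ⊆ B, C.Nonempty → IsClosed C → Convex ℝ C → IsParkableIn C B

theorem zero_mem_of_isParkableIn {C : Set E} (hB : IsCompact B) (hC : IsParkableIn C B)
    {f g h : StrongDual ℝ E} (hfgh : f + g + h = 0) (hf : f.toExposed B ⊆ C)
    (hg : (C ∩ g.toExposed B).Nonempty) (hh : (C ∩ h.toExposed B).Nonempty) : (0 : E) ∈ C := by
  obtain ⟨w, ⟨c, hcC, hcw⟩, hw⟩ := hC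
  have hmaps {x : E} (hx : x ∈ C) : x + w ∈ B := hw (mem_image_of_mem _ hx)
  have apply_nonpos {e : StrongDual ℝ E} (he : (C ∩ e.toExposed B).Nonempty) : e w ≤ 0 := by
    obtain ⟨x, hxC, -, hmax⟩ := he
    simpa using hmax _ (hmaps hxC)
  have hne : (f.toExposed B).Nonempty := toExposed_nonempty hB ⟨c + w, hmaps hcC⟩ f
  have hfw : f w = 0 := by
    have hf_nonpos : f w ≤ 0 := apply_nonpos (by rwa [inter_eq_right.2 hf])
    have hsum : f w + g w + h w = 0 := by simpa using DFunLike.congr_fun hfgh w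
    linarith [apply_nonpos hg, apply_nonpos hh]
  have hw0 : w = 0 := by
    have hexp : IsExposed ℝ B (f.toExposed B) := ContinuousLinearMap.toExposed.isExposed
    refine eq_zero_of_forall_add_mem (hexp.isCompact hB) hne fun x hx ↦ ⟨hmaps (hf hx), ?_⟩
    simpa [hfw] using hx.2
  have hc0 : c = 0 := by simpa [hw0] using hcw
  rwa [← hc0]

namespace IsParkableBody

theorem neg_mem (hB : IsParkableBody B) {x : E} (hx : x ∈ B) : -x ∈ B := by
  rwa [← hB.neg_eq, Set.neg_mem_neg]

theorem mem_nhds_zero (hB : IsParkableBody B) : B ∈ 𝓝 0 :=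
  mem_interior_iff_mem_nhds.1
    (zero_mem_interior_of_neg_eq hB.convex hB.nonempty_interior hB.neg_eq)

theorem nonempty (hB : IsParkableBody B) : B.Nonempty :=
  hB.nonempty_interior.mono interior_subset

theorem supportFun_neg (hB : IsParkableBody B) (f : StrongDual ℝ E) :
    supportFun B (-f) = supportFun B f := by
  rw [_root_.supportFun_neg, hB.neg_eq]

theorem neg_mem_toExposed_neg (hB : IsParkableBody B) {f : StrongDual ℝ E} {x : E}
    (hx : x ∈ f.toExposed B) : -x ∈ (-f).toExposed B :=
  ⟨hB.neg_mem hx.1, fun y hy ↦ by simpa using hx.2 (-y) (hB.neg_mem hy)⟩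

theorem zero_mem_convexJoin_toExposed (hB : IsParkableBody B) {ζ η : StrongDual ℝ E} {z : E}
    (hz : z ∈ ζ.toExposed B) {s : ℝ} (hs : 0 ≤ s) :
    (0 : E) ∈ convexJoin ℝ ((η + s • ζ).toExposed B) (convexJoin ℝ ((-η).toExposed B) {-z}) := by
  set F := (η + s • ζ).toExposed B
  set G := (-η).toExposed B
  have hF : IsExposed ℝ B F := ContinuousLinearMap.toExposed.isExposed
  have hG : IsExposed ℝ B G := ContinuousLinearMap.toExposed.isExposed
  have hFne : F.Nonempty := toExposed_nonempty hB.isCompact hB.nonempty _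
  have hGne : G.Nonempty := toExposed_nonempty hB.isCompact hB.nonempty _
  have hGzne : (convexJoin ℝ G {-z}).Nonempty := hGne.mono (subset_convexJoin_left (by simp))
  have hCB : convexJoin ℝ F (convexJoin ℝ G {-z}) ⊆ B :=
    convexJoin_subset hF.subset (convexJoin_subset hG.subset
      (singleton_subset_iff.2 (hB.neg_mem hz.1)) hB.convex) hB.convex
  have hCpark : IsParkableIn (convexJoin ℝ F (convexJoin ℝ G {-z})) B :=
    hB.isParkableIn _ hCB (hFne.mono (subset_convexJoin_left hGzne))
      (isCompact_convexJoin (hF.isCompact hB.isCompact)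
        (isCompact_convexJoin (hG.isCompact hB.isCompact) isCompact_singleton)).isClosed
      ((hF.convex hB.convex).convexJoin ((hG.convex hB.convex).convexJoin (convex_singleton _)))
  have hz' : -z ∈ (-(s • ζ)).toExposed B := hB.neg_mem_toExposed_neg
    ⟨hz.1, fun y hy ↦ by simpa using mul_le_mul_of_nonneg_left (hz.2 y hy) hs⟩
  obtain ⟨y, hy⟩ := hGne
  refine zero_mem_of_isParkableIn hB.isCompact hCpark (f := η + s • ζ) (g := -η) (h := -(s • ζ))
    (by abel) (subset_convexJoin_left hGzne) ⟨y, subset_convexJoin_right hFne ?_, hy⟩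
    ⟨-z, subset_convexJoin_right hFne ?_, hz'⟩
  · exact subset_convexJoin_left (singleton_nonempty _) hy
  · exact subset_convexJoin_right ⟨y, hy⟩ (mem_singleton _)

theorem exists_mem_toExposed_eq_smul_add_smul (hB : IsParkableBody B) {ζ η : StrongDual ℝ E}
    {z : E} (hz : z ∈ ζ.toExposed B) (hz0 : z ≠ 0) (hηz : η z = 0) (hη : 0 < supportFun B η)
    {s : ℝ} (hs : 0 ≤ s) :
    ∃ x ∈ (η + s • ζ).toExposed B, ∃ y ∈ η.toExposed B, ∃ l k : ℝ, x = l • y + k • z := by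
  obtain ⟨x, hx, g, hg, a, b, -, -, hab, hxg⟩ :=
    mem_convexJoin.1 (hB.zero_mem_convexJoin_toExposed (η := η) hz hs)
  obtain ⟨y, hy, z', rfl, c, d, -, -, hcd, rfl⟩ := mem_convexJoin.1 hg
  have hy' : -y ∈ η.toExposed B := by simpa using hB.neg_mem_toExposed_neg hy
  have hηy : η (-y) = supportFun B η := ((mem_toExposed_iff_eq_supportFun hB.isCompact).1 hy').2
  have ha0 : a ≠ 0 := by
    rintro rfl
    obtain rfl : b = 1 := by linarith
    have hcy : c * supportFun B η = 0 := by
      simpa [hηz, ← hηy] using congrArg η hxg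
    obtain rfl : c = 0 := (mul_eq_zero.1 hcy).resolve_right hη.ne'
    obtain rfl : d = 1 := by linarith
    exact hz0 (by simpa using hxg)
  refine ⟨x, hx, -y, hy', a⁻¹ * (b * c), a⁻¹ * (b * d), ?_⟩
  have hax : a • x = (b * c) • -y + (b * d) • z := by
    rw [← sub_eq_zero, ← hxg]
    module
  rw [mul_smul _ (b * c), mul_smul _ (b * d), ← smul_add, ← hax, inv_smul_smul₀ ha0]

end IsParkableBody

end Parking

section Tilt

/-- For the support function `h` of `B` and `h η > 0`, the value `h (η / h η + k ζ)`, written as a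
quotient of two values of `h`. For `ζ` supporting a parkable body at `z` and nonzero `η` vanishing
at `z`, its invariance under `η ↦ -η` gives the reflection symmetry of `B`. Where `h η = 0` it is the
junk value `0`. -/
noncomputable def tiltRatio (B : Set E) (ζ : StrongDual ℝ E) (k : ℝ) (η : StrongDual ℝ E) : ℝ :=
  supportFun B (η + (k * supportFun B η) • ζ) / supportFun B η

namespace IsParkableBody

variable {ζ η : StrongDual ℝ E} {z : E} {k : ℝ}

theorem exists_mem_toExposed_tiltRatio_sub_mul_le (hB : IsParkableBody B)
    (hz : z ∈ ζ.toExposed B) (hz0 : z ≠ 0) (hk : 0 ≤ k) (hηz : η z = 0) (hη : 0 < supportFun B η) :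
    ∃ y ∈ η.toExposed B, ∀ μ : StrongDual ℝ E, μ z = 0 → 0 < supportFun B μ →
      (tiltRatio B ζ k η - tiltRatio B ζ k μ) * supportFun B μ ≤ supportFun B μ - μ y := by
  obtain ⟨x, hx, y, hy, l, κ, hxy⟩ :=
    hB.exists_mem_toExposed_eq_smul_add_smul hz hz0 hηz hη (mul_nonneg hk hη.le)
  refine ⟨y, hy, fun μ hμz hμ ↦ ?_⟩
  obtain ⟨hxB, hx_eq⟩ := (mem_toExposed_iff_eq_supportFun hB.isCompact).1 hx
  obtain ⟨hyB, hy_eq⟩ := (mem_toExposed_iff_eq_supportFun hB.isCompact).1 hy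
  have apply_x {e : StrongDual ℝ E} (he : e z = 0) : e x = l * e y := by simp [hxy, he]
  have hl1 : l ≤ 1 := by
    have := le_supportFun hB.isCompact η hxB
    rwa [apply_x hηz, hy_eq, mul_le_iff_le_one_left hη] at this
  have hR : tiltRatio B ζ k η = l + k * ζ x := by
    rw [tiltRatio, div_eq_iff hη.ne', ← hx_eq, add_apply, smul_apply, smul_eq_mul, apply_x hηz,
      hy_eq]
    ring
  have hRμ : l * μ y + k * supportFun B μ * ζ x ≤ tiltRatio B ζ k μ * supportFun B μ := by
    rw [tiltRatio, div_mul_cancel₀ _ hμ.ne', ← apply_x hμz]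
    exact le_supportFun hB.isCompact (μ + (k * supportFun B μ) • ζ) hxB
  calc (tiltRatio B ζ k η - tiltRatio B ζ k μ) * supportFun B μ
      ≤ l * (supportFun B μ - μ y) := by rw [hR]; linarith
    _ ≤ supportFun B μ - μ y :=
      mul_le_of_le_one_left (sub_nonneg.2 (le_supportFun hB.isCompact μ hyB)) hl1

theorem exists_abs_tiltRatio_sub_mul_le (hB : IsParkableBody B) (hz : z ∈ ζ.toExposed B)
    (hz0 : z ≠ 0) (hk : 0 ≤ k) :
    ∃ y : StrongDual ℝ E → E, ∀ η μ : StrongDual ℝ E, η z = 0 → μ z = 0 → ∀ m > 0,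
      m ≤ supportFun B η → m ≤ supportFun B μ →
      |tiltRatio B ζ k η - tiltRatio B ζ k μ| * m ≤ (η - μ) (y η - y μ) := by
  choose! y hy hle using fun (η : StrongDual ℝ E) (h : η z = 0 ∧ 0 < supportFun B η) ↦
    hB.exists_mem_toExposed_tiltRatio_sub_mul_le hz hz0 hk h.1 h.2
  have one_sided (η μ : StrongDual ℝ E) (hηz : η z = 0) (hμz : μ z = 0) (m : ℝ) (hm : 0 < m)
      (hη : m ≤ supportFun B η) (hμ : m ≤ supportFun B μ) :
      (tiltRatio B ζ k η - tiltRatio B ζ k μ) * m ≤ (η - μ) (y η - y μ) := by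
    have hη0 := hm.trans_le hη
    have hμ0 := hm.trans_le hμ
    obtain ⟨hηB, hη_eq⟩ := (mem_toExposed_iff_eq_supportFun hB.isCompact).1 (hy η ⟨hηz, hη0⟩)
    obtain ⟨hμB, hμ_eq⟩ := (mem_toExposed_iff_eq_supportFun hB.isCompact).1 (hy μ ⟨hμz, hμ0⟩)
    have hημ : η (y μ) ≤ η (y η) := hη_eq ▸ le_supportFun hB.isCompact η hμB
    have hμη : μ (y η) ≤ μ (y μ) := hμ_eq ▸ le_supportFun hB.isCompact μ hηB
    have hexpand : (η - μ) (y η - y μ) = (η (y η) - η (y μ)) + (μ (y μ) - μ (y η)) := by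
      simp only [map_sub, sub_apply]
      ring
    rw [hexpand]
    rcases le_total (tiltRatio B ζ k η) (tiltRatio B ζ k μ) with h | h
    · linarith [mul_nonpos_of_nonpos_of_nonneg (sub_nonpos.2 h) hm.le]
    · calc (tiltRatio B ζ k η - tiltRatio B ζ k μ) * m
          ≤ (tiltRatio B ζ k η - tiltRatio B ζ k μ) * supportFun B μ :=
            mul_le_mul_of_nonneg_left hμ (sub_nonneg.2 h)
        _ ≤ μ (y μ) - μ (y η) := hμ_eq ▸ hle η ⟨hηz, hη0⟩ μ hμz hμ0
        _ ≤ (η (y η) - η (y μ)) + (μ (y μ) - μ (y η)) := by linarith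
  refine ⟨y, fun η μ hηz hμz m hm hη hμ ↦ ?_⟩
  rcases abs_choice (tiltRatio B ζ k η - tiltRatio B ζ k μ) with h | h <;> rw [h]
  · exact one_sided η μ hηz hμz m hm hη hμ
  · have := one_sided μ η hμz hηz m hm hμ hη
    rwa [neg_sub, ← neg_sub μ η, ← neg_sub (y μ), map_neg, neg_apply, neg_neg]

theorem tiltRatio_eq_of_zero_notMem_segment (hB : IsParkableBody B) (hz : z ∈ ζ.toExposed B)
    (hz0 : z ≠ 0) (hk : 0 ≤ k) {a b : StrongDual ℝ E} (ha : a z = 0) (hb : b z = 0)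
    (h0 : (0 : StrongDual ℝ E) ∉ segment ℝ a b) : tiltRatio B ζ k a = tiltRatio B ζ k b := by
  let e : ℝ → StrongDual ℝ E := AffineMap.lineMap a b
  have e_sub (s t : ℝ) : e t - e s = (t - s) • (b - a) := by
    simp only [e, AffineMap.lineMap_apply_module]
    module
  have ez (t : ℝ) : e t z = 0 := by simp [e, AffineMap.lineMap_apply_module, ha, hb]
  obtain ⟨m, hm, hme⟩ : ∃ m > 0, ∀ t ∈ Icc (0 : ℝ) 1, m ≤ supportFun B (e t) := by
    have hcont : Continuous fun t ↦ supportFun B (e t) :=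
      (continuous_supportFun hB.isCompact).comp AffineMap.lineMap_continuous
    obtain ⟨t₀, ht₀, hmin⟩ := isCompact_Icc.exists_isMinOn
      (nonempty_Icc.2 (zero_le_one' ℝ)) hcont.continuousOn
    refine ⟨_, supportFun_pos hB.isCompact hB.mem_nhds_zero fun h ↦ h0 ?_, fun t ht ↦ hmin ht⟩
    rw [segment_eq_image_lineMap, ← h]
    exact mem_image_of_mem e ht₀
  obtain ⟨y, hy⟩ := hB.exists_abs_tiltRatio_sub_mul_le hz hz0 hk
  have h01 : tiltRatio B ζ k (e 0) = tiltRatio B ζ k (e 1) := by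
    refine eq_of_forall_dist_le_mul_sub (R := fun t ↦ tiltRatio B ζ k (e t))
      (N := fun t ↦ (b - a) (y (e t)) / m) zero_le_one fun s hs t ht _ ↦ ?_
    have := hy (e t) (e s) (ez t) (ez s) m hm (hme t ht) (hme s hs)
    rw [e_sub, smul_apply, smul_eq_mul, map_sub, ← le_div_iff₀ hm] at this
    rwa [dist_comm, Real.dist_eq, ← sub_div, ← mul_div_assoc]
  simpa [e] using h01

end IsParkableBody

end Tilt

section Reflection

theorem exists_linearIndependent_dual_apply_eq_zero (hdim : 3 ≤ Module.finrank ℝ E) {z : E}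
    {η : StrongDual ℝ E} (hη : η ≠ 0) (hηz : η z = 0) :
    ∃ v : StrongDual ℝ E, v z = 0 ∧ LinearIndependent ℝ ![η, v] := by
  have : FiniteDimensional ℝ E := Module.finite_of_finrank_pos (by omega)
  let evalAt : StrongDual ℝ E →ₗ[ℝ] ℝ := (ContinuousLinearMap.apply ℝ ℝ z).toLinearMap
  have hker : 1 < Module.finrank ℝ (LinearMap.ker evalAt) := by
    have hdual : Module.finrank ℝ (StrongDual ℝ E) = Module.finrank ℝ E :=
      (LinearMap.toContinuousLinearMap (𝕜 := ℝ) (E := E) (F' := ℝ)).finrank_eq.symm.trans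
        Subspace.dual_finrank_eq
    have hrange := (LinearMap.range evalAt).finrank_le
    have := evalAt.finrank_range_add_finrank_ker
    rw [Module.finrank_self] at hrange
    omega
  obtain ⟨⟨v, hv⟩, hind⟩ := exists_linearIndependent_pair_of_one_lt_finrank hker
    (x := (⟨η, LinearMap.mem_ker.2 hηz⟩ : LinearMap.ker evalAt)) (by simpa using hη)
  refine ⟨v, hv, LinearIndependent.pair_iff.2 fun s t hst ↦ ?_⟩
  exact LinearIndependent.pair_iff.1 hind s t (Subtype.ext hst)

namespace IsParkableBody

variable {ζ η : StrongDual ℝ E} {z : E}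

theorem tiltRatio_neg (hB : IsParkableBody B) (hdim : 3 ≤ Module.finrank ℝ E)
    (hz : z ∈ ζ.toExposed B) (hz0 : z ≠ 0) {k : ℝ} (hk : 0 ≤ k) (hη : η ≠ 0) (hηz : η z = 0) :
    tiltRatio B ζ k (-η) = tiltRatio B ζ k η := by
  obtain ⟨v, hvz, hind⟩ := exists_linearIndependent_dual_apply_eq_zero hdim hη hηz
  have hind' : LinearIndependent ℝ ![-η, v] := LinearIndependent.pair_neg_left_iff.2 hind
  have eq_v {μ : StrongDual ℝ E} (hμz : μ z = 0) (hμ : LinearIndependent ℝ ![μ, v]) :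
      tiltRatio B ζ k μ = tiltRatio B ζ k v :=
    hB.tiltRatio_eq_of_zero_notMem_segment hz hz0 hk hμz hvz
      (zero_notMem_segment_of_linearIndependent hμ)
  exact (eq_v (by simp [hηz]) hind').trans (eq_v hηz hind).symm

theorem supportFun_neg_add_smul (hB : IsParkableBody B) (hdim : 3 ≤ Module.finrank ℝ E)
    (hz : z ∈ ζ.toExposed B) (hz0 : z ≠ 0) (hηz : η z = 0) (s : ℝ) :
    supportFun B (-η + s • ζ) = supportFun B (η + s • ζ) := by
  rcases eq_or_ne η 0 with rfl | hη
  · simp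
  wlog hs : 0 ≤ s generalizing s
  · have := this (-s) (by linarith)
    rw [← hB.supportFun_neg, ← hB.supportFun_neg (η + s • ζ), neg_add, neg_add, neg_neg,
      ← neg_smul s ζ]
    exact this.symm
  have hpos : 0 < supportFun B η := supportFun_pos hB.isCompact hB.mem_nhds_zero hη
  have := hB.tiltRatio_neg hdim hz hz0 (div_nonneg hs hpos.le) hη hηz
  rwa [tiltRatio, tiltRatio, hB.supportFun_neg η, div_mul_cancel₀ _ hpos.ne',
    div_left_inj' hpos.ne'] at this

theorem sub_smul_mem (hB : IsParkableBody B) (hdim : 3 ≤ Module.finrank ℝ E)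
    (hz : z ∈ ζ.toExposed B) (hζz : ζ z = 1) {x : E} (hx : x ∈ B) :
    x - (2 * ζ x) • z ∈ B := by
  have hz0 : z ≠ 0 := by
    rintro rfl
    simp at hζz
  refine mem_of_forall_le_supportFun hB.isCompact hB.nonempty hB.convex fun f ↦ ?_
  obtain ⟨η, hηz, hf⟩ : ∃ η : StrongDual ℝ E, η z = 0 ∧ f = η + f z • ζ :=
    ⟨f - f z • ζ, by simp [hζz], by abel⟩
  calc f (x - (2 * ζ x) • z) = (η + (-f z) • ζ) x := by
        have := DFunLike.congr_fun hf x
        simp only [add_apply, smul_apply, smul_eq_mul, map_sub, map_smul] at this ⊢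
        linarith
    _ ≤ supportFun B (η + (-f z) • ζ) := le_supportFun hB.isCompact _ hx
    _ = supportFun B (-η + f z • ζ) := by
        rw [← hB.supportFun_neg]
        congr 1
        module
    _ = supportFun B f := by rw [hB.supportFun_neg_add_smul hdim hz hz0 hηz, ← hf]

theorem exists_dual_forall_sub_smul_mem (hB : IsParkableBody B) (hdim : 3 ≤ Module.finrank ℝ E)
    {u : E} (hu : u ≠ 0) :
    ∃ ζ : StrongDual ℝ E, ζ u = 1 ∧ ∀ x ∈ B, x - (2 * ζ x) • u ∈ B := by
  obtain ⟨r, -, hr⟩ :=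
    exists_pos_smul_mem_frontier hB.convex (hB.isCompact.isVonNBounded ℝ) hB.mem_nhds_zero hu
  obtain ⟨ζ, hζz, hζ⟩ := exists_apply_eq_one_of_mem_frontier hB.convex hB.mem_nhds_zero hr
  have hz : r • u ∈ ζ.toExposed B := ⟨hB.isCompact.isClosed.frontier_subset hr, hζz.symm ▸ hζ⟩
  refine ⟨r • ζ, by simpa using hζz, fun x hx ↦ ?_⟩
  have := hB.sub_smul_mem hdim hz hζz hx
  rwa [smul_smul, mul_assoc, mul_comm (ζ x)] at this

end IsParkableBody

end Reflection

theorem isCompact_chord (hB : IsCompact B) {u : E} (hu : u ≠ 0) (y : E) :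
    IsCompact {t : ℝ | y + t • u ∈ B} :=
  ((Homeomorph.addLeft y).isClosedEmbedding.comp
    (isClosedEmbedding_smul_left hu)).isCompact_preimage hB

theorem apply_chord_midpoint_eq_zero (hB : IsCompact B) {u : E} {ζ : StrongDual ℝ E}
    (hζu : ζ u = 1) (hreflect : ∀ x ∈ B, x - (2 * ζ x) • u ∈ B) {y : E}
    (hy : {t : ℝ | y + t • u ∈ B}.Nonempty) :
    ζ (y + ((sSup {t : ℝ | y + t • u ∈ B} + sInf {t : ℝ | y + t • u ∈ B}) / 2) • u) = 0 := by
  have hu : u ≠ 0 := by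
    rintro rfl
    simp at hζu
  have hchord : IsCompact {t : ℝ | y + t • u ∈ B} := isCompact_chord hB hu y
  have hsymm : ∀ t ∈ {t : ℝ | y + t • u ∈ B}, -(2 * ζ y) - t ∈ {t : ℝ | y + t • u ∈ B} := by
    intro t ht
    have hrefl := hreflect _ ht
    rw [map_add, map_smul, hζu, smul_eq_mul, mul_one] at hrefl
    change _ ∈ B
    convert hrefl using 1
    module
  rw [csSup_add_csInf_eq_of_forall_sub_mem hy hchord.bddBelow hsymm, map_add,
    map_smul, hζu, smul_eq_mul]
  ring

theorem stmt_15_general (hdim : 3 ≤ Module.finrank ℝ E) (hB : IsParkableBody B) {u : E}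
    (hu : u ≠ 0) :
    ∃ P : Submodule ℝ E, Module.finrank ℝ P + 1 = Module.finrank ℝ E ∧
      ∀ y : E, {t : ℝ | y + t • u ∈ B}.Nonempty →
        y + ((sSup {t : ℝ | y + t • u ∈ B} + sInf {t : ℝ | y + t • u ∈ B}) / 2) • u ∈ P := by
  have : FiniteDimensional ℝ E := Module.finite_of_finrank_pos (by omega)
  obtain ⟨ζ, hζu, hreflect⟩ := hB.exists_dual_forall_sub_smul_mem hdim hu
  have hζ : (ζ : E →ₗ[ℝ] ℝ) ≠ 0 := fun h ↦ one_ne_zero (hζu.symm.trans (DFunLike.congr_fun h u))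
  exact ⟨LinearMap.ker (ζ : E →ₗ[ℝ] ℝ), Module.Dual.finrank_ker_add_one_of_ne_zero hζ,
    fun _ hy ↦ apply_chord_midpoint_eq_zero hB.isCompact hζu hreflect hy⟩

/-- For a centrally symmetric parkable convex body `B ⊆ ℝ³` and any unit vector
`u`, the midpoints of the nonempty chords of `B` in direction `u` are coplanar:
they lie on a two-dimensional linear subspace. -/
theorem stmt_15 (B : Set (EuclideanSpace ℝ (Fin 3)))
    (hBcomp : IsCompact B) (hBconv : Convex ℝ B)
    (hBint : (interior B).Nonempty) (hB0 : (0 : EuclideanSpace ℝ (Fin 3)) ∈ B)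
    (hBsym : B = -B)
    (hpark : ∀ C : Set (EuclideanSpace ℝ (Fin 3)),
      C ⊆ B → C.Nonempty → IsClosed C → Convex ℝ C →
      ∃ v : EuclideanSpace ℝ (Fin 3),
        (0 : EuclideanSpace ℝ (Fin 3)) ∈ (fun x => x + v) '' C ∧
        (fun x => x + v) '' C ⊆ B)
    (u : EuclideanSpace ℝ (Fin 3)) (hu : ‖u‖ = 1) :
    ∃ P : Submodule ℝ (EuclideanSpace ℝ (Fin 3)), Module.finrank ℝ P = 2 ∧
      ∀ y : EuclideanSpace ℝ (Fin 3), {t : ℝ | y + t • u ∈ B}.Nonempty →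
        y + ((sSup {t : ℝ | y + t • u ∈ B} + sInf {t : ℝ | y + t • u ∈ B}) / 2) • u ∈ P := by
  have hB : IsParkableBody B := ⟨hBcomp, hBconv, hBint, hBsym.symm, hpark⟩
  simpa using stmt_15_general (by simp) hB (norm_ne_zero_iff.1 (hu ▸ one_ne_zero))
end

section
/- Let B ⊆ ℝ³ be a convex body with the weak Blaschke property. Then B is an ellipsoid: B is the image of the closed Euclidean unit ball under an invertible affine transformation of ℝ³. -/
/-- `B` has the weak Blaschke property: for every direction `u ≠ 0` there is an
affine plane `H + x` meeting the interior of `B` such that every point of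
`(H + x) ∩ ∂B` lies on a `B`-supporting line of direction `u`. -/
def WeakBlaschke (B : Set (EuclideanSpace ℝ (Fin 3))) : Prop :=
  ∀ u : EuclideanSpace ℝ (Fin 3), u ≠ 0 →
    ∃ H : Submodule ℝ (EuclideanSpace ℝ (Fin 3)), Module.finrank ℝ H = 2 ∧
      ∃ x : EuclideanSpace ℝ (Fin 3),
        (((fun h => h + x) '' (H : Set (EuclideanSpace ℝ (Fin 3)))) ∩ interior B).Nonempty ∧
        ∀ p ∈ ((fun h => h + x) '' (H : Set (EuclideanSpace ℝ (Fin 3)))) ∩ frontier B,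
          ∀ t : ℝ, p + t • u ∉ interior B

/-!
The plane section condition says that for every direction `u` the projection along `u` onto a
suitable affine plane maps `B` into itself: otherwise a segment from an interior point of the
section to a projected point leaves `B` through a point of the section at which the line of
direction `u` does meet the interior. This stability passes to the difference body `B - B`, with
linear projections. Hence the norm with unit ball `B - B` admits a contractive projection along
every line, its dual norm admits a contractive projection onto every plane, and a theorem of
Kakutani makes both Euclidean. After a linear change of coordinates `B - B` is a ball, so `B` has
constant width. Chords of maximal length orthogonal to `u` force the projection along `u` to be
the orthogonal one, onto a plane through a point independent of `u`. Composing many such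
projections approximates a half-turn about that point, so `B` is centrally symmetric and is
itself a ball.
-/

open Set Module Metric

section LinearAlgebra

variable {K V : Type*} [Field K] [AddCommGroup V] [Module K V]

theorem rank_span_pair_le (K : Type*) {V : Type*} [Field K] [AddCommGroup V] [Module K V]
    (x y : V) : Module.rank K (Submodule.span K {x, y}) ≤ 2 :=
  (rank_span_le _).trans (Cardinal.mk_insert_le.trans (by simp [one_add_one_eq_two]))

theorem span_pair_ne_top (hV : 2 < Module.rank K V) (x y : V) :
    Submodule.span K {x, y} ≠ ⊤ := fun h => by
  have := rank_span_pair_le K x y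
  rw [h, rank_top] at this
  exact hV.not_ge this

theorem linearIndependent_pair_of_notMem {y n : V} (hy : y ≠ 0)
    (hn : n ∉ Submodule.span K {y}) : LinearIndependent K ![y, n] :=
  (LinearIndependent.pair_iff' hy).2 fun r hr => hn (Submodule.mem_span_singleton.2 ⟨r, hr⟩)

theorem exists_span_pair_eq_top [FiniteDimensional K V] (hV : finrank K V ≤ 2) {y : V}
    (hy : y ≠ 0) : ∃ a : V, Submodule.span K {y, a} = ⊤ := by
  by_cases hspan : Submodule.span K {y} = ⊤
  · exact ⟨y, by rwa [pair_eq_singleton]⟩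
  obtain ⟨a, ha⟩ := SetLike.exists_not_mem_of_ne_top _ hspan rfl
  have hli := linearIndependent_pair_of_notMem hy ha
  have hcard : Fintype.card (Fin 2) = finrank K V :=
    le_antisymm hli.fintype_card_le_finrank (by simpa using hV)
  have hspan_range := hli.span_eq_top_of_card_eq_finrank hcard
  rw [Matrix.range_cons_cons_empty] at hspan_range
  exact ⟨a, hspan_range⟩

theorem span_pair_eq_top_of_sub_mem {y a z : V} (ha : Submodule.span K {y, a} = ⊤)
    (hz : a - z ∈ Submodule.span K {y}) : Submodule.span K {y, z} = ⊤ := by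
  refine top_unique (ha ▸ Submodule.span_le.2 ?_)
  rintro x (rfl | rfl)
  · exact Submodule.subset_span (by simp)
  · rw [SetLike.mem_coe, ← sub_add_cancel x z]
    exact add_mem (Submodule.span_mono (by simp) hz) (Submodule.subset_span (by simp))

theorem smul_add_smul_notMem_span_singleton {y a b : V} (ha : a ∉ Submodule.span K {y})
    (hb : b ∉ Submodule.span K {a, y}) {r s : K} (hrs : r ≠ 0 ∨ s ≠ 0) :
    r • a + s • b ∉ Submodule.span K {y} := by
  intro h
  have hle : Submodule.span K {y} ≤ Submodule.span K {a, y} := Submodule.span_mono (by simp)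
  have hsb : s • b ∈ Submodule.span K {a, y} := by
    rw [← Submodule.add_mem_iff_right _
      (Submodule.smul_mem _ r (Submodule.subset_span (mem_insert a {y})))]
    exact hle h
  have hs : s = 0 := by_contra fun hs => hb ((Submodule.smul_mem_iff _ hs).1 hsb)
  have hr : r ≠ 0 := by tauto
  rw [hs, zero_smul, add_zero] at h
  exact ha ((Submodule.smul_mem_iff _ hr).1 h)

theorem exists_linearMap_ker_eq_of_notMem {H : Submodule K V}
    (hH : finrank K V = finrank K H + 1) {u : V} (hu : u ∉ H) :
    ∃ f : V →ₗ[K] K, f u = 1 ∧ LinearMap.ker f = H := by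
  have : FiniteDimensional K V := .of_finrank_eq_succ hH
  obtain ⟨g, hgu, hHg⟩ := Submodule.exists_le_ker_of_notMem hu
  have hker := Module.Dual.finrank_ker_add_one_of_ne_zero (f := g) (by rintro rfl; simp at hgu)
  refine ⟨(g u)⁻¹ • g, by simp [hgu], ?_⟩
  rw [LinearMap.ker_smul _ _ (inv_ne_zero hgu)]
  exact (Submodule.eq_of_le_of_finrank_eq hHg (by omega)).symm

end LinearAlgebra

section Chain

theorem exists_mem_grid_ge {S : ℝ → Set ℝ} {D : ℝ → ℝ} {M K δ : ℝ} {N : ℕ} (hδ : 0 ≤ δ)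
    (hM : M ∈ S 0) (hstep : ∀ s t, 0 ≤ s → s ≤ t → t ≤ N * δ → ∀ σ ∈ S s,
      ∃ σ' ∈ S t, σ - K * (t - s) * (D t - D s) ≤ σ') :
    ∃ σ ∈ S (N * δ), M - K * δ * (D (N * δ) - D 0) ≤ σ := by
  induction N with
  | zero => exact ⟨M, by simpa using hM, by simp⟩
  | succ k ih =>
    have hsucc : ((k + 1 : ℕ) : ℝ) * δ = k * δ + δ := by push_cast; ring
    rw [hsucc] at hstep ⊢
    obtain ⟨σ, hσ, hle⟩ := ih fun s t hs hst ht => hstep s t hs hst (by linarith)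
    obtain ⟨σ', hσ', hle'⟩ := hstep _ _ (by positivity) (by linarith) le_rfl σ hσ
    refine ⟨σ', hσ', ?_⟩
    rw [add_sub_cancel_left] at hle'
    linarith

/-- With `N` equal steps the losses telescope to `O(1 / N)`. -/
theorem mem_of_forall_exists_ge {S : ℝ → Set ℝ} {D : ℝ → ℝ} {M K T : ℝ} (hT : 0 ≤ T)
    (hM : M ∈ S 0) (hle : ∀ σ ∈ S T, σ ≤ M) (hclosed : IsClosed (S T))
    (hstep : ∀ s t, 0 ≤ s → s ≤ t → t ≤ T → ∀ σ ∈ S s,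
      ∃ σ' ∈ S t, σ - K * (t - s) * (D t - D s) ≤ σ') :
    M ∈ S T := by
  have hgrid (N : ℕ) : ∃ σ ∈ S T, M - K * T * (D T - D 0) * (1 / ((N : ℝ) + 1)) ≤ σ := by
    have hNT : ((N + 1 : ℕ) : ℝ) * (T / (N + 1)) = T := by push_cast; field_simp
    have := exists_mem_grid_ge (S := S) (D := D) (K := K) (N := N + 1) (δ := T / (N + 1))
      (by positivity) hM (by rwa [hNT])
    rw [hNT] at this
    refine this.imp fun σ hσ => ⟨hσ.1, le_trans (le_of_eq ?_) hσ.2⟩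
    ring
  choose σ hσ hσ_ge using hgrid
  have hlower : Filter.Tendsto (fun N : ℕ => M - K * T * (D T - D 0) * (1 / ((N : ℝ) + 1)))
      Filter.atTop (nhds M) := by
    simpa using
      (tendsto_one_div_add_atTop_nhds_zero_nat.const_mul (K * T * (D T - D 0))).const_sub M
  have hlim : Filter.Tendsto σ Filter.atTop (nhds M) :=
    tendsto_of_tendsto_of_tendsto_of_le_of_le hlower tendsto_const_nhds hσ_ge
      fun N => hle _ (hσ N)
  exact hclosed.mem_of_tendsto hlim (Filter.Eventually.of_forall hσ)

end Chain

section Transport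

variable {V : Type*} [NormedAddCommGroup V] [NormedSpace ℝ V]

/-- Every plane through the origin is the range of a linear projection of norm at most one. This is
the hypothesis of Kakutani's characterization of inner product spaces. -/
def HasContractivePlaneProjections (V : Type*) [NormedAddCommGroup V] [NormedSpace ℝ V] : Prop :=
  ∀ F : Submodule ℝ V, finrank ℝ F = 2 →
    ∃ P : V →ₗ[ℝ] V, LinearMap.IsProj F P ∧ ∀ x, ‖P x‖ ≤ ‖x‖

/-- The norm along the line `x + ℝ y` dominates pointwise the norm along the parallel line
`x' + ℝ y`. -/
def LineDominates (y x x' : V) : Prop :=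
  ∀ s : ℝ, ‖x' + s • y‖ ≤ ‖x + s • y‖

/-- The distance from `x` to the line `ℝ y`, as the norm in the quotient by that line. -/
noncomputable def distToLine (y x : V) : ℝ :=
  ‖(Submodule.Quotient.mk x : V ⧸ Submodule.span ℝ {y})‖

namespace LineDominates

variable {y a b c : V}

theorem refl (y a : V) : LineDominates y a a := fun _ => le_rfl

theorem trans (hab : LineDominates y a b) (hbc : LineDominates y b c) : LineDominates y a c :=
  fun s => (hbc s).trans (hab s)

theorem add_smul (hab : LineDominates y a b) (t : ℝ) :
    LineDominates y (a + t • y) (b + t • y) := fun s => by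
  simpa only [_root_.add_smul, add_assoc] using hab (t + s)

theorem smul (hab : LineDominates y a b) {r : ℝ} (hr : 0 < r) :
    LineDominates y (r • a) (r • b) := fun s => by
  have hscale (z : V) : r • z + s • y = r • (z + (r⁻¹ * s) • y) := by
    rw [smul_add, smul_smul, mul_inv_cancel_left₀ hr.ne']
  rw [hscale, hscale, norm_smul, norm_smul]
  gcongr
  exact hab _

end LineDominates

theorem distToLine_add_smul (y x : V) (t : ℝ) : distToLine y (x + t • y) = distToLine y x := by
  unfold distToLine
  rw [(Submodule.Quotient.eq _).2]
  simpa using Submodule.smul_mem _ t (Submodule.mem_span_singleton_self y)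

theorem distToLine_smul (y x : V) (r : ℝ) : distToLine y (r • x) = |r| * distToLine y x := by
  rw [distToLine, Submodule.Quotient.mk_smul, norm_smul, Real.norm_eq_abs, distToLine]

theorem distToLine_pos {y x : V} (hx : x ∉ Submodule.span ℝ {y}) : 0 < distToLine y x := by
  have : IsClosed (Submodule.span ℝ {y} : Set V) := Submodule.closed_of_finiteDimensional _
  exact norm_pos_iff.2 fun h => hx ((Submodule.Quotient.mk_eq_zero _).1 h)

theorem continuous_distToLine (y : V) : Continuous (distToLine y) :=
  (Submodule.span ℝ {y}).mkQL.continuous.norm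

theorem LineDominates.distToLine_le {y x x' : V} (h : LineDominates y x x') :
    distToLine y x' ≤ distToLine y x := by
  refine le_of_forall_pos_le_add fun ε hε => ?_
  obtain ⟨m, hm, hm_lt⟩ := Submodule.Quotient.norm_mk_lt
    (Submodule.Quotient.mk x : V ⧸ Submodule.span ℝ {y}) hε
  obtain ⟨s, hs⟩ := Submodule.mem_span_singleton.1 ((Submodule.Quotient.eq _).1 hm)
  calc distToLine y x' = distToLine y (x' + s • y) := (distToLine_add_smul ..).symm
    _ ≤ ‖x' + s • y‖ := Submodule.Quotient.norm_mk_le _ _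
    _ ≤ ‖x + s • y‖ := h s
    _ = ‖m‖ := by rw [hs, add_sub_cancel]
    _ ≤ distToLine y x + ε := hm_lt.le

theorem LineDominates.abs_le_distToLine {y n x : V} {σ b : ℝ} (hn : 0 < distToLine y n)
    (h : LineDominates y x ((σ / distToLine y n) • n + b • y)) : |σ| ≤ distToLine y x := by
  have := h.distToLine_le
  rwa [distToLine_add_smul, distToLine_smul, abs_div, abs_of_pos hn, div_mul_cancel₀ _ hn.ne']
    at this

theorem isClosed_setOf_exists_lineDominates {y n : V} (hy : y ≠ 0)
    (hn : n ∉ Submodule.span ℝ {y}) (x : V) :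
    IsClosed {r : ℝ | ∃ b : ℝ, LineDominates y x (r • n + b • y)} := by
  let φ : ℝ × ℝ →ₗ[ℝ] V :=
    (LinearMap.toSpanSingleton ℝ V n).coprod (LinearMap.toSpanSingleton ℝ V y)
  have hφ (p : ℝ × ℝ) : φ p = p.1 • n + p.2 • y := rfl
  have hker : LinearMap.ker φ = ⊥ := LinearMap.ker_eq_bot'.2 fun p hp => by
    have := LinearIndependent.pair_iff.1 (linearIndependent_pair_of_notMem hy hn) p.2 p.1
      (by rwa [add_comm, ← hφ])
    exact Prod.ext this.2 this.1
  obtain ⟨C, -, hC⟩ := φ.exists_antilipschitzWith hker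
  have hclosed : IsClosed {p : ℝ × ℝ | LineDominates y x (φ p)} := by
    simp only [LineDominates, ofPred_forall]
    exact isClosed_iInter fun s => isClosed_le
      (φ.continuous_of_finiteDimensional.add continuous_const).norm continuous_const
  have hbounded : Bornology.IsBounded {p : ℝ × ℝ | LineDominates y x (φ p)} := by
    refine (hC.isBounded_preimage (isBounded_closedBall (x := 0) (r := ‖x‖))).subset fun p hp => ?_
    simpa using hp 0
  have := ((isCompact_of_isClosed_isBounded hclosed hbounded).image continuous_fst).isClosed
  convert this using 1
  ext r
  simp [hφ]

/-- The functional `d` describes a contractive projection `x ↦ (d x / δ) n + b y` onto the plane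
through `y` and `n`, where `δ` is the distance from `n` to `ℝ y`; the coordinate `b` along `y` is
left unspecified. -/
structure IsProjectionFunctional (y n : V) (d : V →ₗ[ℝ] ℝ) : Prop where
  apply_direction : d y = 0
  apply_point : d n = distToLine y n
  abs_apply_le : ∀ x, |d x| ≤ distToLine y x
  exists_lineDominates : ∀ x, ∃ b : ℝ, LineDominates y x ((d x / distToLine y n) • n + b • y)

theorem HasContractivePlaneProjections.exists_isProjectionFunctional
    (hV : HasContractivePlaneProjections V) {y n : V} (hy : y ≠ 0)
    (hn : n ∉ Submodule.span ℝ {y}) : ∃ d : V →ₗ[ℝ] ℝ, IsProjectionFunctional y n d := by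
  have hfin : finrank ℝ (Submodule.span ℝ {y, n}) = 2 := by
    have := finrank_span_eq_card (linearIndependent_pair_of_notMem hy hn)
    rwa [Matrix.range_cons_cons_empty, Fintype.card_fin] at this
  obtain ⟨P, hP, hP_le⟩ := hV _ hfin
  have hPy : P y = y := hP.map_id _ (Submodule.subset_span (by simp))
  have hPn : P n = n := hP.map_id _ (Submodule.subset_span (by simp))
  obtain ⟨f, hfn, hfy⟩ := Submodule.exists_le_ker_of_notMem hn
  replace hfy : f y = 0 := hfy (Submodule.mem_span_singleton_self y)
  have hpos := distToLine_pos hn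
  let d : V →ₗ[ℝ] ℝ := (distToLine y n / f n) • f ∘ₗ P
  have hd (x : V) : ∃ b : ℝ, LineDominates y x ((d x / distToLine y n) • n + b • y) := by
    obtain ⟨b, r, hx⟩ := Submodule.mem_span_pair.1 (hP.map_mem x)
    have hr : d x / distToLine y n = r := by
      have hfPx : f (P x) = r * f n := by simp [← hx, hfy]
      simp only [d, LinearMap.smul_apply, LinearMap.comp_apply, smul_eq_mul, hfPx]
      field_simp
    refine ⟨b, fun s => ?_⟩
    rw [hr, add_comm (r • n), hx]
    simpa [hPy] using hP_le (x + s • y)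
  refine ⟨d, by simp [d, hPy, hfy], by simp [d, hPn, hfn], fun x => ?_, hd⟩
  exact (hd x).elim fun b hb => hb.abs_le_distToLine hpos

theorem IsProjectionFunctional.exists_lineDominates_of_lineDominates {y n x m : V}
    {d d' : V →ₗ[ℝ] ℝ} {δ γ r b : ℝ} (hd : IsProjectionFunctional y x d)
    (hd' : IsProjectionFunctional y (x + δ • m) d') (hx : 0 < distToLine y (x + δ • m))
    (hγ : 0 < γ) (hγx : γ ≤ distToLine y x) (h : LineDominates y n (r • x + b • y)) :
    ∃ r' b' : ℝ, LineDominates y n (r' • (x + δ • m) + b' • y) ∧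
      r * distToLine y x - distToLine y n / γ * δ * (d' m - d m) ≤
        r' * distToLine y (x + δ • m) := by
  obtain ⟨b', hb'⟩ := hd'.exists_lineDominates (r • x + b • y)
  refine ⟨_, b', h.trans hb', ?_⟩
  have hd'x : d' x = distToLine y (x + δ • m) - δ * d' m := by
    simp [← hd'.apply_point]
  rw [div_mul_cancel₀ _ hx.ne', map_add, map_smul, map_smul, hd'.apply_direction, smul_zero,
    add_zero, smul_eq_mul]
  have hr : |r| ≤ distToLine y n / γ := by
    have := h.distToLine_le
    rw [distToLine_add_smul, distToLine_smul] at this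
    rw [le_div_iff₀ hγ]
    exact (mul_le_mul_of_nonneg_left hγx (abs_nonneg r)).trans this
  have hupper : d' x ≤ distToLine y x := (le_abs_self _).trans (hd'.abs_apply_le x)
  have hlower : distToLine y x + δ * d m ≤ distToLine y (x + δ • m) := by
    simpa [hd.apply_point] using (le_abs_self _).trans (hd.abs_apply_le (x + δ • m))
  have hgap : |distToLine y x - d' x| ≤ δ * (d' m - d m) := by
    rw [abs_of_nonneg (sub_nonneg.2 hupper)]
    linarith
  have hloss : r * (distToLine y x - d' x) ≤ distToLine y n / γ * (δ * (d' m - d m)) :=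
    (le_abs_self _).trans <| (abs_mul _ _).le.trans <|
      mul_le_mul hr hgap (abs_nonneg _) ((abs_nonneg r).trans hr)
  linarith

theorem exists_pos_le_distToLine {y n n' : V}
    (h : ∀ t ∈ Icc (0 : ℝ) 1, n + t • (n' - n) ∉ Submodule.span ℝ {y}) :
    ∃ γ > 0, ∀ t ∈ Icc (0 : ℝ) 1, γ ≤ distToLine y (n + t • (n' - n)) := by
  obtain ⟨t, ht, hmin⟩ := isCompact_Icc.exists_isMinOn (nonempty_Icc.2 (zero_le_one' ℝ))
    ((continuous_distToLine y).comp
      (by fun_prop : Continuous fun t : ℝ => n + t • (n' - n))).continuousOn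
  exact ⟨_, distToLine_pos (h t ht), fun s hs => hmin hs⟩

/-- Moving `n` along a segment in small steps and projecting to the plane through `y` and the
current point loses only second-order amounts of distance to `ℝ y`. -/
theorem HasContractivePlaneProjections.exists_lineDominates_of_segment
    (hV : HasContractivePlaneProjections V) {y n n' : V} (hy : y ≠ 0)
    (h : ∀ t ∈ Icc (0 : ℝ) 1, n + t • (n' - n) ∉ Submodule.span ℝ {y}) :
    ∃ b : ℝ, LineDominates y n ((distToLine y n / distToLine y n') • n' + b • y) := by
  obtain ⟨γ, hγ, hγ_le⟩ := exists_pos_le_distToLine h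
  let x (t : ℝ) : V := n + t • (n' - n)
  have hx0 : x 0 = n := by simp [x]
  have hx1 : x 1 = n' := by simp [x]
  choose! d hd using fun t ht => hV.exists_isProjectionFunctional hy (h t ht)
  let S (t : ℝ) : Set ℝ :=
    {σ | ∃ b : ℝ, LineDominates y n ((σ / distToLine y (x t)) • x t + b • y)}
  have hpos {t : ℝ} (ht : t ∈ Icc (0 : ℝ) 1) : 0 < distToLine y (x t) := distToLine_pos (h t ht)
  have h0 : (0 : ℝ) ∈ Icc (0 : ℝ) 1 := by simp
  have h1 : (1 : ℝ) ∈ Icc (0 : ℝ) 1 := by simp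
  suffices distToLine y n ∈ S 1 by simpa [S, hx1] using this
  refine mem_of_forall_exists_ge (D := fun t => d t (n' - n)) (K := distToLine y n / γ)
    zero_le_one ?_ ?_ ?_ ?_
  · refine ⟨0, ?_⟩
    have := hpos h0
    rw [hx0] at this ⊢
    simpa [div_self this.ne'] using LineDominates.refl y n
  · rintro σ ⟨b, hb⟩
    exact (le_abs_self σ).trans (hb.abs_le_distToLine (hpos h1))
  · exact (isClosed_setOf_exists_lineDominates hy (h 1 h1) n).preimage
      (continuous_id.div_const _)
  · rintro s t hs hst ht σ ⟨b, hb⟩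
    have hs' : s ∈ Icc (0 : ℝ) 1 := ⟨hs, hst.trans ht⟩
    have ht' : t ∈ Icc (0 : ℝ) 1 := ⟨hs.trans hst, ht⟩
    have hxt : x s + (t - s) • (n' - n) = x t := by simp only [x]; module
    obtain ⟨r', b', hb', hle⟩ := (hd s hs').exists_lineDominates_of_lineDominates
      (δ := t - s) (m := n' - n) (by rw [hxt]; exact hd t ht') (by rw [hxt]; exact hpos ht')
      hγ (hγ_le s hs') hb
    rw [hxt] at hb' hle
    rw [div_mul_cancel₀ _ (hpos hs').ne'] at hle
    exact ⟨_, ⟨b', by rwa [mul_div_cancel_right₀ _ (hpos ht').ne']⟩, hle⟩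

end Transport

section HalfTurn

variable {V : Type*} [NormedAddCommGroup V] [NormedSpace ℝ V]

theorem HasContractivePlaneProjections.exists_lineDominates_neg
    (hV : HasContractivePlaneProjections V) {y a b : V} (hy : y ≠ 0)
    (ha : a ∉ Submodule.span ℝ {y}) (hb : b ∉ Submodule.span ℝ {a, y}) :
    ∃ β : ℝ, LineDominates y a (-a + β • y) := by
  obtain ⟨β₁, h₁⟩ := hV.exists_lineDominates_of_segment (n := a) (n' := b) hy fun t _ => by
    rw [show a + t • (b - a) = (1 - t) • a + t • b by module]
    refine smul_add_smul_notMem_span_singleton ha hb ?_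
    by_contra! h
    linarith [h.1, h.2]
  obtain ⟨β₂, h₂⟩ := hV.exists_lineDominates_of_segment (n := b) (n' := -a) hy fun t _ => by
    rw [show b + t • (-a - b) = (-t) • a + (1 - t) • b by module]
    refine smul_add_smul_notMem_span_singleton ha hb ?_
    by_contra! h
    linarith [h.1, h.2]
  have hqa : 0 < distToLine y a := distToLine_pos ha
  have hqb : 0 < distToLine y b :=
    distToLine_pos fun h => hb (Submodule.span_mono (by simp) h)
  have hneg : distToLine y (-a) = distToLine y a := by
    simpa using distToLine_smul y a (-1)
  refine ⟨distToLine y a / distToLine y b * β₂ + β₁, ?_⟩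
  have h := h₁.trans ((h₂.smul (div_pos hqa hqb)).add_smul β₁)
  rwa [hneg, smul_add, smul_smul, smul_smul, div_mul_div_cancel₀ hqb.ne', div_self hqa.ne',
    one_smul, add_assoc, ← add_smul] at h

theorem LineDominates.exists_norm_eq {y a : V} {β : ℝ} (h : LineDominates y a (-a + β • y)) :
    ∃ z, a - z ∈ Submodule.span ℝ {y} ∧ ∀ r s : ℝ, ‖r • z + s • y‖ = ‖r • z - s • y‖ := by
  have hle (s : ℝ) : ‖a + (-β - s) • y‖ ≤ ‖a + s • y‖ := by
    rw [show a + (-β - s) • y = -(-a + β • y + s • y) by module, norm_neg]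
    exact h s
  have hz_le (s : ℝ) : ‖a - (β / 2) • y - s • y‖ ≤ ‖a - (β / 2) • y + s • y‖ := by
    convert hle (s - β / 2) using 2 <;> module
  have hz (s : ℝ) : ‖a - (β / 2) • y + s • y‖ = ‖a - (β / 2) • y - s • y‖ :=
    le_antisymm (by simpa [← sub_eq_add_neg] using hz_le (-s)) (hz_le s)
  refine ⟨a - (β / 2) • y, by simpa using Submodule.mem_span_singleton.2 ⟨β / 2, rfl⟩,
    fun r s => ?_⟩
  rcases eq_or_ne r 0 with rfl | hr
  · simp
  · have := congrArg (‖r‖ * ·) (hz (r⁻¹ * s))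
    simpa only [← norm_smul, smul_add, smul_sub, smul_smul, mul_inv_cancel_left₀ hr] using this

theorem HasContractivePlaneProjections.exists_norm_eq (hV : HasContractivePlaneProjections V)
    (hrank : 2 < Module.rank ℝ V) (y a : V) :
    ∃ z, a - z ∈ Submodule.span ℝ {y} ∧ ∀ r s : ℝ, ‖r • z + s • y‖ = ‖r • z - s • y‖ := by
  rcases eq_or_ne y 0 with rfl | hy
  · exact ⟨a, by simp⟩
  by_cases ha : a ∈ Submodule.span ℝ {y}
  · exact ⟨0, by simpa using ha, by simp⟩
  obtain ⟨b, hb⟩ := SetLike.exists_not_mem_of_ne_top _ (span_pair_ne_top hrank a y) rfl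
  obtain ⟨β, h⟩ := hV.exists_lineDominates_neg hy ha hb
  exact h.exists_norm_eq

end HalfTurn

section InvariantForm

open MeasureTheory

variable {W : Type*} [NormedAddCommGroup W] [NormedSpace ℝ W]

/-- Precomposition by an isometry `R` of `W`, as an isometry of the dual. -/
noncomputable def dualCongr (R : W ≃ₗᵢ[ℝ] W) : StrongDual ℝ W ≃ᵢ StrongDual ℝ W where
  toFun f := f.comp (R : W →L[ℝ] W)
  invFun f := f.comp (R.symm : W →L[ℝ] W)
  left_inv f := by ext; simp
  right_inv f := by ext; simp
  isometry_toFun := AddMonoidHomClass.isometry_of_norm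
    ((ContinuousLinearMap.compL ℝ W W ℝ).flip (R : W →L[ℝ] W)) fun f =>
      ContinuousLinearMap.opNorm_comp_linearIsometryEquiv f R

variable [FiniteDimensional ℝ W]

/-- The inner product of `x` and `y` viewed as functions in `L²` of the dual unit ball. Hausdorff
measure is used because it is determined by the metric, hence preserved by all isometries. -/
noncomputable def dualBallForm (W : Type*) [NormedAddCommGroup W] [NormedSpace ℝ W]
    [FiniteDimensional ℝ W] : LinearMap.BilinForm ℝ W :=
  have hint (x y : W) : IntegrableOn (fun f : StrongDual ℝ W => f x * f y) (closedBall 0 1)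
      μH[finrank ℝ (StrongDual ℝ W)] :=
    (by fun_prop : Continuous fun f : StrongDual ℝ W => f x * f y).continuousOn.integrableOn_compact
      (isCompact_closedBall _ _)
  LinearMap.mk₂ ℝ
    (fun x y => ∫ f in closedBall (0 : StrongDual ℝ W) 1, f x * f y ∂μH[finrank ℝ (StrongDual ℝ W)])
    (fun x x' y => by simp only [map_add, add_mul]; exact integral_add (hint _ _) (hint _ _))
    (fun c x y => by simp only [map_smul, smul_eq_mul, mul_assoc, integral_const_mul])
    (fun x y y' => by simp only [map_add, mul_add]; exact integral_add (hint _ _) (hint _ _))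
    (fun c x y => by
      simp only [map_smul, smul_eq_mul, mul_left_comm _ c, integral_const_mul])

theorem dualBallForm_apply (x y : W) : dualBallForm W x y =
    ∫ f in closedBall (0 : StrongDual ℝ W) 1, f x * f y ∂μH[finrank ℝ (StrongDual ℝ W)] := rfl

theorem isSymm_dualBallForm : (dualBallForm W).IsSymm :=
  ⟨fun x y => by simp only [dualBallForm_apply, mul_comm]⟩

theorem dualBallForm_self_pos {x : W} (hx : x ≠ 0) : 0 < dualBallForm W x x := by
  have hcont : Continuous fun f : StrongDual ℝ W => f x * f x := by fun_prop
  rw [dualBallForm_apply, setIntegral_pos_iff_support_of_nonneg_ae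
    (Filter.Eventually.of_forall fun f => mul_self_nonneg _)
    (hcont.continuousOn.integrableOn_compact (isCompact_closedBall _ _))]
  obtain ⟨f, hf, hfx⟩ := exists_dual_vector ℝ x (norm_ne_zero_iff.2 hx)
  refine Measure.measure_pos_of_mem_nhds _ (x := (2 : ℝ)⁻¹ • f) (Filter.inter_mem ?_ ?_)
  · refine hcont.isOpen_support.mem_nhds ?_
    simp [hfx, hx]
  · refine closedBall_mem_nhds_of_mem (mem_ball_zero_iff.2 ?_)
    rw [norm_smul, hf]
    norm_num

theorem dualBallForm_map (R : W ≃ₗᵢ[ℝ] W) (x y : W) :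
    dualBallForm W (R x) (R y) = dualBallForm W x y := by
  have hR := (dualCongr R).measurePreserving_hausdorffMeasure (finrank ℝ (StrongDual ℝ W))
  have hzero : (dualCongr R).symm 0 = 0 := ContinuousLinearMap.zero_comp _
  have hball : dualCongr R ⁻¹' closedBall 0 1 = closedBall 0 1 := by
    rw [(dualCongr R).preimage_closedBall, hzero]
  have := hR.setIntegral_preimage_emb (dualCongr R).toHomeomorph.measurableEmbedding
    (fun f => f x * f y) (closedBall 0 1)
  rwa [hball] at this

end InvariantForm

section Planar

variable {W : Type*} [NormedAddCommGroup W] [NormedSpace ℝ W]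

theorem exists_linearIsometryEquiv_reflection {y z : W} (hspan : Submodule.span ℝ {y, z} = ⊤)
    (h : ∀ r s : ℝ, ‖r • z + s • y‖ = ‖r • z - s • y‖) :
    ∃ R : W ≃ₗᵢ[ℝ] W, R y = y ∧ R z = -z := by
  rcases eq_or_ne z 0 with rfl | hz
  · exact ⟨.refl ℝ W, by simp⟩
  have hzy : z ∉ Submodule.span ℝ {y} := fun hmem => by
    obtain ⟨c, hc⟩ := Submodule.mem_span_singleton.1 hmem
    have hzz : (2 : ℝ) • z = 0 := by simpa [hc, two_smul] using h 1 c
    exact hz ((smul_eq_zero.1 hzz).resolve_left two_ne_zero)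
  obtain ⟨φ, hφz, hφy⟩ := Submodule.exists_le_ker_of_notMem hzy
  replace hφy : φ y = 0 := hφy (Submodule.mem_span_singleton_self y)
  have htwo : ((2 / φ z) • φ) z = 2 := by simp [hφz]
  refine ⟨⟨Module.reflection htwo, fun x => ?_⟩, ?_, Module.reflection_apply_self htwo⟩
  · obtain ⟨s, r, rfl⟩ := Submodule.mem_span_pair.1 (hspan ▸ Submodule.mem_top (x := x))
    rw [map_add, map_smul, map_smul, Module.reflection_apply_self, Module.reflection_apply]
    simp only [LinearMap.smul_apply, hφy, smul_zero, zero_smul, sub_zero]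
    rw [add_comm (s • y) (r • z), h, ← norm_neg]
    congr 1
    module
  · simp [Module.reflection_apply, hφy]

variable [FiniteDimensional ℝ W]

theorem dualBallForm_eq_zero {y z : W} (hspan : Submodule.span ℝ {y, z} = ⊤)
    (h : ∀ r s : ℝ, ‖r • z + s • y‖ = ‖r • z - s • y‖) : dualBallForm W y z = 0 := by
  obtain ⟨R, hy, hz⟩ := exists_linearIsometryEquiv_reflection hspan h
  have := dualBallForm_map R y z
  rw [hy, hz, map_neg] at this
  linarith

theorem norm_eq_of_dualBallForm_eq
    (hW : ∀ y : W, y ≠ 0 → ∃ z, Submodule.span ℝ {y, z} = ⊤ ∧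
      ∀ r s : ℝ, ‖r • z + s • y‖ = ‖r • z - s • y‖)
    {x x' : W} (h : dualBallForm W x x = dualBallForm W x' x') : ‖x‖ = ‖x'‖ := by
  by_cases hy : x + x' = 0
  · rw [eq_neg_of_add_eq_zero_left hy, norm_neg]
  obtain ⟨z, hspan, hsymm⟩ := hW _ hy
  have hz := dualBallForm_eq_zero hspan hsymm
  obtain ⟨c, r, hcr⟩ := Submodule.mem_span_pair.1 (hspan ▸ Submodule.mem_top (x := x - x'))
  have hsub : dualBallForm W (x + x') (x - x') = 0 := by
    have := isSymm_dualBallForm.eq x x'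
    simp only [map_add, map_sub, LinearMap.add_apply]
    linarith
  have hc : c = 0 := by
    rw [← hcr, map_add, map_smul, map_smul, hz, smul_zero, add_zero, smul_eq_mul] at hsub
    exact (mul_eq_zero.1 hsub).resolve_right (dualBallForm_self_pos hy).ne'
  rw [hc, zero_smul, zero_add] at hcr
  have hx : x = (2 : ℝ)⁻¹ • (r • z + (1 : ℝ) • (x + x')) := by rw [hcr]; module
  have hx' : x' = -(2 : ℝ)⁻¹ • (r • z - (1 : ℝ) • (x + x')) := by rw [hcr]; module
  calc ‖x‖ = ‖(2 : ℝ)⁻¹‖ * ‖r • z + (1 : ℝ) • (x + x')‖ := by rw [← norm_smul, ← hx]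
    _ = ‖-(2 : ℝ)⁻¹‖ * ‖r • z - (1 : ℝ) • (x + x')‖ := by rw [hsymm, norm_neg]
    _ = ‖x'‖ := by rw [← norm_smul, ← hx']

theorem exists_norm_mul_self_eq_mul_dualBallForm
    (hW : ∀ y : W, y ≠ 0 → ∃ z, Submodule.span ℝ {y, z} = ⊤ ∧
      ∀ r s : ℝ, ‖r • z + s • y‖ = ‖r • z - s • y‖) :
    ∃ κ : ℝ, ∀ v : W, ‖v‖ * ‖v‖ = κ * dualBallForm W v v := by
  rcases subsingleton_or_nontrivial W with _ | _
  · exact ⟨0, fun v => by simp [Subsingleton.elim v 0]⟩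
  obtain ⟨e, he⟩ := exists_ne (0 : W)
  have hQe := dualBallForm_self_pos he
  refine ⟨‖e‖ * ‖e‖ / dualBallForm W e e, fun v => ?_⟩
  have hQv : 0 ≤ dualBallForm W v v := by
    rcases eq_or_ne v 0 with rfl | hv
    · simp
    · exact (dualBallForm_self_pos hv).le
  have hv : ‖v‖ = ‖√(dualBallForm W v v / dualBallForm W e e) • e‖ := by
    refine norm_eq_of_dualBallForm_eq hW ?_
    simp only [map_smul, LinearMap.smul_apply, smul_eq_mul]
    rw [← mul_assoc, Real.mul_self_sqrt (by positivity), div_mul_cancel₀ _ hQe.ne']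
  rw [hv, norm_smul, mul_mul_mul_comm, ← norm_mul, Real.mul_self_sqrt (by positivity),
    Real.norm_of_nonneg (by positivity)]
  ring

theorem innerProductSpaceable_of_forall_exists_norm_eq
    (hW : ∀ y : W, y ≠ 0 → ∃ z, Submodule.span ℝ {y, z} = ⊤ ∧
      ∀ r s : ℝ, ‖r • z + s • y‖ = ‖r • z - s • y‖) :
    InnerProductSpaceable W := by
  obtain ⟨κ, hκ⟩ := exists_norm_mul_self_eq_mul_dualBallForm hW
  refine ⟨fun x y => ?_⟩
  simp only [hκ, map_add, map_sub, LinearMap.add_apply, LinearMap.sub_apply]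
  ring

end Planar

section Kakutani

variable {V : Type*} [NormedAddCommGroup V] [NormedSpace ℝ V]

theorem innerProductSpaceable_of_forall_span_pair
    (h : ∀ x y : V, InnerProductSpaceable (Submodule.span ℝ {x, y})) : InnerProductSpaceable V :=
  ⟨fun x y => (h x y).parallelogram_identity
    ⟨x, Submodule.subset_span (by simp)⟩ ⟨y, Submodule.subset_span (by simp)⟩⟩

/-- Kakutani's theorem. -/
theorem HasContractivePlaneProjections.innerProductSpaceable
    (hV : HasContractivePlaneProjections V) (hrank : 2 < Module.rank ℝ V) :
    InnerProductSpaceable V := by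
  refine innerProductSpaceable_of_forall_span_pair fun x x' => ?_
  have : FiniteDimensional ℝ (Submodule.span ℝ {x, x'}) := .span_of_finite ℝ (toFinite _)
  refine innerProductSpaceable_of_forall_exists_norm_eq fun y hy => ?_
  obtain ⟨a, ha⟩ := exists_span_pair_eq_top (finrank_le_of_rank_le (rank_span_pair_le ℝ x x')) hy
  obtain ⟨z, hz, hsymm⟩ := hV.exists_norm_eq hrank y a
  obtain ⟨c, hc⟩ := Submodule.mem_span_singleton.1 hz
  have hza : z = a - c • y := by rw [hc]; abel
  refine ⟨a - c • y, span_pair_eq_top_of_sub_mem ha ?_, ?_⟩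
  · simpa using Submodule.mem_span_singleton.2 ⟨c, rfl⟩
  · simpa [hza] using hsymm

end Kakutani

section Duality

variable {E : Type*} [NormedAddCommGroup E] [NormedSpace ℝ E]

theorem finrank_strongDual (E : Type*) [NormedAddCommGroup E] [NormedSpace ℝ E]
    [FiniteDimensional ℝ E] : finrank ℝ (StrongDual ℝ E) = finrank ℝ E :=
  LinearMap.toContinuousLinearMap.finrank_eq.symm.trans Subspace.dual_finrank_eq

theorem surjective_inclusionInDoubleDual [FiniteDimensional ℝ E] :
    Function.Surjective (NormedSpace.inclusionInDoubleDual ℝ E) :=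
  (LinearMap.injective_iff_surjective_of_finrank_eq_finrank
    (f := (NormedSpace.inclusionInDoubleDual ℝ E).toLinearMap)
    (by rw [finrank_strongDual, finrank_strongDual])).1
    (NormedSpace.inclusionInDoubleDualLi ℝ).injective

theorem exists_forall_mem_iff_apply_eq_zero [FiniteDimensional ℝ E]
    {F : Submodule ℝ (StrongDual ℝ E)} (hF : finrank ℝ F + 1 = finrank ℝ E) :
    ∃ u : E, u ≠ 0 ∧ ∀ g, g ∈ F ↔ g u = 0 := by
  have hdual := finrank_strongDual E
  have hlt : F < ⊤ := Submodule.lt_top_of_finrank_lt_finrank (by omega)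
  obtain ⟨g, -, hg⟩ := SetLike.exists_of_lt hlt
  obtain ⟨Φ, hΦg, rfl⟩ := exists_linearMap_ker_eq_of_notMem (by omega) hg
  obtain ⟨u, hu⟩ := surjective_inclusionInDoubleDual Φ.toContinuousLinearMap
  have hΦu (g : StrongDual ℝ E) : Φ g = g u := (DFunLike.congr_fun hu g).symm
  refine ⟨u, ?_, fun g => by rw [LinearMap.mem_ker, hΦu]⟩
  rintro rfl
  simp [hΦu] at hΦg

/-- The transpose of a contraction onto a line complement is a contraction onto a plane. -/
theorem hasContractivePlaneProjections_strongDual (hE : finrank ℝ E = 3)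
    (h : ∀ u : E, u ≠ 0 → ∃ f : E →ₗ[ℝ] ℝ, f u = 1 ∧ ∀ x, ‖x - f x • u‖ ≤ ‖x‖) :
    HasContractivePlaneProjections (StrongDual ℝ E) := by
  have : FiniteDimensional ℝ E := .of_finrank_eq_succ hE
  intro F hF
  obtain ⟨u, hu, hFu⟩ := exists_forall_mem_iff_apply_eq_zero (F := F) (by omega)
  obtain ⟨f, hfu, hf⟩ := h u hu
  let P : StrongDual ℝ E →ₗ[ℝ] StrongDual ℝ E :=
    .id - (ContinuousLinearMap.apply ℝ ℝ u).toLinearMap.smulRight f.toContinuousLinearMap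
  have hP (g : StrongDual ℝ E) : P g = g - g u • f.toContinuousLinearMap := rfl
  refine ⟨P, ⟨fun g => ?_, fun g hg => ?_⟩, fun g => ?_⟩
  · simp [hFu, hP, hfu]
  · simp [hP, (hFu g).1 hg]
  · refine ContinuousLinearMap.opNorm_le_bound _ (norm_nonneg g) fun x => ?_
    calc ‖P g x‖ = ‖g (x - f x • u)‖ := by simp [hP, mul_comm]
      _ ≤ ‖g‖ * ‖x - f x • u‖ := g.le_opNorm _
      _ ≤ ‖g‖ * ‖x‖ := by gcongr; exact hf x

theorem innerProductSpaceable_of_linearIsometry {F : Type*} [NormedAddCommGroup F]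
    [NormedSpace ℝ F] (hF : InnerProductSpaceable F) (i : E →ₗᵢ[ℝ] F) :
    InnerProductSpaceable E :=
  ⟨fun x y => by simpa only [← map_add, ← map_sub, i.norm_map] using
    hF.parallelogram_identity (i x) (i y)⟩

theorem innerProductSpaceable_strongDual [CompleteSpace E] (hE : InnerProductSpaceable E) :
    InnerProductSpaceable (StrongDual ℝ E) := by
  let : InnerProductSpace ℝ E := .ofNorm ℝ hE.parallelogram_identity
  have := InnerProductSpace.toInnerProductSpaceable ℝ (E := E)
  exact innerProductSpaceable_of_linearIsometry ‹_›
    (InnerProductSpace.toDual ℝ E).symm.toLinearIsometry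

/-- Blaschke's theorem. -/
theorem innerProductSpaceable_of_exists_contractive_projection (hE : finrank ℝ E = 3)
    (h : ∀ u : E, u ≠ 0 → ∃ f : E →ₗ[ℝ] ℝ, f u = 1 ∧ ∀ x, ‖x - f x • u‖ ≤ ‖x‖) :
    InnerProductSpaceable E := by
  have : FiniteDimensional ℝ E := .of_finrank_eq_succ hE
  have hrank : 2 < Module.rank ℝ (StrongDual ℝ E) := by
    rw [← finrank_eq_rank, finrank_strongDual, hE]
    norm_num
  have hdual := (hasContractivePlaneProjections_strongDual hE h).innerProductSpaceable hrank
  exact innerProductSpaceable_of_linearIsometry (innerProductSpaceable_strongDual hdual)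
    (NormedSpace.inclusionInDoubleDualLi ℝ)

theorem nonempty_linearIsometryEquiv_euclideanSpace [FiniteDimensional ℝ E]
    (hE : InnerProductSpaceable E) {n : ℕ} (hn : finrank ℝ E = n) :
    Nonempty (E ≃ₗᵢ[ℝ] EuclideanSpace ℝ (Fin n)) := by
  let : InnerProductSpace ℝ E := .ofNorm ℝ hE.parallelogram_identity
  exact ⟨((stdOrthonormalBasis ℝ E).reindex (finCongr hn)).repr⟩

theorem exists_linearEquiv_norm_eq_seminorm {V : Type*} [AddCommGroup V] [Module ℝ V]
    (hV : finrank ℝ V = 3) (p : Seminorm ℝ V) (hp : ∀ v, p v = 0 → v = 0)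
    (h : ∀ u : V, u ≠ 0 → ∃ f : V →ₗ[ℝ] ℝ, f u = 1 ∧ ∀ x, p (x - f x • u) ≤ p x) :
    ∃ S : V ≃ₗ[ℝ] EuclideanSpace ℝ (Fin 3), ∀ v, ‖S v‖ = p v := by
  let : Norm V := ⟨p⟩
  have core : NormedSpace.Core ℝ V :=
    { norm_nonneg := apply_nonneg p
      norm_smul := map_smul_eq_mul p
      norm_triangle := map_add_le_add p
      norm_eq_zero_iff := fun v => ⟨hp v, fun hv => hv ▸ map_zero p⟩ }
  let : NormedAddCommGroup V := .ofCore core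
  let : NormedSpace ℝ V := .ofCore core
  have : FiniteDimensional ℝ V := .of_finrank_eq_succ hV
  obtain ⟨S⟩ := nonempty_linearIsometryEquiv_euclideanSpace
    (innerProductSpaceable_of_exists_contractive_projection hV h) hV
  exact ⟨S.toLinearEquiv, S.norm_map⟩

end Duality

section DifferenceBody

open Topology
open scoped Pointwise

variable {V W : Type*} [AddCommGroup V] [Module ℝ V] [AddCommGroup W] [Module ℝ W]

/-- Every direction is the direction of a projection onto an affine hyperplane that maps `B` into
itself. The hyperplane is encoded as `f = c`, with `f` normalized by `f u = 1`. -/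
def IsStableUnderObliqueProjections (B : Set V) : Prop :=
  ∀ u : V, u ≠ 0 → ∃ (f : V →ₗ[ℝ] ℝ) (c : ℝ), f u = 1 ∧ MapsTo (fun x => x - (f x - c) • u) B B

theorem IsStableUnderObliqueProjections.image {B : Set V} (hB : IsStableUnderObliqueProjections B)
    (S : V ≃ₗ[ℝ] W) : IsStableUnderObliqueProjections (S '' B) := by
  intro u hu
  obtain ⟨f, c, hfu, hf⟩ := hB (S.symm u) (by simpa using hu)
  refine ⟨f ∘ₗ S.symm, c, hfu, ?_⟩
  rintro _ ⟨x, hx, rfl⟩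
  exact ⟨_, hf hx, by simp⟩

theorem mapsTo_sub_of_mapsTo_oblique_projection {B : Set V} {u : V} {f : V →ₗ[ℝ] ℝ} {c : ℝ}
    (h : MapsTo (fun x => x - (f x - c) • u) B B) :
    MapsTo (fun x => x - f x • u) (B - B) (B - B) := by
  rintro _ ⟨x, hx, y, hy, rfl⟩
  refine ⟨_, h hx, _, h hy, ?_⟩
  simp only [map_sub]
  module

theorem gauge_map_le_of_mapsTo {s : Set V} (hs : Absorbent ℝ s) {P : V → V}
    (hsmul : ∀ (r : ℝ) x, P (r • x) = r • P x) (hP : MapsTo P s s) (x : V) :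
    gauge s (P x) ≤ gauge s x :=
  le_csInf hs.gauge_set_nonempty fun r ⟨hr, y, hy, hyx⟩ =>
    gauge_le_of_mem hr.le ⟨P y, hP hy, by rw [← hyx]; exact (hsmul r y).symm⟩

theorem sub_self_mem_nhds_zero {E : Type*} [AddGroup E] [TopologicalSpace E]
    [IsTopologicalAddGroup E] {B : Set E} (hB : (interior B).Nonempty) : B - B ∈ 𝓝 (0 : E) := by
  obtain ⟨q, hq⟩ := hB
  have htendsto : Filter.Tendsto (fun x => x + q) (𝓝 0) (𝓝 q) := by
    simpa using (continuous_add_const q).tendsto 0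
  filter_upwards [htendsto (mem_interior_iff_mem_nhds.1 hq)] with x hx
  exact ⟨x + q, hx, q, interior_subset hq, add_sub_cancel_right x q⟩

theorem exists_linearEquiv_image_sub_image_eq_closedBall {E : Type*} [NormedAddCommGroup E]
    [NormedSpace ℝ E] (hE : finrank ℝ E = 3) {B : Set E} (hcomp : IsCompact B)
    (hconv : Convex ℝ B) (hint : (interior B).Nonempty) (hB : IsStableUnderObliqueProjections B) :
    ∃ S : E ≃ₗ[ℝ] EuclideanSpace ℝ (Fin 3), S '' B - S '' B = closedBall 0 1 := by
  have hnhds : B - B ∈ 𝓝 0 := sub_self_mem_nhds_zero hint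
  have habs : Absorbent ℝ (B - B) := absorbent_nhds_zero hnhds
  have hDcomp : IsCompact (B - B) := by
    simpa only [sub_eq_add_neg] using hcomp.add hcomp.neg
  have hDconv : Convex ℝ (B - B) := hconv.sub hconv
  have hbal : Balanced ℝ (B - B) :=
    (balanced_iff_neg_mem hDconv).2 fun _ ⟨x, hx, y, hy, hxy⟩ => ⟨y, hy, x, hx, by simp [← hxy]⟩
  obtain ⟨S, hS⟩ := exists_linearEquiv_norm_eq_seminorm hE (gaugeSeminorm hbal hDconv habs)
    (fun v hv => (gauge_eq_zero habs (hDcomp.totallyBounded.isVonNBounded ℝ)).1 hv) fun u hu => by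
      obtain ⟨f, c, hfu, hf⟩ := hB u hu
      exact ⟨f, hfu, gauge_map_le_of_mapsTo habs (P := fun x => x - f x • u)
        (fun r x => by simp only [map_smul, smul_sub, smul_assoc])
        (mapsTo_sub_of_mapsTo_oblique_projection hf)⟩
  refine ⟨S, ?_⟩
  rw [← image_sub]
  ext y
  obtain ⟨v, rfl⟩ := S.surjective y
  rw [S.injective.mem_set_image, mem_closedBall_zero_iff, hS]
  exact (gauge_le_one_iff_mem_closure hDconv hnhds).trans
    (by rw [hDcomp.isClosed.closure_eq]) |>.symm

end DifferenceBody

section ConstantWidth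

open scoped Pointwise RealInnerProductSpace

variable {E : Type*} [NormedAddCommGroup E] [InnerProductSpace ℝ E]

theorem exists_norm_eq_one_inner_eq_zero (hE : 2 < Module.rank ℝ E) (u v : E) :
    ∃ w : E, ‖w‖ = 1 ∧ ⟪u, w⟫ = 0 ∧ ⟪v, w⟫ = 0 := by
  have : FiniteDimensional ℝ (Submodule.span ℝ {u, v}) := .span_of_finite ℝ (by simp)
  have hbot : (Submodule.span ℝ {u, v})ᗮ ≠ ⊥ :=
    Submodule.orthogonal_eq_bot_iff.not.2 (span_pair_ne_top hE u v)
  obtain ⟨n, hn, hn0⟩ := Submodule.exists_mem_ne_zero_of_ne_bot hbot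
  rw [Submodule.mem_orthogonal] at hn
  refine ⟨‖n‖⁻¹ • n, norm_smul_inv_norm hn0, ?_, ?_⟩ <;> rw [real_inner_smul_right, hn, mul_zero]
  exacts [Submodule.mem_span_of_mem (by simp), Submodule.mem_span_of_mem (by simp)]

theorem eq_inner_div_of_forall_inner_eq_zero {f : E →ₗ[ℝ] ℝ} {u : E} (hfu : f u = 1)
    (h : ∀ w, ‖w‖ = 1 → ⟪u, w⟫ = 0 → f w = 0) (x : E) : f x = ⟪u, x⟫ / ‖u‖ ^ 2 := by
  have hu : u ≠ 0 := by rintro rfl; simp at hfu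
  set y : E := x - (⟪u, x⟫ / ‖u‖ ^ 2) • u with hy
  have huy : ⟪u, y⟫ = 0 := by
    rw [hy, inner_sub_right, real_inner_smul_right, real_inner_self_eq_norm_sq]
    field_simp
    ring
  have hfy : f y = 0 := by
    rcases eq_or_ne y 0 with hy0 | hy0
    · rw [hy0, map_zero]
    · have := h (‖y‖⁻¹ • y) (norm_smul_inv_norm hy0) (by rw [real_inner_smul_right, huy, mul_zero])
      simpa [hy0] using this
  simpa [hy, hfu, sub_eq_zero] using hfy

theorem eq_zero_of_norm_sub_smul_le {w u : E} (hu : u ≠ 0) (huw : ⟪u, w⟫ = 0) {a : ℝ}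
    (h : ‖w - a • u‖ ≤ ‖w‖) : a = 0 := by
  have hpyth : ‖w - a • u‖ * ‖w - a • u‖ = ‖w‖ * ‖w‖ + ‖a • u‖ * ‖a • u‖ :=
    norm_sub_sq_eq_norm_sq_add_norm_sq_real (by
      rw [real_inner_smul_right, real_inner_comm, huw, mul_zero])
  have hau : ‖a • u‖ * ‖a • u‖ = 0 := by
    nlinarith [norm_nonneg (w - a • u), norm_nonneg w, mul_self_nonneg ‖a • u‖]
  simpa [hu] using hau

theorem apply_eq_of_mapsTo_of_norm_sub_eq {B : Set E} {d : ℝ}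
    (hd : ∀ x ∈ B, ∀ y ∈ B, ‖x - y‖ ≤ d) {f : E →ₗ[ℝ] ℝ} {u : E} {c : ℝ} (hfu : f u = 1)
    (hf : MapsTo (fun x => x - (f x - c) • u) B B) {p q : E} (hp : p ∈ B) (hq : q ∈ B)
    (hpq : ‖p - q‖ = d) (hu : ⟪u, p - q⟫ = 0) : f p = c := by
  have hu0 : u ≠ 0 := by rintro rfl; simp at hfu
  refine sub_eq_zero.1 (eq_zero_of_norm_sub_smul_le hu0 hu ?_)
  rw [hpq, sub_right_comm]
  exact hd _ (hf hp) q hq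

variable {B : Set E} {r : ℝ}

theorem exists_sub_eq_smul_of_sub_self_eq_closedBall (hr : 0 ≤ r)
    (hB : B - B = closedBall 0 r) {w : E} (hw : ‖w‖ = 1) : ∃ p ∈ B, ∃ q ∈ B, p - q = r • w := by
  have : r • w ∈ B - B := by
    rw [hB, mem_closedBall_zero_iff, norm_smul, hw, mul_one, Real.norm_of_nonneg hr]
  simpa only [Set.mem_sub] using this

/-- Diametral chords orthogonal to `u` lie in the hyperplane onto which one projects along `u`,
which is therefore orthogonal to `u`. -/
theorem IsStableUnderObliqueProjections.exists_mapsTo_orthogonal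
    (hB : IsStableUnderObliqueProjections B) (hr : 0 < r) (hsub : B - B = closedBall 0 r) (u : E) :
    ∃ c : ℝ, (∀ p ∈ B, ∀ q ∈ B, ‖p - q‖ = r → ⟪u, p - q⟫ = 0 → ⟪u, p⟫ = c) ∧
      MapsTo (fun x => x - ((⟪u, x⟫ - c) / ‖u‖ ^ 2) • u) B B := by
  rcases eq_or_ne u 0 with rfl | hu
  · exact ⟨0, by simp, by simp [MapsTo]⟩
  obtain ⟨f, c, hfu, hf⟩ := hB u hu
  have hd : ∀ x ∈ B, ∀ y ∈ B, ‖x - y‖ ≤ r := fun x hx y hy =>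
    mem_closedBall_zero_iff.1 (hsub ▸ sub_mem_sub hx hy)
  have hfw (w : E) (hw : ‖w‖ = 1) (huw : ⟪u, w⟫ = 0) : f w = 0 := by
    obtain ⟨p, hp, q, hq, hpq⟩ := exists_sub_eq_smul_of_sub_self_eq_closedBall hr.le hsub hw
    have hnorm : ‖p - q‖ = r := by rw [hpq, norm_smul, hw, mul_one, Real.norm_of_nonneg hr.le]
    have hinner : ⟪u, p - q⟫ = 0 := by rw [hpq, real_inner_smul_right, huw, mul_zero]
    have hfp := apply_eq_of_mapsTo_of_norm_sub_eq hd hfu hf hp hq hnorm hinner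
    have hfq := apply_eq_of_mapsTo_of_norm_sub_eq hd hfu hf hq hp
      (by rw [norm_sub_rev, hnorm]) (by rw [← neg_sub, inner_neg_right, hinner, neg_zero])
    have : r * f w = 0 := by rw [← smul_eq_mul, ← map_smul, ← hpq, map_sub, hfp, hfq, sub_self]
    simpa [hr.ne'] using this
  have hf_eq := eq_inner_div_of_forall_inner_eq_zero hfu hfw
  have hu2 : ‖u‖ ^ 2 ≠ 0 := by positivity
  refine ⟨c * ‖u‖ ^ 2, fun p hp q hq hnorm hinner => ?_, ?_⟩
  · rw [← apply_eq_of_mapsTo_of_norm_sub_eq hd hfu hf hp hq hnorm hinner, hf_eq]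
    field_simp
  · simpa only [sub_div, mul_div_cancel_right₀ _ hu2, ← hf_eq] using hf

theorem exists_eq_inner_of_forall_exists_eq_inner [FiniteDimensional ℝ E]
    (hE : 2 < Module.rank ℝ E) {ℓ : E → ℝ}
    (h : ∀ w : E, ‖w‖ = 1 → ∃ p : E, ∀ u, ⟪u, w⟫ = 0 → ℓ u = ⟪u, p⟫) :
    ∃ z : E, ∀ u, ℓ u = ⟪u, z⟫ := by
  have hadd (u v : E) : ℓ (u + v) = ℓ u + ℓ v := by
    obtain ⟨w, hw, hu, hv⟩ := exists_norm_eq_one_inner_eq_zero hE u v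
    obtain ⟨p, hp⟩ := h w hw
    rw [hp u hu, hp v hv, hp _ (by rw [inner_add_left, hu, hv, add_zero]), inner_add_left]
  have hsmul (a : ℝ) (u : E) : ℓ (a • u) = a • ℓ u := by
    obtain ⟨w, hw, hu, -⟩ := exists_norm_eq_one_inner_eq_zero hE u u
    obtain ⟨p, hp⟩ := h w hw
    rw [hp u hu, hp _ (by rw [real_inner_smul_left, hu, mul_zero]), real_inner_smul_left,
      smul_eq_mul]
  let L : E →ₗ[ℝ] ℝ := { toFun := ℓ, map_add' := hadd, map_smul' := hsmul }
  have := FiniteDimensional.complete ℝ E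
  refine ⟨(InnerProductSpace.toDual ℝ E).symm L.toContinuousLinearMap, fun u => ?_⟩
  rw [real_inner_comm, InnerProductSpace.toDual_symm_apply]
  rfl

theorem IsStableUnderObliqueProjections.exists_mapsTo_starProjection [FiniteDimensional ℝ E]
    (hB : IsStableUnderObliqueProjections B) (hE : 2 < Module.rank ℝ E) (hr : 0 < r)
    (hsub : B - B = closedBall 0 r) :
    ∃ z : E, ∀ u, MapsTo (ℝ ∙ u)ᗮ.starProjection (-z +ᵥ B) (-z +ᵥ B) := by
  choose c hc hmaps using hB.exists_mapsTo_orthogonal hr hsub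
  obtain ⟨z, hz⟩ : ∃ z : E, ∀ u, c u = ⟪u, z⟫ := by
    refine exists_eq_inner_of_forall_exists_eq_inner hE fun w hw => ?_
    obtain ⟨p, hp, q, hq, hpq⟩ := exists_sub_eq_smul_of_sub_self_eq_closedBall hr.le hsub hw
    refine ⟨p, fun u huw => (hc u p hp q hq ?_ ?_).symm⟩
    · rw [hpq, norm_smul, hw, mul_one, Real.norm_of_nonneg hr.le]
    · rw [hpq, real_inner_smul_right, huw, mul_zero]
  refine ⟨z, fun u => ?_⟩
  rintro _ ⟨x, hx, rfl⟩
  refine ⟨_, hmaps u hx, ?_⟩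
  simp only [vadd_eq_add, Submodule.starProjection_orthogonal_val, hz, inner_add_right,
    Submodule.starProjection_singleton, inner_neg_right, RCLike.ofReal_real_eq_id, id]
  module

theorem starProjection_rotate {x v : E} (hxv : ⟪x, v⟫ = 0) (hv : ‖v‖ = ‖x‖) (s t : ℝ) :
    (ℝ ∙ (Real.cos t • v - Real.sin t • x))ᗮ.starProjection (Real.cos s • x + Real.sin s • v) =
      Real.cos (t - s) • (Real.cos t • x + Real.sin t • v) := by
  refine Submodule.eq_starProjection_of_mem_orthogonal'
    (z := (-Real.sin (t - s)) • (Real.cos t • v - Real.sin t • x)) ?_ ?_ ?_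
  · refine Submodule.smul_mem _ _ (Submodule.mem_orthogonal_singleton_iff_inner_right.2 ?_)
    simp only [inner_sub_left, inner_add_right, real_inner_smul_left, real_inner_smul_right,
      real_inner_self_eq_norm_sq, hv, hxv, real_inner_comm x v]
    ring
  · exact Submodule.le_orthogonal_orthogonal _
      (Submodule.smul_mem _ _ (Submodule.mem_span_singleton_self _))
  · have hcos : Real.cos s = Real.cos (t - (t - s)) := by rw [sub_sub_cancel]
    have hsin : Real.sin s = Real.sin (t - (t - s)) := by rw [sub_sub_cancel]
    rw [Real.cos_sub] at hcos
    rw [Real.sin_sub] at hsin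
    rw [hcos, hsin]
    module

/-- A rotation is a limit of compositions of many orthogonal projections onto slowly turning
lines of the plane. -/
theorem rotate_mem_of_mapsTo_starProjection {C : Set E} (hC : IsClosed C)
    (h : ∀ u, MapsTo (ℝ ∙ u)ᗮ.starProjection C C) {x v : E} (hx : x ∈ C) (hxv : ⟪x, v⟫ = 0)
    (hv : ‖v‖ = ‖x‖) {t : ℝ} (ht : 0 ≤ t) : Real.cos t • x + Real.sin t • v ∈ C := by
  let S (t : ℝ) : Set ℝ := {σ | σ • (Real.cos t • x + Real.sin t • v) ∈ C ∧ |σ| ≤ 1}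
  suffices 1 ∈ S t by simpa [S] using this
  refine mem_of_forall_exists_ge (D := id) (K := 1 / 2) ht (by simpa [S] using hx)
    (fun σ hσ => (abs_le.1 hσ.2).2) ?_ fun s t _ _ _ σ ⟨hσC, hσ⟩ => ?_
  · exact (hC.preimage (by fun_prop)).inter (isClosed_le continuous_abs continuous_const)
  refine ⟨σ * Real.cos (t - s), ⟨?_, ?_⟩, ?_⟩
  · rw [mul_smul, ← starProjection_rotate hxv hv, ← map_smul]
    exact h _ hσC
  · rw [abs_mul]
    exact mul_le_one₀ hσ (abs_nonneg _) (Real.abs_cos_le_one _)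
  · have hcos := Real.one_sub_sq_div_two_le_cos (x := t - s)
    have := mul_le_mul_of_nonneg_right (abs_le.1 hσ).2 (sub_nonneg.2 (Real.cos_le_one (t - s)))
    simp only [id]
    linarith

theorem neg_mem_of_mapsTo_starProjection (hE : 2 < Module.rank ℝ E) {C : Set E} (hC : IsClosed C)
    (h : ∀ u, MapsTo (ℝ ∙ u)ᗮ.starProjection C C) {x : E} (hx : x ∈ C) : -x ∈ C := by
  obtain ⟨w, hw, hxw, -⟩ := exists_norm_eq_one_inner_eq_zero hE x x
  simpa using rotate_mem_of_mapsTo_starProjection hC h hx (v := ‖x‖ • w)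
    (by rw [real_inner_smul_right, hxw, mul_zero]) (by rw [norm_smul, hw, norm_norm, mul_one])
    Real.pi_pos.le

theorem eq_closedBall_of_sub_self_eq_closedBall {C : Set E} (hC : Convex ℝ C)
    (hneg : ∀ x ∈ C, -x ∈ C) (hr : 0 ≤ r) (h : C - C = closedBall 0 (2 * r)) :
    C = closedBall 0 r := by
  have hneg_eq : -C = C := Subset.antisymm (fun x hx => by simpa using hneg _ hx) hneg
  have htwo : (2 : ℝ) • C = (2 : ℝ) • closedBall 0 r := calc
    (2 : ℝ) • C = C + C := by
      rw [← one_add_one_eq_two, hC.add_smul zero_le_one zero_le_one, one_smul]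
    _ = C - C := by rw [sub_eq_add_neg, hneg_eq]
    _ = closedBall 0 (2 * r) := h
    _ = (2 : ℝ) • closedBall 0 r := by rw [smul_closedBall _ _ hr, smul_zero, Real.norm_two]
  rw [← inv_smul_smul₀ (two_ne_zero' ℝ) C, htwo, inv_smul_smul₀ two_ne_zero]

theorem IsStableUnderObliqueProjections.eq_closedBall [FiniteDimensional ℝ E]
    (hB : IsStableUnderObliqueProjections B) (hE : 2 < Module.rank ℝ E) (hclosed : IsClosed B)
    (hconv : Convex ℝ B) (hr : 0 < r) (hsub : B - B = closedBall 0 (2 * r)) :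
    ∃ z, B = closedBall z r := by
  obtain ⟨z, hz⟩ := hB.exists_mapsTo_starProjection hE (by positivity) hsub
  have hvadd : (-z +ᵥ B) - (-z +ᵥ B) = closedBall 0 (2 * r) := by
    rw [← hsub, ← singleton_vadd, vadd_eq_add, add_sub_add_comm, singleton_sub_singleton, sub_self,
      singleton_zero, zero_add]
  have hball : -z +ᵥ B = closedBall 0 r :=
    eq_closedBall_of_sub_self_eq_closedBall (hconv.vadd _)
      (fun _ => neg_mem_of_mapsTo_starProjection hE (hclosed.vadd _) hz) hr.le hvadd
  exact ⟨z, by rw [← vadd_neg_vadd z B, hball, vadd_closedBall, vadd_eq_add, add_zero]⟩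

theorem exists_affineEquiv_image_closedBall_zero_one {F : Type*} [NormedAddCommGroup F]
    [NormedSpace ℝ F] (z : F) {r : ℝ} (hr : 0 < r) :
    ∃ T : F ≃ᵃ[ℝ] F, T '' closedBall 0 1 = closedBall z r := by
  refine ⟨(LinearEquiv.smulOfNeZero ℝ F r hr.ne').toAffineEquiv.trans (.constVAdd ℝ F z), ?_⟩
  rw [← affinity_unitClosedBall hr.le, ← image_smul, ← image_vadd, image_image]
  rfl

theorem IsStableUnderObliqueProjections.exists_affineEquiv {F : Type*} [NormedAddCommGroup F]
    [NormedSpace ℝ F] (hF : finrank ℝ F = 3) {B : Set F} (hB : IsStableUnderObliqueProjections B)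
    (hcomp : IsCompact B) (hconv : Convex ℝ B) (hint : (interior B).Nonempty) :
    ∃ T : EuclideanSpace ℝ (Fin 3) ≃ᵃ[ℝ] F, B = T '' closedBall 0 1 := by
  obtain ⟨S, hS⟩ := exists_linearEquiv_image_sub_image_eq_closedBall hF hcomp hconv hint hB
  have : FiniteDimensional ℝ F := .of_finrank_eq_succ hF
  obtain ⟨z, hz⟩ := (hB.image S).eq_closedBall (r := 1 / 2)
    (by rw [← finrank_eq_rank, finrank_euclideanSpace_fin]; norm_num)
    (hcomp.image S.toLinearMap.continuous_of_finiteDimensional).isClosed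
    (hconv.linear_image S.toLinearMap) (by norm_num) (by rw [hS]; norm_num)
  obtain ⟨T, hT⟩ := exists_affineEquiv_image_closedBall_zero_one z (one_half_pos (α := ℝ))
  refine ⟨T.trans S.symm.toAffineEquiv, ?_⟩
  calc B = S.symm '' (S '' B) := by simp [image_image]
    _ = S.symm '' (T '' closedBall 0 1) := by rw [hz, hT]
    _ = T.trans S.symm.toAffineEquiv '' closedBall 0 1 := image_image _ _ _

end ConstantWidth

section SupportingLines

theorem exists_apply_mem_frontier {X Y : Type*} [TopologicalSpace X] [PreconnectedSpace X]
    [TopologicalSpace Y] {g : X → Y} (hg : Continuous g) {B : Set Y} {a b : X} (ha : g a ∈ B)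
    (hb : g b ∉ B) : ∃ c, g c ∈ frontier B := by
  have hfrontier : (frontier (g ⁻¹' B)).Nonempty :=
    nonempty_frontier_iff.2 ⟨⟨a, ha⟩, fun h => hb (h.symm ▸ mem_univ b : b ∈ g ⁻¹' B)⟩
  exact hfrontier.mono (hg.frontier_preimage_subset B)

theorem exists_add_smul_mem_frontier {E : Type*} [NormedAddCommGroup E] [NormedSpace ℝ E]
    {B : Set E} (hB : Bornology.IsBounded B) {q u : E} (hq : q ∈ B) (hu : u ≠ 0) :
    ∃ t : ℝ, q + t • u ∈ frontier B := by
  obtain ⟨R, hR⟩ := hB.subset_closedBall q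
  have hout : q + ((|R| + 1) / ‖u‖) • u ∉ B := fun hmem => by
    have hle : ‖((|R| + 1) / ‖u‖) • u‖ ≤ R := by simpa using hR hmem
    rw [norm_smul, Real.norm_of_nonneg (by positivity),
      div_mul_cancel₀ _ (norm_ne_zero_iff.2 hu)] at hle
    linarith [le_abs_self R]
  exact exists_apply_mem_frontier (g := fun t : ℝ => q + t • u) (a := 0) (by fun_prop)
    (by simpa using hq) hout

theorem mapsTo_oblique_projection_of_forall_frontier {E : Type*} [AddCommGroup E] [Module ℝ E]
    [TopologicalSpace E] [IsTopologicalAddGroup E] [ContinuousSMul ℝ E] {B : Set E}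
    (hclosed : IsClosed B) (hconv : Convex ℝ B) {f : E →ₗ[ℝ] ℝ} {q u : E} (hfu : f u = 1)
    (hq : q ∈ interior B)
    (h : ∀ p ∈ frontier B, f p = f q → ∀ t : ℝ, p + t • u ∉ interior B) :
    MapsTo (fun x => x - (f x - f q) • u) B B := by
  intro x hx
  by_contra hout
  set y : E := x - (f x - f q) • u with hy
  obtain ⟨⟨t, ht⟩, hp⟩ := exists_apply_mem_frontier (X := Icc (0 : ℝ) 1)
    (g := fun t => q + (t : ℝ) • (y - q)) (a := 0) (b := 1) (by fun_prop)
    (by simpa using interior_subset hq) (by simpa using hout)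
  have ht1 : t ≠ 1 := by
    rintro rfl
    exact hout (by simpa using hclosed.frontier_subset hp)
  have hint : x + (1 - t) • (q - x) ∈ interior B := hconv.add_smul_sub_mem_interior hx hq
    ⟨sub_pos.2 (lt_of_le_of_ne ht.2 ht1), by linarith [ht.1]⟩
  refine h _ hp (by simp [hy, hfu]) (t * (f x - f q)) ?_
  convert hint using 1
  rw [hy]
  module

theorem WeakBlaschke.isStableUnderObliqueProjections {B : Set (EuclideanSpace ℝ (Fin 3))}
    (hB : WeakBlaschke B) (hcomp : IsCompact B) (hconv : Convex ℝ B) :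
    IsStableUnderObliqueProjections B := by
  intro u hu
  obtain ⟨H, hH, x, ⟨q, ⟨h, hh, rfl⟩, hq⟩, hsupp⟩ := hB u hu
  have huH : u ∉ H := fun huH => by
    obtain ⟨t, ht⟩ := exists_add_smul_mem_frontier hcomp.isBounded (interior_subset hq) hu
    refine hsupp _ ⟨⟨h + t • u, H.add_mem hh (H.smul_mem t huH), ?_⟩, ht⟩ (-t) ?_
    · exact add_right_comm _ _ _
    · simpa using hq
  obtain ⟨f, hfu, rfl⟩ := exists_linearMap_ker_eq_of_notMem
    (by rw [hH, finrank_euclideanSpace_fin]) huH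
  refine ⟨f, f (h + x), hfu, mapsTo_oblique_projection_of_forall_frontier hcomp.isClosed hconv
    hfu hq fun p hp hfp => hsupp p ⟨⟨p - x, ?_, sub_add_cancel p x⟩, hp⟩⟩
  simpa [sub_eq_zero, LinearMap.mem_ker.1 hh] using hfp

end SupportingLines

/-- A convex body in ℝ³ with the weak Blaschke property is an ellipsoid. -/
theorem stmt_17 (B : Set (EuclideanSpace ℝ (Fin 3)))
    (hBcomp : IsCompact B) (hBconv : Convex ℝ B)
    (hBint : (interior B).Nonempty) (hB0 : (0 : EuclideanSpace ℝ (Fin 3)) ∈ B)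
    (hbla : WeakBlaschke B) :
    ∃ T : EuclideanSpace ℝ (Fin 3) ≃ᵃ[ℝ] EuclideanSpace ℝ (Fin 3),
      B = T '' Metric.closedBall 0 1 := by
  exact (hbla.isStableUnderObliqueProjections hBcomp hBconv).exists_affineEquiv
    finrank_euclideanSpace_fin hBcomp hBconv hBint
end

section
/- Let B ⊆ ℝ³ be a convex body with the weak Blaschke property. Then B has the weak dual Blaschke property: for every two-dimensional linear subspace H ⊆ ℝ³ there exist a vector x ∈ ℝ³ and a nonzero vector u ∈ ℝ³ such that the affine plane H + x meets the interior of B and every point p ∈ (H + x) ∩ ∂B lies on a B-supporting line with direction u. -/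
/-!
Call a hyperplane `{a = c}` with `a u = 1` a shadow section of `B` along `u` if the projection along
`u` onto it maps `B` into itself. For hyperplanes through the interior of `B` this says exactly that
all boundary points on the hyperplane lie on supporting lines of direction `u`. In dimension at least
three, if every direction has a shadow section through the interior, no shadow section is degenerate:
otherwise `B` would have a facet whose boundary is flat as seen from every direction in the facet,
which fails for the direction from a relative interior point to an extreme point.

It remains to find, for a given functional `f ≠ 0`, a direction `u` with `f u = 1` along which `f`
itself defines a shadow section. Let `V u` be the volume of the part of `B + ℝ u` in the slab
`0 ≤ f ≤ 1`, that is, the area of the shadow of `B` along `u` on `ker f`. If `a` defines a shadow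
section along `u`, a transvection of determinant `a v` shows `|a v| * V u ≤ V v`, so `V u • a` is a
subgradient of `V` at `u`. As `V` is coercive, it has a minimizer `u₀`. If `f` did not belong to the
compact convex set of functionals defining shadow sections along `u₀`, a separating direction `d`
with `f d = 0` would make `V (u₀ + t • d) < V u₀` for small `t > 0`.
-/

open Filter Metric Module MeasureTheory Set Topology

lemma isPreconnected_inter_frontier_nonempty {X : Type*} [TopologicalSpace X] {s t : Set X}
    (ht : IsPreconnected t) (hts : (t ∩ s).Nonempty) (hts' : (t ∩ sᶜ).Nonempty) :
    (t ∩ frontier s).Nonempty := by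
  by_contra hempty
  have hdisj : ∀ x ∈ t, x ∉ frontier s := fun x hx hxs => hempty ⟨x, hx, hxs⟩
  have hint : ∀ x ∈ t, x ∈ s → x ∈ interior s := fun x hx hxs => by
    by_contra h
    exact hdisj x hx ⟨subset_closure hxs, h⟩
  have hext : ∀ x ∈ t, x ∉ s → x ∈ (closure s)ᶜ := fun x hx hxs h =>
    hdisj x hx ⟨h, fun h' => hxs (interior_subset h')⟩
  obtain ⟨x, hx, hxs⟩ := hts
  obtain ⟨y, hy, hys⟩ := hts'
  obtain ⟨z, -, hz, hz'⟩ := ht _ _ isOpen_interior isClosed_closure.isOpen_compl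
    (fun z hz => (em (z ∈ s)).imp (hint z hz) (hext z hz)) ⟨x, hx, hint x hx hxs⟩
    ⟨y, hy, hext y hy hys⟩
  exact hz' (interior_subset_closure hz)

section Normed

variable {E : Type*} [NormedAddCommGroup E] [NormedSpace ℝ E]

lemma exists_mem_openSegment_frontier {B : Set E} {o p : E} (hB : IsClosed B)
    (ho : o ∈ interior B) (hp : p ∉ B) : ∃ z ∈ openSegment ℝ o p, z ∈ frontier B := by
  obtain ⟨z, hz, hzB⟩ := isPreconnected_inter_frontier_nonempty
    (convex_segment (𝕜 := ℝ) o p).isPreconnected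
    ⟨o, left_mem_segment ℝ o p, interior_subset ho⟩ ⟨p, right_mem_segment ℝ o p, hp⟩
  refine ⟨z, mem_openSegment_of_ne_left_right ?_ ?_ hz, hzB⟩
  · rintro rfl
    exact hzB.2 ho
  · rintro rfl
    exact hp (hB.frontier_subset hzB)

lemma isCompact_preimage_line {K : Set E} (hK : IsCompact K) (q : E) {v : E} (hv : v ≠ 0) :
    IsCompact ((fun t : ℝ => q + t • v) ⁻¹' K) :=
  ((Homeomorph.addLeft q).isClosedEmbedding.comp
    (isClosedEmbedding_smul_left hv)).isCompact_preimage hK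

lemma exists_last_mem_ray {K : Set E} (hK : IsCompact K) {q v : E} (hq : q ∈ K) (hv : v ≠ 0) :
    ∃ t : ℝ, 0 ≤ t ∧ q + t • v ∈ K ∧ ∀ s : ℝ, q + s • v ∈ K → s ≤ t := by
  obtain ⟨t, htK, ht⟩ := (isCompact_preimage_line hK q hv).exists_isGreatest ⟨0, by simpa⟩
  exact ⟨t, ht (by simpa), htK, fun s hs => ht hs⟩

/-! ### Shadow sections -/

/-- The translate `H + x` meets the interior of `B`, and every point of `(H + x) ∩ ∂B` lies on a
`B`-supporting line of direction `u`. This is the condition on hyperplanes in both the weak Blaschke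
property and its dual. -/
def IsSupportedSection (B : Set E) (H : Submodule ℝ E) (x u : E) : Prop :=
  (((fun h => h + x) '' (H : Set E)) ∩ interior B).Nonempty ∧
    ∀ p ∈ ((fun h => h + x) '' (H : Set E)) ∩ frontier B, ∀ t : ℝ, p + t • u ∉ interior B

/-- The hyperplane `{a = c}`, transverse to `u`, cuts `B` in the shadow of `B` along `u`: the
projection along `u` onto the hyperplane maps `B` into itself. The functional is normalized by
`a u = 1`. -/
structure IsShadowSection (B : Set E) (u : E) (a : StrongDual ℝ E) (c : ℝ) : Prop where
  apply_eq_one : a u = 1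
  proj_mem : ∀ b ∈ B, b + (c - a b) • u ∈ B

lemma mem_image_add_right_ker_iff {a : StrongDual ℝ E} {x p : E} :
    p ∈ (fun h => h + x) '' (LinearMap.ker a.toLinearMap : Set E) ↔ a p = a x := by
  simp only [image_add_right, mem_preimage, SetLike.mem_coe, LinearMap.mem_ker,
    ContinuousLinearMap.coe_coe, map_add, map_neg]
  rw [← sub_eq_add_neg, sub_eq_zero]

lemma isSupportedSection_ker_iff {B : Set E} {a : StrongDual ℝ E} {x u : E} :
    IsSupportedSection B (LinearMap.ker a.toLinearMap) x u ↔ (∃ o ∈ interior B, a o = a x) ∧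
      ∀ p ∈ frontier B, a p = a x → ∀ t : ℝ, p + t • u ∉ interior B := by
  simp only [IsSupportedSection, Set.Nonempty, mem_inter_iff, mem_image_add_right_ker_iff, and_imp]
  grind

lemma apply_ne_zero_of_forall_frontier {B : Set E} (hB : IsCompact B) {a : StrongDual ℝ E}
    {u o : E} (hu : u ≠ 0) (ho : o ∈ interior B)
    (hsupp : ∀ p ∈ frontier B, a p = a o → ∀ t : ℝ, p + t • u ∉ interior B) : a u ≠ 0 := by
  intro hau
  obtain ⟨s, hs⟩ : ∃ s : ℝ, o + s • u ∉ B :=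
    (ne_univ_iff_exists_notMem _).1 (isCompact_preimage_line hB o hu).ne_univ
  obtain ⟨_, ⟨α, β, -, -, hαβ, rfl⟩, hz⟩ := exists_mem_openSegment_frontier hB.isClosed ho hs
  have hz_eq : α • o + β • (o + s • u) = o + (β * s) • u := by
    rw [eq_sub_of_add_eq hαβ]
    module
  rw [hz_eq] at hz
  refine hsupp _ hz (by simp [hau]) (-(β * s)) ?_
  simpa using ho

lemma isShadowSection_of_forall_frontier {B : Set E} (hB : IsClosed B) (hconv : Convex ℝ B)
    {u o : E} {a : StrongDual ℝ E} (hau : a u = 1) (ho : o ∈ interior B)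
    (hsupp : ∀ p ∈ frontier B, a p = a o → ∀ t : ℝ, p + t • u ∉ interior B) :
    IsShadowSection B u a (a o) := by
  refine ⟨hau, fun b hb => ?_⟩
  by_contra hproj
  obtain ⟨_, ⟨α, β, hα, hβ, hαβ, rfl⟩, hz⟩ := exists_mem_openSegment_frontier hB ho hproj
  refine hsupp _ hz ?_ (-(β * (a o - a b))) ?_
  · simp only [map_add, map_smul, smul_eq_mul, hau]
    linear_combination a o * hαβ
  · convert hconv.openSegment_interior_self_subset_interior ho hb ⟨α, β, hα, hβ, hαβ, rfl⟩ using 1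
    module

namespace IsShadowSection

variable {B : Set E} {u : E} {a : StrongDual ℝ E} {c : ℝ}

lemma neg (h : IsShadowSection B u a c) : IsShadowSection B (-u) (-a) (-c) where
  apply_eq_one := by simp [h.apply_eq_one]
  proj_mem b hb := by
    convert h.proj_mem b hb using 1
    rw [neg_apply]
    module

lemma ne_zero (h : IsShadowSection B u a c) : u ≠ 0 := by
  rintro rfl
  simpa using h.apply_eq_one

lemma add_smul_notMem_interior (h : IsShadowSection B u a c) (hconv : Convex ℝ B) {o p : E}
    (ho : o ∈ interior B) (hao : a o = c) (hp : p ∈ frontier B) (hap : a p = c) (t : ℝ) :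
    p + t • u ∉ interior B := by
  intro hpt
  have hnear : ∀ᶠ ε : ℝ in 𝓝[>] 0, p + t • u + ε • (p - o) ∈ interior B :=
    (ContinuousAt.eventually_mem (by fun_prop)
      (isOpen_interior.mem_nhds (by simpa))).filter_mono nhdsWithin_le_nhds
  obtain ⟨ε, hεB, hε⟩ := (hnear.and self_mem_nhdsWithin).exists
  have hε : 0 < ε := hε
  -- Projecting a point slightly beyond `p + t • u` gives a point beyond `p` as seen from `o`.
  have hbeyond : p + ε • (p - o) ∈ B := by
    convert h.proj_mem _ (interior_subset hεB) using 1
    simp only [map_add, map_sub, map_smul, smul_eq_mul, h.apply_eq_one, hao, hap]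
    module
  refine hp.2 (hconv.openSegment_interior_self_subset_interior ho hbeyond
    ⟨ε / (1 + ε), 1 / (1 + ε), div_pos hε (by positivity), by positivity, by field, ?_⟩)
  match_scalars <;> field

lemma isSupportedSection (h : IsShadowSection B u a c) (hconv : Convex ℝ B) {o : E}
    (ho : o ∈ interior B) (hao : a o = c) :
    IsSupportedSection B (LinearMap.ker a.toLinearMap) o u :=
  isSupportedSection_ker_iff.2 ⟨⟨o, ho, rfl⟩, fun _ hp hap =>
    h.add_smul_notMem_interior hconv ho hao hp (hap.trans hao)⟩


end IsShadowSection

lemma le_apply_of_forall_interior_ne {B : Set E} (hconv : Convex ℝ B) {a : StrongDual ℝ E} {c : ℝ}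
    {b₀ : E} (hb₀ : b₀ ∈ interior B) (hab₀ : c < a b₀) (hmiss : ∀ o ∈ interior B, a o ≠ c) :
    ∀ b ∈ B, c ≤ a b := by
  have hle : interior B ⊆ {x | c ≤ a x} := by
    intro o ho
    by_contra hlt
    obtain ⟨x, hx, hax⟩ := hconv.interior.isPreconnected.intermediate_value ho hb₀
      a.continuous.continuousOn ⟨le_of_not_ge hlt, hab₀.le⟩
    exact hmiss x hx hax
  intro b hb
  refine closure_minimal hle (isClosed_le continuous_const a.continuous) ?_
  rw [hconv.closure_interior_eq_closure_of_nonempty_interior ⟨b₀, hb₀⟩]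
  exact subset_closure hb

/-! ### Shadow sections are nondegenerate -/

/-- `q` is an algebraic interior point of `F` relative to `q + W`, stated symmetrically so that `q`
is the midpoint of a chord of `F` in every direction of `W`. -/
def IsInternalPoint (F : Set E) (W : Submodule ℝ E) (q : E) : Prop :=
  ∀ w ∈ W, ∃ s : ℝ, 0 < s ∧ q + s • w ∈ F ∧ q - s • w ∈ F

lemma IsInternalPoint.mem {F : Set E} {W : Submodule ℝ E} {q : E} (h : IsInternalPoint F W q) :
    q ∈ F := by
  obtain ⟨s, -, hs, -⟩ := h 0 W.zero_mem
  simpa using hs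

lemma IsInternalPoint.notMem_extremePoints {F : Set E} {W : Submodule ℝ E} {q : E}
    (h : IsInternalPoint F W q) (hW : W ≠ ⊥) : q ∉ F.extremePoints ℝ := by
  intro hq
  obtain ⟨w, hwW, hw⟩ := W.exists_mem_ne_zero_of_ne_bot hW
  obtain ⟨s, hs, hadd, hsub⟩ := h w hwW
  have := hq.2 hadd hsub ⟨1 / 2, 1 / 2, by norm_num, by norm_num, by norm_num, by module⟩
  exact smul_ne_zero hs.ne' hw (by simpa using this)

lemma exists_mem_notMem_span_singleton {W : Submodule ℝ E} (hW : 2 ≤ finrank ℝ W) (v : E) :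
    ∃ w ∈ W, w ∉ ℝ ∙ v := by
  by_contra! hle
  have := (Submodule.finrank_mono (t := ℝ ∙ v) hle).trans (finrank_span_le_card {v})
  simp only [toFinset_singleton, Finset.card_singleton] at this
  omega

/-- The condition on `g` says that the part of the boundary of `F` facing the direction `v` lies in
the hyperplane `{g = γ}`. -/
lemma IsInternalPoint.exists_direction_apply_eq_zero {F : Set E} (hF : IsCompact F)
    {W : Submodule ℝ E} (hW : 2 ≤ finrank ℝ W) (hFW : ∀ x ∈ F, ∀ y ∈ F, x - y ∈ W) {q : E}
    (hq : IsInternalPoint F W q) :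
    ∃ v ∈ W, v ≠ 0 ∧ ∀ (g : StrongDual ℝ E) (γ : ℝ),
      (∀ x ∈ F, ∃ t : ℝ, 0 ≤ t ∧ x + t • v ∈ F ∧ g (x + t • v) = γ) → g v = 0 := by
  obtain ⟨e, he⟩ := hF.extremePoints_nonempty ⟨q, hq.mem⟩
  have hW_ne : W ≠ ⊥ := by
    rintro rfl
    simp at hW
  have hqe : q ≠ e := fun h => hq.notMem_extremePoints hW_ne (h ▸ he)
  refine ⟨e - q, hFW e he.1 q hq.mem, sub_ne_zero.2 hqe.symm, fun g γ hflat => ?_⟩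
  by_contra hgv
  set v := e - q with hv
  have he_eq : e = q + v := by rw [hv, add_sub_cancel]
  have hge : g e = γ := by
    obtain ⟨t, ht, htF, htγ⟩ := hflat e he.1
    rcases ht.eq_or_lt with rfl | ht
    · simpa using htγ
    · exact absurd (he.2 hq.mem htF ⟨t / (1 + t), 1 / (1 + t), by positivity, by positivity,
        by field, by rw [he_eq]; match_scalars <;> field⟩) hqe
  obtain ⟨w, hwW, hwv⟩ := exists_mem_notMem_span_singleton hW v
  obtain ⟨s, hs, hadd, hsub⟩ := hq w hwW
  obtain ⟨t₁, -, ht₁F, ht₁γ⟩ := hflat _ hadd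
  obtain ⟨t₂, -, ht₂F, ht₂γ⟩ := hflat _ hsub
  -- The midpoint of these two points lies on the line `q + ℝ v` and on `{g = γ}`, so it is `e`.
  have ht : t₂ = 2 - t₁ := by
    rw [he_eq] at hge
    simp only [map_add, map_sub, map_smul, smul_eq_mul] at hge ht₁γ ht₂γ
    exact mul_right_cancel₀ hgv (by linarith)
  have heq : q + s • w + t₁ • v = e := he.2 ht₁F ht₂F
    ⟨1 / 2, 1 / 2, by norm_num, by norm_num, by norm_num, by rw [ht, he_eq]; module⟩
  refine hwv (Submodule.mem_span_singleton.2 ⟨s⁻¹ * (1 - t₁), ?_⟩)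
  have hsw : s • w = (1 - t₁) • v := by
    linear_combination (norm := module) heq + he_eq
  rw [mul_smul, ← hsw, inv_smul_smul₀ hs.ne']

namespace IsShadowSection

variable {B : Set E} {u : E} {a : StrongDual ℝ E} {c : ℝ}

lemma isInternalPoint_face (h : IsShadowSection B u a c) {b₀ : E} (hb₀ : b₀ ∈ interior B) :
    IsInternalPoint (B ∩ {x | a x = c}) (LinearMap.ker a.toLinearMap) (b₀ + (c - a b₀) • u) := by
  intro w hw
  have haw : a w = 0 := hw
  have hnear : ∀ᶠ s : ℝ in 𝓝[>] 0, b₀ + s • w ∈ interior B ∧ b₀ - s • w ∈ interior B :=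
    (ContinuousAt.eventually_mem (f := fun s : ℝ => b₀ + s • w) (by fun_prop)
      (isOpen_interior.mem_nhds (by simpa)) |>.and <|
    ContinuousAt.eventually_mem (f := fun s : ℝ => b₀ - s • w) (by fun_prop)
      (isOpen_interior.mem_nhds (by simpa))).filter_mono nhdsWithin_le_nhds
  obtain ⟨s, ⟨hadd, hsub⟩, hs⟩ := (hnear.and self_mem_nhdsWithin).exists
  refine ⟨s, hs, ⟨?_, ?_⟩, ⟨?_, ?_⟩⟩
  · convert h.proj_mem _ (interior_subset hadd) using 1
    simp only [map_add, map_smul, haw, smul_zero, add_zero]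
    module
  · simp [haw, h.apply_eq_one]
  · convert h.proj_mem _ (interior_subset hsub) using 1
    simp only [map_sub, map_smul, haw, smul_zero, sub_zero]
    module
  · simp [haw, h.apply_eq_one]

/-- Projecting a point of the face `{a = c}` along `u + v` and then back along `u` moves it within
the face in the direction `v`, and moves the last point in that direction by zero. -/
lemma exists_mem_face_apply_eq (h : IsShadowSection B u a c) (hB : IsCompact B)
    (hface : ∀ b ∈ B, c ≤ a b) {v : E} (hv : v ≠ 0) (hav : a v = 0) {a' : StrongDual ℝ E} {c' : ℝ}
    (h' : IsShadowSection B (u + v) a' c') {q : E} (hq : q ∈ B ∩ {x | a x = c}) :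
    ∃ t : ℝ, 0 ≤ t ∧ q + t • v ∈ B ∩ {x | a x = c} ∧ a' (q + t • v) = c' := by
  obtain ⟨t, ht, htB, hlast⟩ := exists_last_mem_ray hB hq.1 hv
  have hat : a (q + t • v) = c := by simpa [hav] using hq.2
  refine ⟨t, ht, ⟨htB, hat⟩, ?_⟩
  set s := c' - a' (q + t • v)
  have hproj : q + t • v + s • (u + v) ∈ B := h'.proj_mem _ htB
  have haproj : a (q + t • v + s • (u + v)) = c + s := by
    rw [map_add, hat, map_smul, map_add, h.apply_eq_one, hav, add_zero, smul_eq_mul, mul_one]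
  have hs_nonneg : 0 ≤ s := by linarith [hface _ hproj]
  have hback : q + (t + s) • v ∈ B := by
    convert h.proj_mem _ hproj using 1
    rw [haproj]
    module
  linarith [hlast _ hback]

end IsShadowSection

lemma eq_of_eqOn_face {B : Set E} {a a' : StrongDual ℝ E} {c c' : ℝ} {u q : E} (hau : a u = 1)
    (ha'u : a' u = 1)
    (hq : IsInternalPoint (B ∩ {x | a x = c}) (LinearMap.ker a.toLinearMap) q)
    (hface : ∀ x ∈ B ∩ {x | a x = c}, a' x = c') : a' = a ∧ c' = c := by
  have hker : ∀ w, a w = 0 → a' w = 0 := by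
    intro w hw
    obtain ⟨s, hs, hadd, -⟩ := hq w hw
    have := (hface _ hadd).trans (hface _ hq.mem).symm
    simpa [hs.ne'] using this
  have ha : a' = a := by
    ext x
    have := hker (x - a x • u) (by simp [hau])
    rwa [map_sub, map_smul, ha'u, smul_eq_mul, mul_one, sub_eq_zero] at this
  exact ⟨ha, by rw [← hface _ hq.mem, ha, hq.mem.2]⟩

/-- Every direction has a shadow section of `B` through the interior of `B`: the weak Blaschke
property in terms of functionals. -/
def HasShadowSections (B : Set E) : Prop :=
  ∀ u : E, u ≠ 0 → ∃ (a : StrongDual ℝ E) (c : ℝ), IsShadowSection B u a c ∧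
    ∃ o ∈ interior B, a o = c

namespace IsShadowSection

variable [FiniteDimensional ℝ E] {B : Set E} {u : E} {a : StrongDual ℝ E} {c : ℝ}

lemma apply_le_of_forall_interior_ne (h : IsShadowSection B u a c) (hdim : 3 ≤ finrank ℝ E)
    (hB : IsCompact B) (hconv : Convex ℝ B) (hsec : HasShadowSections B)
    (hmiss : ∀ o ∈ interior B, a o ≠ c) {b₀ : E} (hb₀ : b₀ ∈ interior B) : a b₀ ≤ c := by
  by_contra! hab₀
  have hside := le_apply_of_forall_interior_ne hconv hb₀ hab₀ hmiss
  have hq := h.isInternalPoint_face hb₀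
  have ha_ne : a.toLinearMap ≠ 0 := fun h0 => by
    simpa [h0] using (show a.toLinearMap u = 1 from h.apply_eq_one)
  have hker : 2 ≤ finrank ℝ (LinearMap.ker a.toLinearMap) := by
    have := Dual.finrank_ker_add_one_of_ne_zero ha_ne
    omega
  obtain ⟨v, hav, hv, hflat⟩ := hq.exists_direction_apply_eq_zero
    (hB.inter_right (isClosed_eq a.continuous continuous_const)) hker
    (fun x hx y hy => by simp [show a x = c from hx.2, show a y = c from hy.2])
  have hauv : a (u + v) = 1 := by rw [map_add, h.apply_eq_one, show a v = 0 from hav, add_zero]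
  obtain ⟨a', c', h', o, ho, hao⟩ := hsec (u + v) (fun h0 => by simp [h0] at hauv)
  have hlast := fun q hq => h.exists_mem_face_apply_eq hB hside hv hav h' (q := q) hq
  have ha'v : a' v = 0 := hflat a' c' hlast
  obtain ⟨rfl, rfl⟩ := eq_of_eqOn_face hauv h'.apply_eq_one hq fun x hx => by
    obtain ⟨t, -, -, ht⟩ := hlast x hx
    simpa [ha'v] using ht
  exact hmiss o ho hao

theorem exists_mem_interior_apply_eq (h : IsShadowSection B u a c) (hdim : 3 ≤ finrank ℝ E)
    (hB : IsCompact B) (hconv : Convex ℝ B) (hint : (interior B).Nonempty)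
    (hsec : HasShadowSections B) : ∃ o ∈ interior B, a o = c := by
  by_contra! hmiss
  obtain ⟨b₀, hb₀⟩ := hint
  refine hmiss b₀ hb₀ (le_antisymm
    (h.apply_le_of_forall_interior_ne hdim hB hconv hsec hmiss hb₀) ?_)
  simpa using h.neg.apply_le_of_forall_interior_ne hdim hB hconv hsec (by simpa) hb₀

end IsShadowSection

/-! ### The shadow volume -/

section SlabShadow

/-- The part of the cylinder `B + ℝ u` between the hyperplanes `{f = 0}` and `{f = 1}`. When
`f u = 1`, its volume is the area of the projection of `B` to `ker f` along `u`, up to a constant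
depending only on `f`; this avoids a measure on `ker f`. -/
def slabShadow (B : Set E) (f : StrongDual ℝ E) (u : E) : Set E :=
  {x | f x ∈ Icc 0 1 ∧ ∃ t : ℝ, x + t • u ∈ B}

lemma isBounded_slabShadow {B : Set E} (hB : IsCompact B) {f : StrongDual ℝ E} {u : E}
    (hu : f u = 1) : Bornology.IsBounded (slabShadow B f u) := by
  refine ((hB.prod (isCompact_Icc (a := (0 : ℝ)) (b := 1))).image
    (f := fun p => p.1 + (p.2 - f p.1) • u) (by fun_prop)).isBounded.subset ?_
  rintro x ⟨hx, t, ht⟩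
  refine ⟨(x + t • u, f x), ⟨ht, hx⟩, ?_⟩
  simp only [map_add, map_smul, hu, smul_eq_mul, mul_one]
  module

lemma exists_dual_apply_eq_one_add_norm_sub {f : StrongDual ℝ E} {e u : E} (he : f e = 1)
    (hu : f u = 1) : ∃ a : StrongDual ℝ E, a e = 1 ∧ a u = 1 + ‖u - e‖ ∧
      ‖a‖ ≤ 1 + (1 + ‖e‖) * ‖f‖ := by
  obtain ⟨g, hg, hgu⟩ := exists_dual_vector'' ℝ (u - e)
  refine ⟨f + (g - g e • f), by simp [he], ?_, ?_⟩
  · simp only [map_sub, RCLike.ofReal_real_eq_id, id_eq] at hgu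
    simp [hu, ← hgu]
  · have hge : ‖g e‖ ≤ ‖e‖ := g.le_of_opNorm_le hg e |>.trans_eq (one_mul _)
    calc ‖f + (g - g e • f)‖ ≤ ‖f‖ + (‖g‖ + ‖g e • f‖) :=
          (norm_add_le _ _).trans (by gcongr; exact norm_sub_le _ _)
      _ ≤ ‖f‖ + (1 + ‖e‖ * ‖f‖) := by rw [norm_smul]; gcongr
      _ = 1 + (1 + ‖e‖) * ‖f‖ := by ring

variable [FiniteDimensional ℝ E] [MeasurableSpace E] [BorelSpace E] (μ : Measure E)
  [μ.IsAddHaarMeasure]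

lemma abs_apply_mul_measureReal_le {B S : Set E} (hB : IsCompact B) {f a : StrongDual ℝ E} {c : ℝ}
    {u v : E} (hu : f u = 1) (hv : f v = 1) (hau : a u = 1)
    (hS : ∀ x ∈ S, f x ∈ Icc 0 1 ∧ x + (c - a x) • u ∈ B) :
    |a v| * μ.real S ≤ μ.real (slabShadow B f v) := by
  set τ : E →ₗ[ℝ] E := LinearMap.transvection a.toLinearMap (v - u)
  have hτ : ∀ x, τ x = x + a x • (v - u) := fun x => LinearMap.transvection.apply _ _ x
  have hdet : LinearMap.det τ = a v := by
    rw [LinearMap.transvection.det, ContinuousLinearMap.coe_coe, map_sub, hau, add_sub_cancel]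
  have hsub : τ '' S ⊆ (· + (-c) • (v - u)) ⁻¹' slabShadow B f v := by
    rintro _ ⟨x, hx, rfl⟩
    obtain ⟨hfx, hxB⟩ := hS x hx
    refine ⟨by simpa [hτ, hu, hv] using hfx, c - a x, ?_⟩
    convert hxB using 1
    rw [hτ]
    module
  calc |a v| * μ.real S = μ.real (τ '' S) := by
        rw [measureReal_def, measureReal_def, Measure.addHaar_image_linearMap, hdet,
          ENNReal.toReal_mul, ENNReal.toReal_ofReal (abs_nonneg _)]
    _ ≤ μ.real ((· + (-c) • (v - u)) ⁻¹' slabShadow B f v) := by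
        refine measureReal_mono hsub ?_
        rw [measure_preimage_add_right]
        exact (isBounded_slabShadow hB hv).measure_lt_top.ne
    _ = μ.real (slabShadow B f v) := by
        rw [measureReal_def, measure_preimage_add_right, measureReal_def]

lemma IsShadowSection.abs_apply_mul_measureReal_slabShadow_le {B : Set E} (hB : IsCompact B)
    {f a : StrongDual ℝ E} {c : ℝ} {u v : E} (h : IsShadowSection B u a c) (hu : f u = 1)
    (hv : f v = 1) :
    |a v| * μ.real (slabShadow B f u) ≤ μ.real (slabShadow B f v) := by
  refine abs_apply_mul_measureReal_le μ hB hu hv h.apply_eq_one (c := c) ?_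
  rintro x ⟨hfx, t, ht⟩
  refine ⟨hfx, ?_⟩
  convert h.proj_mem _ ht using 1
  simp only [map_add, map_smul, h.apply_eq_one, smul_eq_mul]
  module

/-- A small ball in the slab lies in the shadow of `B` along `e` on every hyperplane `{a = a b₀}`
with `a e = 1` and `‖a‖` bounded; the functional `a` is then chosen to make `a u` large. -/
lemma exists_pos_mul_le_measureReal_slabShadow {B : Set E} (hB : IsCompact B)
    (hint : (interior B).Nonempty) {f : StrongDual ℝ E} {e : E} (he : f e = 1) :
    ∃ κ : ℝ, 0 < κ ∧ ∀ u, f u = 1 → (1 + ‖u - e‖) * κ ≤ μ.real (slabShadow B f u) := by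
  obtain ⟨b₀, hb₀⟩ := hint
  obtain ⟨r, hr, hrB⟩ := Metric.isOpen_iff.1 isOpen_interior _ hb₀
  set M : ℝ := 1 + (1 + ‖e‖) * ‖f‖
  set x₀ : E := b₀ + (1 / 2 - f b₀) • e with hx₀
  set ρ : ℝ := min (r / (1 + M * ‖e‖)) (1 / (2 * M)) with hρ_def
  have hM : 0 < M := by positivity
  have hρ : 0 < ρ := by positivity
  refine ⟨μ.real (ball x₀ ρ), ENNReal.toReal_pos (measure_ball_pos μ _ hρ).ne'
    measure_ball_lt_top.ne, fun u hu => ?_⟩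
  obtain ⟨a, hae, hau, haM⟩ := exists_dual_apply_eq_one_add_norm_sub he hu
  rw [← hau, ← abs_of_pos (show 0 < a u by rw [hau]; positivity)]
  refine abs_apply_mul_measureReal_le μ hB he hu hae (c := a b₀) fun x hx => ?_
  obtain ⟨y, rfl⟩ : ∃ y, x = x₀ + y := ⟨x - x₀, by abel⟩
  rw [mem_ball, dist_self_add_left, hρ_def, lt_min_iff, lt_div_iff₀ (by positivity),
    lt_div_iff₀ (by positivity)] at hx
  constructor
  · have hfM : ‖f‖ ≤ M := by
      simp only [M]
      nlinarith [norm_nonneg e, norm_nonneg f]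
    have hfy : |f y| ≤ 1 / 2 := by
      refine (f.le_of_opNorm_le hfM y).trans ?_
      linarith
    rw [abs_le] at hfy
    simp only [hx₀, map_add, map_smul, he, smul_eq_mul, mem_Icc]
    constructor <;> linarith
  · refine interior_subset (hrB ?_)
    have hproj : x₀ + y + (a b₀ - a (x₀ + y)) • e = b₀ + (y - a y • e) := by
      simp only [hx₀, map_add, map_smul, hae, smul_eq_mul]
      module
    rw [hproj, mem_ball, dist_self_add_left]
    calc ‖y - a y • e‖ ≤ ‖y‖ + ‖a y‖ * ‖e‖ := (norm_sub_le _ _).trans_eq (by rw [norm_smul])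
      _ ≤ ‖y‖ + M * ‖y‖ * ‖e‖ := by gcongr; exact a.le_of_opNorm_le haM y
      _ < r := by linarith

lemma lowerSemicontinuousOn_measureReal_slabShadow {B : Set E} (hB : IsCompact B)
    (hsec : ∀ u : E, u ≠ 0 → ∃ a c, IsShadowSection B u a c) (f : StrongDual ℝ E) :
    LowerSemicontinuousOn (fun u => μ.real (slabShadow B f u)) {u | f u = 1} := by
  intro u hu y hy
  have hu_ne : u ≠ 0 := by
    rintro rfl
    simp at hu
  obtain ⟨a, c, h⟩ := hsec u hu_ne
  have hlim : ContinuousAt (fun v => |a v| * μ.real (slabShadow B f u)) u := by fun_prop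
  have hy' : y < |a u| * μ.real (slabShadow B f u) := by simpa [h.apply_eq_one] using hy
  filter_upwards [(hlim.eventually (lt_mem_nhds hy')).filter_mono nhdsWithin_le_nhds,
    self_mem_nhdsWithin] with v hv hfv
  exact hv.trans_le (h.abs_apply_mul_measureReal_slabShadow_le μ hB hu hfv)

lemma exists_forall_measureReal_slabShadow_le {B : Set E} (hB : IsCompact B)
    (hint : (interior B).Nonempty) (hsec : ∀ u : E, u ≠ 0 → ∃ a c, IsShadowSection B u a c)
    {f : StrongDual ℝ E} (hf : f ≠ 0) : ∃ u₀, f u₀ = 1 ∧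
      ∀ u, f u = 1 → μ.real (slabShadow B f u₀) ≤ μ.real (slabShadow B f u) := by
  obtain ⟨e, he⟩ : ∃ e, f e = 1 :=
    f.toLinearMap.surjective (by exact_mod_cast hf) 1
  obtain ⟨κ, hκ, hcoer⟩ := exists_pos_mul_le_measureReal_slabShadow μ hB hint he
  set K : Set E := {u | f u = 1} ∩ closedBall e (μ.real (slabShadow B f e) / κ)
  have hK_compact : IsCompact K :=
    (isCompact_closedBall _ _).inter_left (isClosed_eq f.continuous continuous_const)
  have heK : e ∈ K := ⟨he, mem_closedBall_self (by positivity)⟩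
  obtain ⟨u₀, hu₀, hmin⟩ := LowerSemicontinuousOn.exists_isMinOn ⟨e, heK⟩ hK_compact
    ((lowerSemicontinuousOn_measureReal_slabShadow μ hB hsec f).mono inter_subset_left)
  refine ⟨u₀, hu₀.1, fun u hu => ?_⟩
  by_cases huK : u ∈ K
  · exact hmin huK
  have hfar : μ.real (slabShadow B f e) < ‖u - e‖ * κ := by
    rw [← div_lt_iff₀ hκ, ← dist_eq_norm]
    exact not_le.1 fun hle => huK ⟨hu, hle⟩
  linarith [isMinOn_iff.1 hmin e heK, hcoer u hu]

end SlabShadow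

/-! ### Minimizing the shadow volume -/

lemma isClosed_setOf_isShadowSection {B : Set E} (hB : IsClosed B) :
    IsClosed {p : E × StrongDual ℝ E × ℝ | IsShadowSection B p.1 p.2.1 p.2.2} := by
  have heq : {p : E × StrongDual ℝ E × ℝ | IsShadowSection B p.1 p.2.1 p.2.2} =
      {p | p.2.1 p.1 = 1} ∩ ⋂ b ∈ B, {p | b + (p.2.2 - p.2.1 b) • p.1 ∈ B} := by
    ext p
    simp only [mem_ofPred_eq, mem_inter_iff, mem_iInter]
    exact ⟨fun h => ⟨h.1, h.2⟩, fun h => ⟨h.1, h.2⟩⟩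
  rw [heq]
  exact (isClosed_eq (by fun_prop) continuous_const).inter <|
    isClosed_biInter fun b _ => hB.preimage (by fun_prop)

lemma convex_setOf_isShadowSection {B : Set E} (hconv : Convex ℝ B) (u : E) :
    Convex ℝ {p : StrongDual ℝ E × ℝ | IsShadowSection B u p.1 p.2} := by
  rintro ⟨a, c⟩ ha ⟨a', c'⟩ ha' α β hα hβ hαβ
  refine ⟨?_, fun b hb => ?_⟩
  · simp [ha.apply_eq_one, ha'.apply_eq_one, hαβ]
  · convert hconv (ha.proj_mem b hb) (ha'.proj_mem b hb) hα hβ hαβ using 1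
    rw [eq_sub_of_add_eq hαβ]
    simp only [Prod.fst_add, Prod.snd_add, Prod.smul_fst, Prod.smul_snd, add_apply,
      smul_apply, smul_eq_mul]
    module

lemma IsShadowSection.abs_sub_le {B : Set E} {f a : StrongDual ℝ E} {c C : ℝ} {u b : E}
    (h : IsShadowSection B u a c) (hu : f u = 1) (hC : ∀ b ∈ B, ‖f b‖ ≤ C) (hb : b ∈ B) :
    |c - a b| ≤ 2 * C := by
  have hproj := hC _ (h.proj_mem b hb)
  have hfb := hC b hb
  simp only [map_add, map_smul, hu, smul_eq_mul, mul_one, Real.norm_eq_abs, abs_le] at *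
  constructor <;> linarith

lemma exists_isCompact_forall_isShadowSection_mem [FiniteDimensional ℝ E] {B : Set E}
    (hB : IsCompact B) (hint : (interior B).Nonempty) (f : StrongDual ℝ E) :
    ∃ K : Set (StrongDual ℝ E × ℝ), IsCompact K ∧
      ∀ u a c, f u = 1 → IsShadowSection B u a c → (a, c) ∈ K := by
  obtain ⟨b₀, hb₀⟩ := hint
  obtain ⟨r, hr, hrB⟩ := nhds_basis_closedBall.mem_iff.1 (mem_interior_iff_mem_nhds.1 hb₀)
  obtain ⟨C, hC⟩ := hB.exists_bound_of_continuousOn f.continuous.continuousOn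
  have := FiniteDimensional.proper ℝ (StrongDual ℝ E)
  refine ⟨closedBall 0 (4 * C / r) ×ˢ closedBall 0 (2 * C + 4 * C / r * ‖b₀‖),
    (isCompact_closedBall _ _).prod (isCompact_closedBall _ _), fun u a c hu h => ?_⟩
  have hb₀C := h.abs_sub_le hu hC (interior_subset hb₀)
  have ha : ‖a‖ ≤ 4 * C / r := by
    refine a.opNorm_bound_of_ball_bound hr _ fun z hz => ?_
    have hz' := h.abs_sub_le hu hC (b := b₀ + z) (hrB (by simpa using hz))
    rw [map_add, abs_le] at hz'
    rw [abs_le] at hb₀C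
    rw [Real.norm_eq_abs, abs_le]
    constructor <;> linarith
  refine ⟨mem_closedBall_zero_iff.2 ha, mem_closedBall_zero_iff.2 ?_⟩
  calc ‖c‖ = ‖(c - a b₀) + a b₀‖ := by rw [sub_add_cancel]
    _ ≤ ‖c - a b₀‖ + ‖a b₀‖ := norm_add_le _ _
    _ ≤ 2 * C + 4 * C / r * ‖b₀‖ := add_le_add hb₀C (a.le_of_opNorm_le ha b₀)

lemma exists_forall_mem_apply_lt [FiniteDimensional ℝ E] {T : Set (StrongDual ℝ E)}
    (hT : Convex ℝ T) (hT' : IsClosed T) {f : StrongDual ℝ E} (hf : f ∉ T) :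
    ∃ d : E, ∀ a ∈ T, a d < f d := by
  obtain ⟨φ, s, hφ, hs⟩ := geometric_hahn_banach_closed_point hT hT' hf
  obtain ⟨d, hd⟩ := (evalEquiv ℝ E).surjective
    (φ.toLinearMap ∘ₗ (LinearMap.toContinuousLinearMap : Dual ℝ E ≃ₗ[ℝ] StrongDual ℝ E))
  have hφd : ∀ a : StrongDual ℝ E, φ a = a d := fun a =>
    (LinearMap.congr_fun hd a.toLinearMap).symm
  exact ⟨d, fun a ha => by simpa only [← hφd] using (hφ a ha).trans hs⟩

lemma eventually_forall_isShadowSection_apply_neg [FiniteDimensional ℝ E] {B : Set E}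
    (hB : IsCompact B) (hint : (interior B).Nonempty) {f : StrongDual ℝ E} {u₀ d : E}
    (hneg : ∀ a c, IsShadowSection B u₀ a c → a d < 0) :
    ∀ᶠ v in 𝓝 u₀, f v = 1 → ∀ a c, IsShadowSection B v a c → a d < 0 := by
  obtain ⟨K, hK, hmem⟩ := exists_isCompact_forall_isShadowSection_mem hB hint f
  have hopen : IsOpen {p : E × StrongDual ℝ E × ℝ |
      IsShadowSection B p.1 p.2.1 p.2.2 → p.2.1 d < 0} := by
    simp only [imp_iff_not_or]
    exact (isClosed_setOf_isShadowSection hB.isClosed).isOpen_compl.union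
      (isOpen_lt (f := fun p : E × StrongDual ℝ E × ℝ => p.2.1 d) (by fun_prop) continuous_const)
  filter_upwards [hK.eventually_forall_of_forall_eventually
    (P := fun v p => IsShadowSection B v p.1 p.2 → p.1 d < 0)
    fun p _ => hopen.mem_nhds (hneg p.1 p.2)] with v hv hfv a c h
  exact hv (a, c) (hmem v a c hfv h) h

lemma exists_forall_isShadowSection_apply_neg [FiniteDimensional ℝ E] {B : Set E}
    (hB : IsCompact B) (hconv : Convex ℝ B) (hint : (interior B).Nonempty) {f : StrongDual ℝ E}
    {u : E} (hu : f u = 1) (hf : ∀ c, ¬ IsShadowSection B u f c) :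
    ∃ d, f d = 0 ∧ ∀ a c, IsShadowSection B u a c → a d < 0 := by
  set P : Set (StrongDual ℝ E × ℝ) := {p | IsShadowSection B u p.1 p.2}
  obtain ⟨K, hK, hmem⟩ := exists_isCompact_forall_isShadowSection_mem hB hint f
  have hP : IsCompact P := hK.of_isClosed_subset
    ((isClosed_setOf_isShadowSection hB.isClosed).preimage (by fun_prop : Continuous (Prod.mk u)))
    fun p hp => hmem u p.1 p.2 hu hp
  obtain ⟨d, hd⟩ := exists_forall_mem_apply_lt
    ((convex_setOf_isShadowSection hconv u).linear_image (LinearMap.fst ℝ _ _))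
    (hP.image continuous_fst).isClosed (f := f) (by rintro ⟨⟨a, c⟩, h, rfl⟩; exact hf c h)
  refine ⟨d - f d • u, by simp [hu], fun a c h => ?_⟩
  have := hd a ⟨(a, c), h, rfl⟩
  simpa [h.apply_eq_one] using this

lemma exists_isShadowSection_one_lt_apply [FiniteDimensional ℝ E] {B : Set E} (hB : IsCompact B)
    (hconv : Convex ℝ B) (hint : (interior B).Nonempty)
    (hsec : ∀ u : E, u ≠ 0 → ∃ a c, IsShadowSection B u a c) {f : StrongDual ℝ E} {u : E}
    (hu : f u = 1) (hf : ∀ c, ¬ IsShadowSection B u f c) :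
    ∃ v a c, f v = 1 ∧ IsShadowSection B v a c ∧ 1 < a u := by
  obtain ⟨d, hfd, hneg⟩ := exists_forall_isShadowSection_apply_neg hB hconv hint hu hf
  have hnear : ∀ᶠ t : ℝ in 𝓝[>] 0, f (u + t • d) = 1 →
      ∀ a c, IsShadowSection B (u + t • d) a c → a d < 0 :=
    (Tendsto.eventually (Continuous.tendsto' (by fun_prop) _ _ (by simp))
      (eventually_forall_isShadowSection_apply_neg hB hint hneg)).filter_mono nhdsWithin_le_nhds
  obtain ⟨t, hdesc, ht⟩ := (hnear.and self_mem_nhdsWithin).exists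
  have hfv : f (u + t • d) = 1 := by simp [hu, hfd]
  obtain ⟨a, c, h⟩ := hsec (u + t • d) fun h0 => by simp [h0] at hfv
  refine ⟨_, a, c, hfv, h, ?_⟩
  have hav := h.apply_eq_one
  rw [map_add, map_smul, smul_eq_mul] at hav
  linarith [mul_neg_of_pos_of_neg ht (hdesc hfv a c h)]

theorem exists_isShadowSection_of_ne_zero [FiniteDimensional ℝ E] {B : Set E} (hB : IsCompact B)
    (hconv : Convex ℝ B) (hint : (interior B).Nonempty)
    (hsec : ∀ u : E, u ≠ 0 → ∃ a c, IsShadowSection B u a c) {f : StrongDual ℝ E} (hf : f ≠ 0) :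
    ∃ u c, IsShadowSection B u f c := by
  borelize E
  let μ : Measure E := Measure.addHaar
  obtain ⟨u₀, hu₀, hmin⟩ := exists_forall_measureReal_slabShadow_le μ hB hint hsec hf
  refine ⟨u₀, ?_⟩
  by_contra! hfu₀
  obtain ⟨v, a, c, hfv, h, hau₀⟩ :=
    exists_isShadowSection_one_lt_apply hB hconv hint hsec hu₀ hfu₀
  obtain ⟨κ, hκ, hcoer⟩ := exists_pos_mul_le_measureReal_slabShadow μ hB hint hfv
  have hpos : 0 < μ.real (slabShadow B f v) :=
    (mul_pos (by positivity) hκ).trans_le (hcoer v hfv)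
  refine (hmin v hfv).not_gt ?_
  calc μ.real (slabShadow B f v) < |a u₀| * μ.real (slabShadow B f v) :=
        lt_mul_of_one_lt_left hpos (hau₀.trans_le (le_abs_self _))
    _ ≤ μ.real (slabShadow B f u₀) := h.abs_apply_mul_measureReal_slabShadow_le μ hB hfv hu₀

/-! ### Hyperplanes -/

lemma exists_ne_zero_eq_ker_of_finrank_add_one_eq [FiniteDimensional ℝ E] {H : Submodule ℝ E}
    (hH : finrank ℝ H + 1 = finrank ℝ E) :
    ∃ a : StrongDual ℝ E, a ≠ 0 ∧ H = LinearMap.ker a.toLinearMap := by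
  have hlt : H < ⊤ := lt_top_iff_ne_top.2 fun h => by
    rw [h, finrank_top] at hH
    omega
  obtain ⟨φ, hφ, hle⟩ := H.exists_le_ker_of_lt_top hlt
  refine ⟨φ.toContinuousLinearMap, by simpa using hφ, Submodule.eq_of_le_of_finrank_eq hle ?_⟩
  have := Dual.finrank_ker_add_one_of_ne_zero hφ
  rw [LinearMap.coe_toContinuousLinearMap]
  omega

lemma IsSupportedSection.exists_isShadowSection {B : Set E} (hB : IsCompact B) (hconv : Convex ℝ B)
    {a : StrongDual ℝ E} {x u : E} (hu : u ≠ 0)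
    (h : IsSupportedSection B (LinearMap.ker a.toLinearMap) x u) :
    ∃ (a' : StrongDual ℝ E) (c : ℝ), IsShadowSection B u a' c ∧ ∃ o ∈ interior B, a' o = c := by
  obtain ⟨⟨o, ho, hao⟩, hsupp⟩ := isSupportedSection_ker_iff.1 h
  rw [← hao] at hsupp
  have hau := apply_ne_zero_of_forall_frontier hB hu ho hsupp
  refine ⟨(a u)⁻¹ • a, _, isShadowSection_of_forall_frontier hB.isClosed hconv
    (by simp [hau]) ho fun p hp hap => hsupp p hp ?_, o, ho, rfl⟩
  simpa [hau] using hap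

theorem stmt_18_general [FiniteDimensional ℝ E] (hdim : 3 ≤ finrank ℝ E) {B : Set E}
    (hB : IsCompact B) (hconv : Convex ℝ B) (hint : (interior B).Nonempty)
    (hbla : ∀ u : E, u ≠ 0 → ∃ H : Submodule ℝ E, finrank ℝ H + 1 = finrank ℝ E ∧
      ∃ x, IsSupportedSection B H x u)
    (H : Submodule ℝ E) (hH : finrank ℝ H + 1 = finrank ℝ E) :
    ∃ x u, u ≠ 0 ∧ IsSupportedSection B H x u := by
  have hsec : HasShadowSections B := fun u hu => by
    obtain ⟨H, hH, x, hx⟩ := hbla u hu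
    obtain ⟨a, -, rfl⟩ := exists_ne_zero_eq_ker_of_finrank_add_one_eq hH
    exact hx.exists_isShadowSection hB hconv hu
  obtain ⟨f, hf, rfl⟩ := exists_ne_zero_eq_ker_of_finrank_add_one_eq hH
  obtain ⟨u, c, h⟩ := exists_isShadowSection_of_ne_zero hB hconv hint
    (fun u hu => (hsec u hu).imp fun _ => Exists.imp fun _ => And.left) hf
  obtain ⟨o, ho, hfo⟩ := h.exists_mem_interior_apply_eq hdim hB hconv hint hsec
  exact ⟨o, u, h.ne_zero, h.isSupportedSection hconv ho hfo⟩

end Normed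

/-- A convex body in ℝ³ with the weak Blaschke property has the weak dual
Blaschke property. -/
theorem stmt_18 (B : Set (EuclideanSpace ℝ (Fin 3)))
    (hBcomp : IsCompact B) (hBconv : Convex ℝ B)
    (hBint : (interior B).Nonempty) (hB0 : (0 : EuclideanSpace ℝ (Fin 3)) ∈ B)
    (hbla : WeakBlaschke B) :
    ∀ H : Submodule ℝ (EuclideanSpace ℝ (Fin 3)), Module.finrank ℝ H = 2 →
      ∃ x u : EuclideanSpace ℝ (Fin 3), u ≠ 0 ∧
        (((fun h => h + x) '' (H : Set (EuclideanSpace ℝ (Fin 3)))) ∩ interior B).Nonempty ∧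
        ∀ p ∈ ((fun h => h + x) '' (H : Set (EuclideanSpace ℝ (Fin 3)))) ∩ frontier B,
          ∀ t : ℝ, p + t • u ∉ interior B := by
  have hdim : finrank ℝ (EuclideanSpace ℝ (Fin 3)) = 2 + 1 := finrank_euclideanSpace_fin
  exact fun H hH => stmt_18_general hdim.ge hBcomp hBconv hBint
    (fun u hu => by
      simpa only [hdim, Nat.add_right_cancel_iff, IsSupportedSection] using hbla u hu)
    H (by rw [hH, hdim])
end

section
/- Let B ⊆ ℝ³ be a convex body with the weak Blaschke property. Then B has a center of symmetry: there exists a point p ∈ ℝ³ with B = 2p - B. -/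
/-!
For a functional `g ≠ 0`, join a maximizer `a g` of `g` on `B` to a minimizer `b g`. Given `f` and
`g`, choose a direction `u` killed by both. Sliding a unique support point of `f` or `g` along `u`
into the section plane for `u` must not move it, so for generic `f` and `g` that plane contains
both chords. Limits provide a choice of chords that are coplanar in pairs for all `f` and `g`; as
their directions span the space, the chords meet in a single point `p`.

Write `a g = p + s g • (a g - b g)`. The increments of `s` are bounded by those of the monotone
operator `g ↦ a g - b g` paired with the step. Summing over finer and finer subdivisions of a
segment shows that `s` is constant. Passing from `g` to `-g` replaces `s` by `1 - s`, hence
`s = 1 / 2` and every chord has midpoint `p`. By Hahn-Banach, `B` is symmetric about `p`.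
-/

namespace Blaschke

open Module Set Metric Topology MeasureTheory

section ConcurrentLines

variable {K V ι : Type*} [Field K] [AddCommGroup V] [Module K V]

lemma mem_span_pair_of_not_linearIndependent {x y z : V} (hyz : LinearIndependent K ![y, z])
    (hxyz : ¬LinearIndependent K ![x, y, z]) : x ∈ Submodule.span K {y, z} := by
  by_contra hx
  exact hxyz (hyz.finCons (by simpa [Set.pair_comm] using hx))

lemma direction_mem_span_pair {p a d a' d' : V} {s : K} (ha' : a' = p + s • d')
    (hcop : ¬LinearIndependent K ![a - a', d, d']) (hind : LinearIndependent K ![a - p, d]) :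
    d' ∈ Submodule.span K {a - p, d} := by
  refine mem_span_pair_of_not_linearIndependent hind fun h => hcop ?_
  rw [Fintype.linearIndependent_iff] at h ⊢
  intro c hc
  have hcomb : (c 2 - c 0 * s) • d' + c 0 • (a - p) + c 1 • d = 0 := by
    rw [← hc, ha', Fin.sum_univ_three]
    simp only [Matrix.cons_val]
    module
  have hzero := h ![c 2 - c 0 * s, c 0, c 1] (by simpa [Fin.sum_univ_three] using hcomb)
  have h0 : c 0 = 0 := hzero 1
  have h1 : c 1 = 0 := hzero 2
  have h2 : c 2 - c 0 * s = 0 := hzero 0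
  simpa [Fin.forall_fin_succ, h0, h1] using h2

lemma not_linearIndependent_of_forall_mem {W : Submodule K V} [FiniteDimensional K W] [Fintype ι]
    (hW : finrank K W < Fintype.card ι) {v : ι → V} (hv : ∀ i, v i ∈ W) :
    ¬LinearIndependent K v := by
  intro hind
  have hlift : LinearIndependent K fun i => (⟨v i, hv i⟩ : W) :=
    LinearIndependent.of_comp W.subtype hind
  exact hlift.fintype_card_le_finrank.not_gt hW

lemma finrank_span_pair_le_two (x y : V) : finrank K (Submodule.span K {x, y}) ≤ 2 := by
  classical
  have hcard := finrank_span_finset_le_card (R := K) ({x, y} : Finset V)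
  rw [Finset.coe_pair] at hcard
  exact hcard.trans Finset.card_le_two

lemma exists_forall_eq_add_smul_of_pairwise_coplanar {a d : ι → V}
    (hcop : ∀ i j, ¬LinearIndependent K ![a i - a j, d i, d j]) {i : Fin 3 → ι}
    (hd : LinearIndependent K (d ∘ i)) :
    ∃ p, ∀ l, d l ≠ 0 → ∃ s : K, a l = p + s • d l := by
  have hd01 : LinearIndependent K ![d (i 0), d (i 1)] := by
    convert hd.comp ![0, 1] (by decide) using 1
    ext k; fin_cases k <;> rfl
  obtain ⟨s, t, hst⟩ := Submodule.mem_span_pair.1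
    (mem_span_pair_of_not_linearIndependent hd01 (hcop (i 0) (i 1)))
  obtain ⟨p, hp⟩ : ∃ p, p = a (i 0) - s • d (i 0) := ⟨_, rfl⟩
  have h0 : a (i 0) = p + s • d (i 0) := by rw [hp]; abel
  have h1 : a (i 1) = p + (-t) • d (i 1) := by
    rw [hp, neg_smul, ← sub_eq_add_neg, sub_sub, hst, sub_sub_cancel]
  have through : ∀ l, d l ≠ 0 → (LinearIndependent K ![a l - p, d l] →
      d (i 2) ∈ Submodule.span K {a l - p, d l}) → ∃ s : K, a l = p + s • d l := by
    intro l hl hmem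
    by_contra! hne
    have hind : LinearIndependent K ![a l - p, d l] :=
      LinearIndependent.pair_symm_iff.1 <| (LinearIndependent.pair_iff' hl).2 fun s hs =>
        hne s (by rw [hs, add_sub_cancel])
    have hspan : ∀ k, d (i k) ∈ Submodule.span K {a l - p, d l} := Fin.forall_fin_succ.2
      ⟨direction_mem_span_pair h0 (hcop _ _) hind, Fin.forall_fin_two.2
        ⟨direction_mem_span_pair h1 (hcop _ _) hind, hmem hind⟩⟩
    have := FiniteDimensional.span_of_finite K (toFinite {a l - p, d l})
    have hdim : finrank K (Submodule.span K {a l - p, d l}) < Fintype.card (Fin 3) :=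
      (finrank_span_pair_le_two _ _).trans_lt (by simp)
    exact not_linearIndependent_of_forall_mem hdim hspan hd
  obtain ⟨r, h2⟩ := through (i 2) (hd.ne_zero 2) fun _ => Submodule.mem_span_of_mem (by simp)
  exact ⟨p, fun l hl => through l hl (direction_mem_span_pair h2 (hcop _ _))⟩

end ConcurrentLines

section LinearFunctionals

variable {K V ι : Type*} [Field K] [AddCommGroup V] [Module K V] [FiniteDimensional K V]

lemma exists_ne_zero_apply_eq_zero (hV : 2 < finrank K V) (f g : Dual K V) :
    ∃ u ≠ 0, f u = 0 ∧ g u = 0 := by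
  have hker : LinearMap.ker (f.prod g) ≠ ⊥ :=
    LinearMap.ker_ne_bot_of_finrank_lt (by simpa using hV)
  obtain ⟨u, hu, hu0⟩ := Submodule.exists_mem_ne_zero_of_ne_bot hker
  exact ⟨u, hu0, Prod.mk.inj hu⟩

lemma exists_linearIndependent_comp_of_apply_ne_zero {d : ι → V}
    (hd : ∀ g : Dual K V, g ≠ 0 → ∃ i, g (d i) ≠ 0) :
    ∃ i : Fin (finrank K V) → ι, LinearIndependent K (d ∘ i) := by
  have hspan : Submodule.span K (range d) = ⊤ := by
    by_contra hne
    obtain ⟨g, hg0, hg⟩ := Submodule.exists_le_ker_of_lt_top _ (lt_top_iff_ne_top.2 hne)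
    obtain ⟨i, hi⟩ := hd g hg0
    exact hi (hg (Submodule.subset_span (mem_range_self i)))
  have hbasis := Submodule.exists_fun_fin_finrank_span_eq K (range d)
  rw [hspan, finrank_top] at hbasis
  obtain ⟨v, hv, -, hind⟩ := hbasis
  choose i hi using hv
  exact ⟨i, (funext hi : d ∘ i = v) ▸ hind⟩

lemma one_lt_rank_strongDual {E : Type*} [NormedAddCommGroup E] [NormedSpace ℝ E]
    [FiniteDimensional ℝ E] (hE : 1 < finrank ℝ E) : 1 < Module.rank ℝ (StrongDual ℝ E) := by
  rw [← (LinearMap.toContinuousLinearMap (𝕜 := ℝ) (E := E) (F' := ℝ)).rank_eq,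
    ← finrank_eq_rank, Nat.one_lt_cast]
  exact hE.trans_eq Subspace.dual_finrank_eq.symm

end LinearFunctionals

section VanishingVariation

lemma eq_of_dist_le_sub_mul_sub {X : Type*} [MetricSpace X] {f : ℝ → X} {m : ℝ → ℝ}
    (h : ∀ s ∈ Icc (0 : ℝ) 1, ∀ t ∈ Icc (0 : ℝ) 1, dist (f s) (f t) ≤ (m t - m s) * (t - s)) :
    f 0 = f 1 := by
  have hdist : ∀ N : ℕ, dist (f 0) (f 1) ≤ (m 1 - m 0) * (1 / ((N : ℝ) + 1)) := by
    intro N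
    have hN : (0 : ℝ) < N + 1 := by positivity
    let x : ℕ → ℝ := fun k => k / (N + 1)
    have hx : ∀ {k}, k ≤ N + 1 → x k ∈ Icc (0 : ℝ) 1 := fun {k} hk =>
      ⟨by positivity, (div_le_one hN).2 (mod_cast hk)⟩
    have hx0 : x 0 = 0 := by simp [x]
    have hx1 : x (N + 1) = 1 := by simp [x, hN.ne']
    have hstep : ∀ k, x (k + 1) - x k = 1 / (N + 1) := fun k => by
      simp only [x]; push_cast; ring
    calc dist (f 0) (f 1) = dist (f (x 0)) (f (x (N + 1))) := by rw [hx0, hx1]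
      _ ≤ ∑ k ∈ Finset.range (N + 1), (m (x (k + 1)) - m (x k)) * (1 / (N + 1)) :=
        dist_le_range_sum_of_dist_le (f := f ∘ x) (N + 1) fun {k} hk =>
          (h _ (hx hk.le) _ (hx hk)).trans_eq (by rw [hstep])
      _ = (m 1 - m 0) * (1 / (N + 1)) := by
        rw [← Finset.sum_mul, Finset.sum_range_sub (fun k => m (x k)), hx0, hx1]
  have hlim : Filter.Tendsto (fun N : ℕ => (m 1 - m 0) * (1 / ((N : ℝ) + 1))) Filter.atTop
      (𝓝 0) := by
    simpa using tendsto_one_div_add_atTop_nhds_zero_nat.const_mul (m 1 - m 0)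
  exact dist_le_zero.1 (ge_of_tendsto' hlim hdist)

lemma eq_of_dist_le_apply_sub {V X : Type*} [AddCommGroup V] [Module ℝ V] [MetricSpace X]
    {C : Set V} (hC : Convex ℝ C) {f : V → X} {m : V → Dual ℝ V}
    (h : ∀ x ∈ C, ∀ y ∈ C, dist (f x) (f y) ≤ (m y - m x) (y - x)) {x y : V}
    (hx : x ∈ C) (hy : y ∈ C) : f x = f y := by
  have hline : ∀ t ∈ Icc (0 : ℝ) 1, AffineMap.lineMap x y t ∈ C := fun t ht =>
    hC.lineMap_mem hx hy ht
  have := eq_of_dist_le_sub_mul_sub (f := fun t => f (AffineMap.lineMap x y t))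
    (m := fun t => m (AffineMap.lineMap x y t) (y - x)) fun s hs t ht => by
      have hst : AffineMap.lineMap x y t - AffineMap.lineMap x y s = (t - s) • (y - x) := by
        simp only [AffineMap.lineMap_apply_module']; module
      refine (h _ (hline s hs) _ (hline t ht)).trans_eq ?_
      rw [hst, map_smul, smul_eq_mul, mul_comm, LinearMap.sub_apply]
  simpa using this

end VanishingVariation

variable {E : Type*} [NormedAddCommGroup E] [NormedSpace ℝ E] {B : Set E}

section Sections

lemma inter_frontier_nonempty_of_isPreconnected {X : Type*} [TopologicalSpace X] {s t : Set X}
    (hs : IsPreconnected s) (hst : (s ∩ interior t).Nonempty) (hnst : ¬s ⊆ interior t) :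
    (s ∩ frontier t).Nonempty := by
  by_contra! hempty
  refine hnst (hs.subset_of_closure_inter_subset isOpen_interior hst fun x ⟨hx, hxs⟩ => ?_)
  by_contra hxt
  exact hempty.subset ⟨hxs, closure_mono interior_subset hx, hxt⟩

/-- `IsBlaschkeSection B u P` says that `P` is a plane as in the weak Blaschke property of `B` for
the direction `u`: it meets the interior of `B`, and the lines of direction `u` through the
relative boundary of the section `P ∩ B` support `B`. The dimension of `P` is left free. -/
structure IsBlaschkeSection (B : Set E) (u : E) (P : AffineSubspace ℝ E) : Prop where
  inter_interior_nonempty : ((P : Set E) ∩ interior B).Nonempty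
  add_smul_notMem_interior : ∀ p ∈ (P : Set E) ∩ frontier B, ∀ t : ℝ, p + t • u ∉ interior B

variable {u : E} {P : AffineSubspace ℝ E}

lemma IsBlaschkeSection.notMem_direction (hP : IsBlaschkeSection B u P)
    (hB : Bornology.IsBounded B) (hu : u ≠ 0) : u ∉ P.direction := by
  intro hdir
  obtain ⟨q, hqP, hqB⟩ := hP.inter_interior_nonempty
  have hmemP : ∀ t : ℝ, q + t • u ∈ P := fun t => by
    rw [add_comm]
    exact AffineSubspace.vadd_mem_of_mem_direction (P.direction.smul_mem t hdir) hqP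
  have hline : IsPreconnected (range fun t : ℝ => q + t • u) :=
    isPreconnected_range (by fun_prop)
  have hnsub : ¬(range fun t : ℝ => q + t • u) ⊆ interior B := by
    intro hsub
    obtain ⟨R, hR, hBR⟩ := hB.subset_closedBall_lt 0 q
    have hfar := hBR (interior_subset (hsub ⟨(R + 1) / ‖u‖, rfl⟩))
    rw [mem_closedBall, dist_self_add_left, norm_smul, norm_div, norm_norm,
      div_mul_cancel₀ _ (norm_ne_zero_iff.2 hu), Real.norm_of_nonneg (by positivity)] at hfar
    linarith
  obtain ⟨_, ⟨t, rfl⟩, hfrontier⟩ :=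
    inter_frontier_nonempty_of_isPreconnected hline ⟨q, ⟨0, by simp⟩, hqB⟩ hnsub
  exact hP.add_smul_notMem_interior _ ⟨hmemP t, hfrontier⟩ (-t) (by simpa using hqB)

lemma IsBlaschkeSection.mem_of_sub_smul_mem (hP : IsBlaschkeSection B u P) (hBcl : IsClosed B)
    (hBconv : Convex ℝ B) {a : E} (ha : a ∈ B) {t : ℝ} (hat : a - t • u ∈ P) :
    a - t • u ∈ B := by
  by_contra hyB
  obtain ⟨q, hqP, hqB⟩ := hP.inter_interior_nonempty
  obtain ⟨z, hzseg, hz⟩ := inter_frontier_nonempty_of_isPreconnected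
    (convex_segment q (a - t • u)).isPreconnected ⟨q, left_mem_segment ℝ _ _, hqB⟩
    fun hsub => hyB (interior_subset (hsub (right_mem_segment ℝ _ _)))
  have hzP : z ∈ P := P.convex.segment_subset hqP hat hzseg
  obtain ⟨α, β, hα, hβ, hαβ, rfl⟩ := hzseg
  have hα0 : α ≠ 0 := by
    rintro rfl
    obtain rfl : β = 1 := by simpa using hαβ
    exact hyB (by simpa using hBcl.frontier_subset hz)
  refine hP.add_smul_notMem_interior _ ⟨hzP, hz⟩ (β * t) ?_
  have hcombo := hBconv.combo_interior_self_mem_interior hqB ha (hα.lt_of_ne' hα0) hβ hαβ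
  convert hcombo using 1
  module

lemma exists_sub_smul_mem [FiniteDimensional ℝ E] (hPne : (P : Set E).Nonempty)
    (hdim : finrank ℝ P.direction + 1 = finrank ℝ E) (hu : u ∉ P.direction) (a : E) :
    ∃ t : ℝ, a - t • u ∈ P := by
  obtain ⟨q, hq⟩ := hPne
  have htop : P.direction ⊔ ℝ ∙ u = ⊤ := Submodule.eq_top_of_finrank_eq <| by
    rw [Submodule.finrank_sup_span_singleton hu, hdim]
  obtain ⟨w, hw, _, hv, hwv⟩ := Submodule.mem_sup.1 (htop ▸ Submodule.mem_top (x := a - q))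
  obtain ⟨t, rfl⟩ := Submodule.mem_span_singleton.1 hv
  refine ⟨t, ?_⟩
  rw [show a - t • u = w + q by rw [sub_eq_iff_eq_add, add_right_comm, hwv, sub_add_cancel]]
  exact AffineSubspace.vadd_mem_of_mem_direction hw hq

lemma IsBlaschkeSection.mem_of_mem_toExposed [FiniteDimensional ℝ E] (hP : IsBlaschkeSection B u P)
    (hBcomp : IsCompact B) (hBconv : Convex ℝ B) (hu : u ≠ 0)
    (hdim : finrank ℝ P.direction + 1 = finrank ℝ E) {g : StrongDual ℝ E} (hgu : g u = 0)
    (hg : (g.toExposed B).Subsingleton) {a : E} (ha : a ∈ g.toExposed B) : a ∈ P := by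
  obtain ⟨t, ht⟩ := exists_sub_smul_mem (hP.inter_interior_nonempty.mono inter_subset_left) hdim
    (hP.notMem_direction hBcomp.isBounded hu) a
  have hmem : a - t • u ∈ g.toExposed B :=
    ⟨hP.mem_of_sub_smul_mem hBcomp.isClosed hBconv ha.1 ht, by simpa [hgu] using ha.2⟩
  exact hg hmem ha ▸ ht

end Sections

section SupportFunction

/-- The support function of `B`, defined on the dual space. -/
noncomputable def supportFunction (B : Set E) (g : StrongDual ℝ E) : ℝ := sSup (g '' B)

lemma toExposed_nonempty (hB : IsCompact B) (hne : B.Nonempty) (g : StrongDual ℝ E) :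
    (g.toExposed B).Nonempty :=
  hB.exists_isMaxOn hne g.continuous.continuousOn

lemma supportFunction_eq_of_mem_toExposed {g : StrongDual ℝ E} {a : E} (ha : a ∈ g.toExposed B) :
    supportFunction B g = g a :=
  IsGreatest.csSup_eq ⟨mem_image_of_mem g ha.1, forall_mem_image.2 ha.2⟩

lemma apply_le_supportFunction (hB : IsCompact B) (g : StrongDual ℝ E) {a : E} (ha : a ∈ B) :
    g a ≤ supportFunction B g :=
  le_csSup (hB.image g.continuous).bddAbove (mem_image_of_mem g ha)

lemma lipschitzWith_supportFunction (hB : IsCompact B) (hne : B.Nonempty) :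
    ∃ K, LipschitzWith K (supportFunction B) := by
  obtain ⟨R, hR, hBR⟩ := hB.isBounded.exists_pos_norm_le
  refine ⟨⟨R, hR.le⟩, LipschitzWith.of_le_add_mul _ fun f g => ?_⟩
  obtain ⟨a, ha⟩ := toExposed_nonempty hB hne f
  calc supportFunction B f = g a + (f - g) a := by
        rw [supportFunction_eq_of_mem_toExposed ha, sub_apply, add_sub_cancel]
    _ ≤ supportFunction B g + ‖f - g‖ * R :=
        add_le_add (apply_le_supportFunction hB g ha.1) <|
          (Real.le_norm_self _).trans ((f - g).le_opNorm_of_le (hBR a ha.1))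
    _ = supportFunction B g + R * dist f g := by rw [dist_eq_norm, mul_comm]

lemma fderiv_supportFunction_of_mem_toExposed (hB : IsCompact B) {g : StrongDual ℝ E}
    (hdiff : DifferentiableAt ℝ (supportFunction B) g) {a : E} (ha : a ∈ g.toExposed B) :
    fderiv ℝ (supportFunction B) g = NormedSpace.inclusionInDoubleDual ℝ E a := by
  have hmin : IsLocalMin (fun f => supportFunction B f - NormedSpace.inclusionInDoubleDual ℝ E a f)
      g := Filter.Eventually.of_forall fun f => by
    simpa [supportFunction_eq_of_mem_toExposed ha] using apply_le_supportFunction hB f ha.1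
  exact sub_eq_zero.1 (hmin.hasFDerivAt_eq_zero
    (hdiff.hasFDerivAt.sub (NormedSpace.inclusionInDoubleDual ℝ E a).hasFDerivAt))

lemma toExposed_subsingleton_of_differentiableAt (hB : IsCompact B) {g : StrongDual ℝ E}
    (hdiff : DifferentiableAt ℝ (supportFunction B) g) : (g.toExposed B).Subsingleton := by
  intro a ha b hb
  have heq := (fderiv_supportFunction_of_mem_toExposed hB hdiff ha).symm.trans
    (fderiv_supportFunction_of_mem_toExposed hB hdiff hb)
  exact SeparatingDual.eq_iff_forall_dual_eq.2 fun f => DFunLike.congr_fun heq f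

lemma ae_toExposed_subsingleton [FiniteDimensional ℝ E] (hB : IsCompact B) (hne : B.Nonempty)
    (μ : Measure (StrongDual ℝ E)) [μ.IsAddHaarMeasure] :
    ∀ᵐ g ∂μ, (g.toExposed B).Subsingleton := by
  obtain ⟨K, hK⟩ := lipschitzWith_supportFunction hB hne
  exact hK.ae_differentiableAt.mono fun g => toExposed_subsingleton_of_differentiableAt hB

lemma dense_setOf_toExposed_subsingleton [FiniteDimensional ℝ E] (hB : IsCompact B)
    (hne : B.Nonempty) :
    Dense {g : StrongDual ℝ E |
      (g.toExposed B).Subsingleton ∧ ((-g).toExposed B).Subsingleton} := by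
  have hae := ae_toExposed_subsingleton hB hne Measure.addHaar
  have hneg := (quasiMeasurePreserving_neg Measure.addHaar).ae hae
  exact Measure.dense_of_ae (hae.and hneg)

end SupportFunction

section AffineDiameters

lemma exists_mem_closure_of_dense_image_fst {X Y : Type*} [TopologicalSpace X] [TopologicalSpace Y]
    {S : Set (X × Y)} {K : Set Y} (hK : IsCompact K) (hSK : ∀ z ∈ S, z.2 ∈ K)
    (hS : Dense (Prod.fst '' S)) (x : X) : ∃ y, (x, y) ∈ closure S := by
  by_contra! hx
  have hsub : {x} ×ˢ K ⊆ (closure S)ᶜ := by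
    rintro ⟨_, y⟩ ⟨rfl, -⟩
    exact hx y
  obtain ⟨U, V, hU, -, hxU, hKV, hUV⟩ :=
    generalized_tube_lemma isCompact_singleton hK isClosed_closure.isOpen_compl hsub
  obtain ⟨_, hzU, z, hz, rfl⟩ := hS.inter_open_nonempty U hU ⟨x, hxU rfl⟩
  exact hUV ⟨hzU, hKV (hSK z hz)⟩ (subset_closure hz)

/-- `IsAffineDiameter B g a b` says that `a` maximizes and `b` minimizes the functional `g` on `B`,
so that for `g ≠ 0` the chord from `b` to `a` joins two parallel supporting hyperplanes. -/
structure IsAffineDiameter (B : Set E) (g : StrongDual ℝ E) (a b : E) : Prop where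
  left_mem : a ∈ g.toExposed B
  right_mem : b ∈ (-g).toExposed B

namespace IsAffineDiameter

variable {g : StrongDual ℝ E} {a b a' b' : E}

lemma apply_le_left (h : IsAffineDiameter B g a b) {y : E} (hy : y ∈ B) : g y ≤ g a :=
  h.left_mem.2 y hy

lemma apply_right_le (h : IsAffineDiameter B g a b) {y : E} (hy : y ∈ B) : g b ≤ g y :=
  neg_le_neg_iff.1 (h.right_mem.2 y hy)

protected lemma neg (h : IsAffineDiameter B g a b) : IsAffineDiameter B (-g) b a :=
  ⟨h.right_mem, by simpa only [neg_neg] using h.left_mem⟩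

lemma apply_sub_le (h : IsAffineDiameter B g a b) (ha' : a' ∈ B) (hb' : b' ∈ B) :
    g (a' - b') ≤ g (a - b) := by
  rw [map_sub, map_sub]
  exact sub_le_sub (h.apply_le_left ha') (h.apply_right_le hb')

lemma mul_norm_le_apply_sub (h : IsAffineDiameter B g a b) {q : E} {r : ℝ} (hr : 0 < r)
    (hB : closedBall q r ⊆ B) : r * ‖g‖ ≤ g (a - b) := by
  have hq : q ∈ B := hB (mem_closedBall_self hr.le)
  have hwidth : ∀ x : E, ‖x‖ = 1 → r * g x ≤ g (a - b) := by
    intro x hx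
    have hmem : q + r • x ∈ B := hB (by simp [norm_smul, hx, abs_of_pos hr])
    simpa using h.apply_sub_le hmem hq
  have hnonneg : 0 ≤ g (a - b) := by simpa using h.apply_sub_le hq hq
  rw [mul_comm, ← le_div_iff₀ hr]
  refine ContinuousLinearMap.opNorm_le_of_unit_norm (by positivity) fun x hx => ?_
  rw [le_div_iff₀ hr, mul_comm, Real.norm_eq_abs]
  rcases abs_choice (g x) with habs | habs <;> rw [habs]
  · exact hwidth x hx
  · simpa using hwidth (-x) (by simpa using hx)

end IsAffineDiameter

lemma isClosed_setOf_isAffineDiameter (hB : IsClosed B) :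
    IsClosed {x : StrongDual ℝ E × E × E | IsAffineDiameter B x.1 x.2.1 x.2.2} := by
  have heq : {x : StrongDual ℝ E × E × E | IsAffineDiameter B x.1 x.2.1 x.2.2} =
      {x | x.2.1 ∈ B ∧ x.2.2 ∈ B ∧ ∀ y ∈ B, x.1 y ≤ x.1 x.2.1 ∧ x.1 x.2.2 ≤ x.1 y} := by
    ext x
    exact ⟨fun h => ⟨h.left_mem.1, h.right_mem.1, fun y hy =>
      ⟨h.apply_le_left hy, h.apply_right_le hy⟩⟩, fun h => ⟨⟨h.1, fun y hy => (h.2.2 y hy).1⟩,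
      ⟨h.2.1, fun y hy => neg_le_neg (h.2.2 y hy).2⟩⟩⟩
  rw [heq]
  simp only [ofPred_and, ofPred_forall]
  refine (hB.preimage (by fun_prop)).inter ((hB.preimage (by fun_prop)).inter ?_)
  exact isClosed_biInter fun y _ =>
    (isClosed_le (by fun_prop) (by fun_prop)).inter (isClosed_le (by fun_prop) (by fun_prop))

lemma not_linearIndependent_of_toExposed_subsingleton (hE : finrank ℝ E = 3) (hBcomp : IsCompact B)
    (hBconv : Convex ℝ B) (hsec : ∀ u : E, u ≠ 0 → ∃ P : AffineSubspace ℝ E,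
      finrank ℝ P.direction = 2 ∧ IsBlaschkeSection B u P) {f g : StrongDual ℝ E}
    (hf : (f.toExposed B).Subsingleton ∧ ((-f).toExposed B).Subsingleton)
    (hg : (g.toExposed B).Subsingleton ∧ ((-g).toExposed B).Subsingleton) {a b a' b' : E}
    (hab : IsAffineDiameter B f a b) (hab' : IsAffineDiameter B g a' b') :
    ¬LinearIndependent ℝ ![a - a', a - b, a' - b'] := by
  have : FiniteDimensional ℝ E := .of_finrank_pos (by lia)
  obtain ⟨u, hu, hfu, hgu⟩ := exists_ne_zero_apply_eq_zero (by lia) (f : Dual ℝ E) (g : Dual ℝ E)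
  obtain ⟨P, hPdim, hP⟩ := hsec u hu
  have hmem : ∀ {h : StrongDual ℝ E} {x : E}, h u = 0 → (h.toExposed B).Subsingleton →
      x ∈ h.toExposed B → x ∈ P := fun hhu hh =>
    hP.mem_of_mem_toExposed hBcomp hBconv hu (by lia) hhu hh
  have ha : a ∈ P := hmem hfu hf.1 hab.left_mem
  have hb : b ∈ P := hmem (by simpa using hfu) hf.2 hab.right_mem
  have ha' : a' ∈ P := hmem hgu hg.1 hab'.left_mem
  have hb' : b' ∈ P := hmem (by simpa using hgu) hg.2 hab'.right_mem
  refine not_linearIndependent_of_forall_mem (W := P.direction) (by simp [hPdim]) ?_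
  simp only [Fin.forall_fin_succ, IsEmpty.forall_iff, and_true]
  exact ⟨AffineSubspace.vsub_mem_direction ha ha', AffineSubspace.vsub_mem_direction ha hb,
    AffineSubspace.vsub_mem_direction ha' hb'⟩

theorem exists_isAffineDiameter_pairwise_coplanar (hE : finrank ℝ E = 3) (hBcomp : IsCompact B)
    (hBconv : Convex ℝ B) (hne : B.Nonempty) (hsec : ∀ u : E, u ≠ 0 → ∃ P : AffineSubspace ℝ E,
      finrank ℝ P.direction = 2 ∧ IsBlaschkeSection B u P) :
    ∃ a b : StrongDual ℝ E → E, (∀ g, IsAffineDiameter B g (a g) (b g)) ∧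
      ∀ f g, ¬LinearIndependent ℝ ![a f - a g, a f - b f, a g - b g] := by
  have : FiniteDimensional ℝ E := .of_finrank_pos (by lia)
  let S : Set (StrongDual ℝ E × E × E) :=
    {x | ((x.1.toExposed B).Subsingleton ∧ ((-x.1).toExposed B).Subsingleton) ∧
      IsAffineDiameter B x.1 x.2.1 x.2.2}
  have hdense : Dense (Prod.fst '' S) :=
    (dense_setOf_toExposed_subsingleton hBcomp hne).mono fun g hg => by
      obtain ⟨a, ha⟩ := toExposed_nonempty hBcomp hne g
      obtain ⟨b, hb⟩ := toExposed_nonempty hBcomp hne (-g)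
      exact ⟨(g, a, b), ⟨hg, ha, hb⟩, rfl⟩
  choose c hc using exists_mem_closure_of_dense_image_fst (hBcomp.prod hBcomp)
    (fun x hx => ⟨hx.2.left_mem.1, hx.2.right_mem.1⟩) hdense
  refine ⟨fun g => (c g).1, fun g => (c g).2, fun g => ?_, fun f g => ?_⟩
  · exact closure_minimal (fun x hx => hx.2) (isClosed_setOf_isAffineDiameter hBcomp.isClosed)
      (hc g)
  · let D : Set ((StrongDual ℝ E × E × E) × (StrongDual ℝ E × E × E)) :=
      {z | ¬LinearIndependent ℝ ![z.1.2.1 - z.2.2.1, z.1.2.1 - z.1.2.2, z.2.2.1 - z.2.2.2]}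
    have hclosed : IsClosed D :=
      isOpen_setOfPred_linearIndependent.isClosed_compl.preimage (by fun_prop)
    have hgeneric : S ×ˢ S ⊆ D := fun z hz =>
      not_linearIndependent_of_toExposed_subsingleton hE hBcomp hBconv hsec hz.1.1 hz.2.1 hz.1.2
        hz.2.2
    have hmem : ((f, c f), (g, c g)) ∈ closure (S ×ˢ S) := by
      rw [closure_prod_eq]
      exact ⟨hc f, hc g⟩
    have hpair : ((f, c f), (g, c g)) ∈ D := closure_minimal hgeneric hclosed hmem
    exact hpair

end AffineDiameters

section Ratio

namespace IsAffineDiameter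

variable {f g : StrongDual ℝ E} {a b a' b' p q : E} {r R s s' : ℝ}

lemma abs_sub_mul_le (h : IsAffineDiameter B f a b) (h' : IsAffineDiameter B g a' b')
    (ha : a = p + s • (a - b)) (ha' : a' = p + s' • (a' - b')) :
    |s' - s| * g (a' - b') ≤ (1 + |s|) * (g - f) ((a' - b') - (a - b)) := by
  obtain ⟨d, hd⟩ : ∃ d, d = a - b := ⟨_, rfl⟩
  obtain ⟨d', hd'⟩ : ∃ d', d' = a' - b' := ⟨_, rfl⟩
  have hb : b = p + (s - 1) • d := by
    rw [sub_smul, one_smul, ← add_sub_assoc, hd, ← ha, sub_sub_cancel]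
  have hb' : b' = p + (s' - 1) • d' := by
    rw [sub_smul, one_smul, ← add_sub_assoc, hd', ← ha', sub_sub_cancel]
  rw [← hd] at ha
  rw [← hd'] at ha'
  rw [← hd, ← hd']
  have hleft : s * g d ≤ s' * g d' := by
    simpa [ha, ha'] using h'.apply_le_left h.left_mem.1
  have hright : (s' - 1) * g d' ≤ (s - 1) * g d := by
    simpa [hb, hb'] using h'.apply_right_le h.right_mem.1
  have hf : f d' ≤ f d := by
    rw [hd, hd']
    exact h.apply_sub_le h'.left_mem.1 h'.right_mem.1
  have hg : 0 ≤ g (d' - d) := by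
    rw [map_sub, sub_nonneg, hd, hd']
    exact h'.apply_sub_le h.left_mem.1 h.right_mem.1
  have hupper : (s' - s) * g d' ≤ (1 + |s|) * g (d' - d) :=
    calc (s' - s) * g d' ≤ (1 - s) * g (d' - d) := by rw [map_sub]; linarith
      _ ≤ (1 + |s|) * g (d' - d) := by gcongr; linarith [neg_abs_le s]
  have hlower : -(s' - s) * g d' ≤ (1 + |s|) * g (d' - d) :=
    calc -(s' - s) * g d' ≤ s * g (d' - d) := by rw [map_sub]; linarith
      _ ≤ (1 + |s|) * g (d' - d) := by gcongr; linarith [le_abs_self s]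
  calc |s' - s| * g d' ≤ (1 + |s|) * g (d' - d) := by
        rcases abs_choice (s' - s) with habs | habs <;> rw [habs] <;> assumption
    _ ≤ (1 + |s|) * (g - f) (d' - d) := by
        gcongr
        rw [sub_apply, map_sub f]
        linarith

lemma ratio_unique (h : IsAffineDiameter B g a b) (h' : IsAffineDiameter B g a' b')
    (hg : 0 < g (a' - b')) (ha : a = p + s • (a - b)) (ha' : a' = p + s' • (a' - b')) : s' = s := by
  have hle : |s' - s| * g (a' - b') ≤ 0 := by simpa using h.abs_sub_mul_le h' ha ha'
  exact sub_eq_zero.1 (abs_nonpos_iff.1 (nonpos_of_mul_nonpos_left hle hg))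

lemma abs_ratio_le (h : IsAffineDiameter B g a b) (hg : g ≠ 0) (hr : 0 < r)
    (hrB : closedBall q r ⊆ B) (hRB : B ⊆ closedBall p R) (ha : a = p + s • (a - b)) :
    |s| ≤ R / r := by
  have hr_le : r ≤ ‖a - b‖ := le_of_mul_le_mul_left
    (calc ‖g‖ * r = r * ‖g‖ := mul_comm _ _
      _ ≤ g (a - b) := h.mul_norm_le_apply_sub hr hrB
      _ ≤ ‖g‖ * ‖a - b‖ := (Real.le_norm_self _).trans (g.le_opNorm _)) (norm_pos_iff.2 hg)
  rw [le_div_iff₀ hr]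
  calc |s| * r ≤ |s| * ‖a - b‖ := by gcongr
    _ = ‖a - p‖ := by rw [← Real.norm_eq_abs, ← norm_smul, ← eq_sub_iff_add_eq'.2 ha.symm]
    _ ≤ R := mem_closedBall_iff_norm.1 (hRB h.left_mem.1)

end IsAffineDiameter

end Ratio

section ConcurrentDiameters

variable {f g : StrongDual ℝ E} {p q : E} {r R : ℝ} {a b : StrongDual ℝ E → E}
  {s : StrongDual ℝ E → ℝ}

lemma ratio_eq_of_convex {C : Set (StrongDual ℝ E)} (hC : Convex ℝ C)
    (hab : ∀ g ∈ C, IsAffineDiameter B g (a g) (b g))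
    (ha : ∀ g ∈ C, a g = p + s g • (a g - b g)) (hr : 0 < r) (hrB : closedBall q r ⊆ B)
    (hRB : B ⊆ closedBall p R) {δ : ℝ} (hδ : 0 < δ) (hCδ : ∀ g ∈ C, δ ≤ ‖g‖) (hf : f ∈ C)
    (hg : g ∈ C) : s f = s g := by
  let c : ℝ := (1 + R / r) / (r * δ)
  refine eq_of_dist_le_apply_sub hC
    (m := fun g => c • (NormedSpace.inclusionInDoubleDual ℝ E (a g - b g) : _ →ₗ[ℝ] ℝ))
    (fun f hf g hg => ?_) hf hg
  obtain ⟨x, hx⟩ : ∃ x, x = (g - f) ((a g - b g) - (a f - b f)) := ⟨_, rfl⟩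
  have hmain : |s g - s f| * g (a g - b g) ≤ (1 + |s f|) * x :=
    hx ▸ (hab f hf).abs_sub_mul_le (hab g hg) (ha f hf) (ha g hg)
  have hwidth : r * δ ≤ g (a g - b g) :=
    (mul_le_mul_of_nonneg_left (hCδ g hg) hr.le).trans ((hab g hg).mul_norm_le_apply_sub hr hrB)
  have hratio : |s f| ≤ R / r :=
    (hab f hf).abs_ratio_le (norm_pos_iff.1 (hδ.trans_le (hCδ f hf))) hr hrB hRB (ha f hf)
  have hpos : 0 < r * δ := mul_pos hr hδ
  have hx0 : 0 ≤ x := nonneg_of_mul_nonneg_right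
    ((mul_nonneg (abs_nonneg _) (hpos.le.trans hwidth)).trans hmain) (by positivity)
  calc dist (s f) (s g) = |s g - s f| := by rw [dist_comm, Real.dist_eq]
    _ ≤ (1 + R / r) * x / (r * δ) := by
        rw [le_div_iff₀ hpos]
        exact (mul_le_mul_of_nonneg_left hwidth (abs_nonneg _)).trans
          (hmain.trans (mul_le_mul_of_nonneg_right (by gcongr) hx0))
    _ = c * x := (div_mul_eq_mul_div _ _ _).symm
    _ = _ := by simp [hx]; ring

lemma ratio_eq_of_ne_zero [FiniteDimensional ℝ E] (hE : 1 < finrank ℝ E)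
    (hab : ∀ g, IsAffineDiameter B g (a g) (b g))
    (ha : ∀ g ≠ 0, a g = p + s g • (a g - b g)) (hr : 0 < r) (hrB : closedBall q r ⊆ B)
    (hRB : B ⊆ closedBall p R) (hf : f ≠ 0) (hg : g ≠ 0) : s f = s g := by
  have hconn : IsPreconnected ({0}ᶜ : Set (StrongDual ℝ E)) :=
    (isConnected_compl_singleton_of_one_lt_rank (one_lt_rank_strongDual hE) 0).isPreconnected
  refine hconn.induction₂ (fun f g => s f = s g) (fun f hf => ?_) (fun _ _ _ _ _ _ => Eq.trans)
    (fun _ _ _ _ => Eq.symm) hf hg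
  have hnorm : 0 < ‖f‖ / 2 := half_pos (norm_pos_iff.2 hf)
  have hball : ∀ g ∈ ball f (‖f‖ / 2), ‖f‖ / 2 ≤ ‖g‖ := fun g hg => by
    have hlt := (norm_sub_norm_le f g).trans_lt (mem_ball_iff_norm'.1 hg)
    linarith
  filter_upwards [mem_nhdsWithin_of_mem_nhds (ball_mem_nhds f hnorm)] with g hg
  exact ratio_eq_of_convex (convex_ball f _) (fun g _ => hab g)
    (fun g hg => ha g (norm_pos_iff.1 (hnorm.trans_le (hball g hg)))) hr hrB hRB hnorm hball
    (mem_ball_self hnorm) hg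

lemma add_eq_two_smul_of_concurrent [FiniteDimensional ℝ E] (hE : 1 < finrank ℝ E)
    (hab : ∀ g, IsAffineDiameter B g (a g) (b g))
    (ha : ∀ g ≠ 0, a g = p + s g • (a g - b g)) (hr : 0 < r) (hrB : closedBall q r ⊆ B)
    (hRB : B ⊆ closedBall p R) (hg : g ≠ 0) : a g + b g = (2 : ℝ) • p := by
  have hneg : b g = p + (1 - s g) • (b g - a g) := by
    calc b g = a g - (a g - b g) := (sub_sub_cancel _ _).symm
      _ = (p + s g • (a g - b g)) - (a g - b g) := by rw [← ha g hg]
      _ = p + (1 - s g) • (b g - a g) := by module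
  have hwidth : 0 < (-g) (a (-g) - b (-g)) :=
    (mul_pos hr (norm_pos_iff.2 (neg_ne_zero.2 hg))).trans_le
      ((hab (-g)).mul_norm_le_apply_sub hr hrB)
  have hflip : s (-g) = 1 - s g :=
    (hab g).neg.ratio_unique (hab (-g)) hwidth hneg (ha _ (neg_ne_zero.2 hg))
  have hhalf : s g = 1 / 2 := by
    linarith [ratio_eq_of_ne_zero hE hab ha hr hrB hRB hg (neg_ne_zero.2 hg)]
  calc a g + b g = (2 : ℝ) • (a g - (1 / 2 : ℝ) • (a g - b g)) := by module
    _ = (2 : ℝ) • p := by rw [← hhalf, ← eq_sub_iff_add_eq.2 (ha g hg).symm]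

end ConcurrentDiameters

section Symmetry

lemma eq_image_two_smul_sub (hBcl : IsClosed B) (hBconv : Convex ℝ B) {p : E}
    (h : ∀ g : StrongDual ℝ E, g ≠ 0 → ∃ a ∈ B, ∃ b ∈ (-g).toExposed B, a + b = (2 : ℝ) • p) :
    B = (fun x => (2 : ℝ) • p - x) '' B := by
  have hrefl : ∀ x ∈ B, (2 : ℝ) • p - x ∈ B := by
    intro x hx
    by_contra hxB
    obtain ⟨g, c, hBc, hcx⟩ := geometric_hahn_banach_closed_point hBconv hBcl hxB
    have hg : g ≠ 0 := by
      rintro rfl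
      exact lt_asymm (hBc x hx) hcx
    obtain ⟨a, ha, b, hb, hab⟩ := h g hg
    have hbx : g b ≤ g x := neg_le_neg_iff.1 (hb.2 x hx)
    have hac := hBc a ha
    rw [← hab, map_sub, map_add] at hcx
    linarith
  exact Subset.antisymm (fun x hx => ⟨_, hrefl x hx, sub_sub_cancel _ _⟩)
    (image_subset_iff.2 hrefl)

end Symmetry

lemma exists_isBlaschkeSection_of_weakBlaschke {B : Set (EuclideanSpace ℝ (Fin 3))}
    (hB : WeakBlaschke B) {u : EuclideanSpace ℝ (Fin 3)} (hu : u ≠ 0) :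
    ∃ P : AffineSubspace ℝ (EuclideanSpace ℝ (Fin 3)),
      finrank ℝ P.direction = 2 ∧ IsBlaschkeSection B u P := by
  obtain ⟨H, hH, x, hint, hsupp⟩ := hB u hu
  have hcoe : (AffineSubspace.mk' x H : Set (EuclideanSpace ℝ (Fin 3))) =
      (fun h => h + x) '' (H : Set (EuclideanSpace ℝ (Fin 3))) := by
    ext y
    simp [AffineSubspace.mem_mk', sub_eq_add_neg]
  refine ⟨AffineSubspace.mk' x H, by rwa [AffineSubspace.direction_mk'], ?_, ?_⟩
  · rwa [hcoe]
  · rwa [hcoe]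

end Blaschke

theorem stmt_19_general {E : Type*} [NormedAddCommGroup E] [NormedSpace ℝ E] {B : Set E}
    (hE : Module.finrank ℝ E = 3) (hBcomp : IsCompact B) (hBconv : Convex ℝ B)
    (hBint : (interior B).Nonempty) (hsec : ∀ u : E, u ≠ 0 → ∃ P : AffineSubspace ℝ E,
      Module.finrank ℝ P.direction = 2 ∧ Blaschke.IsBlaschkeSection B u P) :
    ∃ p : E, B = (fun x => (2 : ℝ) • p - x) '' B := by
  have : FiniteDimensional ℝ E := .of_finrank_pos (by lia)
  obtain ⟨a, b, hab, hcop⟩ := Blaschke.exists_isAffineDiameter_pairwise_coplanar hE hBcomp hBconv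
    (hBint.mono interior_subset) hsec
  obtain ⟨q, hq⟩ := hBint
  obtain ⟨r, hr, hrB⟩ :=
    Metric.nhds_basis_closedBall.mem_iff.1 (mem_interior_iff_mem_nhds.1 hq)
  have hwidth : ∀ g : StrongDual ℝ E, g ≠ 0 → g (a g - b g) ≠ 0 := fun g hg =>
    ((mul_pos hr (norm_pos_iff.2 hg)).trans_le ((hab g).mul_norm_le_apply_sub hr hrB)).ne'
  have hspan := Blaschke.exists_linearIndependent_comp_of_apply_ne_zero
    (d := fun g => a g - b g) fun g hg => ⟨LinearMap.toContinuousLinearMap g,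
      hwidth _ ((map_ne_zero_iff _ LinearMap.toContinuousLinearMap.injective).2 hg)⟩
  rw [hE] at hspan
  obtain ⟨i, hi⟩ := hspan
  obtain ⟨p, hp⟩ := Blaschke.exists_forall_eq_add_smul_of_pairwise_coplanar hcop hi
  choose! s hs using hp
  obtain ⟨R, hRB⟩ := hBcomp.isBounded.subset_closedBall p
  refine ⟨p, Blaschke.eq_image_two_smul_sub hBcomp.isClosed hBconv fun g hg =>
    ⟨a g, (hab g).left_mem.1, b g, (hab g).right_mem, ?_⟩⟩
  exact Blaschke.add_eq_two_smul_of_concurrent (by lia) hab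
    (fun g hg => hs g fun h0 => hwidth g hg (by rw [h0, map_zero])) hr hrB hRB hg

/-- A convex body in ℝ³ with the weak Blaschke property has a center of
symmetry. -/
theorem stmt_19 (B : Set (EuclideanSpace ℝ (Fin 3)))
    (hBcomp : IsCompact B) (hBconv : Convex ℝ B)
    (hBint : (interior B).Nonempty) (hB0 : (0 : EuclideanSpace ℝ (Fin 3)) ∈ B)
    (hbla : WeakBlaschke B) :
    ∃ p : EuclideanSpace ℝ (Fin 3), B = (fun x => (2 : ℝ) • p - x) '' B := by
  exact stmt_19_general (by simp) hBcomp hBconv hBint fun _ hu =>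
    Blaschke.exists_isBlaschkeSection_of_weakBlaschke hbla hu
end
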